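/- arXiv:1907.06122 — 2 statements merged into one kernel-verified Lean document; each statement's English description precedes it below -/
import Mathlib

section
/- Let n be even, let Ω ⊂ ℝⁿ be a bounded open convex set with nonempty interior, and let f be a continuous function on the closure of Ω that is positive and subharmonic on Ω (Δf ≥ 0). Then (1/|Ω|) ∫_Ω f dx ≤ ((n²+n)/√(n+2)) · (1/|∂Ω|) ∫_{∂Ω} f dσ. -/
open MeasureTheory

/-- The Laplacian of `f : ℝⁿ → ℝ`, as the sum of the second partial derivatives. -/
noncomputable def laplacian {n : ℕ} (f : EuclideanSpace ℝ (Fin n) → ℝ)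
    (x : EuclideanSpace ℝ (Fin n)) : ℝ :=
  ∑ i : Fin n,
    fderiv ℝ (fun y => fderiv ℝ f y (EuclideanSpace.single i (1 : ℝ))) x
      (EuclideanSpace.single i (1 : ℝ))

/-!
Let `r` be the inradius of `Ω`. On a convex polytope `P ⊆ Ω` the distance to the boundary is the
minimum of the affine slacks of the facets, hence concave. Testing the weak inequality
`0 ≤ ∫ f Δφ` against smooth approximations `φ` of `ψ ∘ slack`, where `ψ'' ≈ r / ε` on `(0, ε)` and
`ψ'' = -1` beyond, gives `∫_P f ≤ (1 + r / ε) ∫_{slack < ε} f`, and `ε → 0` gives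
`∫_P f ≤ r ∫_{∂P} f`. The nearest-point projection onto a convex set is `1`-Lipschitz, so boundary
integrals of nested convex bodies can be compared: exhausting `Ω` by polytopes yields
`∫_Ω f ≤ r ∫_{∂Ω} f`. If a polytope `P` contains a ball of radius `r`, disjoint prisms of height
`δ r` erected on its facets fit into a copy of `P` dilated by `1 + δ`, so `r |∂P| ≤ n |P|`, and
polytopes shrinking to `Ω` from outside yield `r |∂Ω| ≤ n |Ω|`. Together these bound the mean of `f`
over `Ω` by `n` times its mean over `∂Ω`, and `n ≤ (n² + n) / √(n + 2)`.
-/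

open Filter Topology Metric Module
open scoped ENNReal RealInnerProductSpace

section Hyperplane

variable {E : Type*} [NormedAddCommGroup E] [InnerProductSpace ℝ E]

/-- The translation of `x` along `ν` which lands on the hyperplane `⟪ν, ·⟫ = s`, for a unit vector
`ν`; this is the orthogonal projection onto that hyperplane. -/
def hyperplaneProj (ν : E) (s : ℝ) (x : E) : E := x + (s - ⟪ν, x⟫) • ν

lemma continuous_hyperplaneProj (ν : E) (s : ℝ) : Continuous (hyperplaneProj ν s) := by
  unfold hyperplaneProj
  fun_prop

lemma inner_hyperplaneProj (μ ν : E) (s : ℝ) (x : E) :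
    ⟪μ, hyperplaneProj ν s x⟫ = ⟪μ, x⟫ + (s - ⟪ν, x⟫) * ⟪μ, ν⟫ := by
  rw [hyperplaneProj, inner_add_right, inner_smul_right]

lemma inner_self_hyperplaneProj {ν : E} (hν : ‖ν‖ = 1) (s : ℝ) (x : E) :
    ⟪ν, hyperplaneProj ν s x⟫ = s := by
  rw [inner_hyperplaneProj, real_inner_self_eq_norm_sq, hν]
  ring

lemma dist_hyperplaneProj {ν : E} (hν : ‖ν‖ = 1) (s : ℝ) (x : E) :
    dist x (hyperplaneProj ν s x) = |s - ⟪ν, x⟫| := by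
  simp [hyperplaneProj, norm_smul, hν]

lemma slab_inter_preimage_hyperplaneProj_inter {ν : E} (hν : ‖ν‖ = 1) {a b s t : ℝ}
    (ht : t ∈ Set.Ioc a b) {F : Set E} (hF : F ⊆ {x | ⟪ν, x⟫ = s}) :
    {x | ⟪ν, x⟫ ∈ Set.Ioc a b} ∩ hyperplaneProj ν s ⁻¹' F ∩ {x | ⟪ν, x⟫ = t} =
      (· + (s - t) • ν) ⁻¹' F := by
  ext x
  constructor
  · rintro ⟨⟨-, hxF⟩, rfl⟩
    exact hxF
  · intro hxF
    have hxt : ⟪ν, x⟫ = t := by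
      have hxs : ⟪ν, x + (s - t) • ν⟫ = s := hF hxF
      rw [inner_add_right, inner_smul_right, real_inner_self_eq_norm_sq, hν] at hxs
      linarith
    subst hxt
    exact ⟨⟨ht, hxF⟩, rfl⟩

variable [MeasurableSpace E] [BorelSpace E]

/-- The surface measure on hypersurfaces of `E`: the Hausdorff measure of codimension one,
normalized so that it agrees with Lebesgue measure on hyperplanes. -/
noncomputable abbrev surfaceMeasure (E : Type*) [NormedAddCommGroup E] [InnerProductSpace ℝ E]
    [MeasurableSpace E] [BorelSpace E] : Measure E := μHE[finrank ℝ E - 1]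

lemma measurableSet_hyperplane (ν : E) (s : ℝ) : MeasurableSet {x : E | ⟪ν, x⟫ = s} :=
  (isClosed_eq (by fun_prop) continuous_const).measurableSet

lemma measurableSet_slab (ν : E) (a b : ℝ) : MeasurableSet {x : E | ⟪ν, x⟫ ∈ Set.Ioc a b} :=
  (by fun_prop : Continuous fun x : E => ⟪ν, x⟫).measurable measurableSet_Ioc

variable [FiniteDimensional ℝ E]

lemma volume_eq_lintegral_surfaceMeasure {ν : E} (hν : ‖ν‖ = 1) {t : Set E}
    (ht : MeasurableSet t) :
    volume t = ∫⁻ s : ℝ, surfaceMeasure E (t ∩ {x | ⟪ν, x⟫ = s}) := by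
  have hν0 : ν ≠ 0 := norm_ne_zero_iff.1 (hν ▸ one_ne_zero)
  have hslice := EuclideanGeometry.euclideanHausdorffMeasure_eq_lintegral (0 : E) hν0 ht
  rw [InnerProductSpace.euclideanHausdorffMeasure_eq_volume, ← ofReal_norm, hν,
    ENNReal.ofReal_one, one_mul] at hslice
  rw [hslice]
  congr! with s
  ext x
  simp [Submodule.mem_orthogonal_singleton_iff_inner_right, inner_sub_right,
    inner_smul_right, hν, sub_eq_zero]

lemma volume_hyperplane {a : E} (ha : a ≠ 0) (s : ℝ) : volume {x : E | ⟪a, x⟫ = s} = 0 := by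
  have hnorm : ‖a‖ ≠ 0 := norm_ne_zero_iff.2 ha
  have hunit : ‖‖a‖⁻¹ • a‖ = 1 := by rw [norm_smul, norm_inv, norm_norm, inv_mul_cancel₀ hnorm]
  rw [volume_eq_lintegral_surfaceMeasure hunit (measurableSet_hyperplane a s)]
  refine lintegral_eq_zero_of_ae_eq_zero ?_
  filter_upwards [compl_mem_ae_iff.2 (measure_singleton (‖a‖⁻¹ * s))] with t ht
  refine (congrArg _ (Set.eq_empty_of_forall_notMem fun x hx => ht ?_)).trans measure_empty
  rw [Set.mem_singleton_iff, ← hx.2, ← (show ⟪a, x⟫ = s from hx.1), real_inner_smul_left]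

lemma volume_slab_inter_preimage_hyperplaneProj {ν : E} (hν : ‖ν‖ = 1) (s a b : ℝ) {F : Set E}
    (hFm : MeasurableSet F) (hF : F ⊆ {x | ⟪ν, x⟫ = s}) :
    volume ({x : E | ⟪ν, x⟫ ∈ Set.Ioc a b} ∩ hyperplaneProj ν s ⁻¹' F) =
      ENNReal.ofReal (b - a) * surfaceMeasure E F := by
  have hslice : ∀ t : ℝ, surfaceMeasure E
      ({x : E | ⟪ν, x⟫ ∈ Set.Ioc a b} ∩ hyperplaneProj ν s ⁻¹' F ∩ {x | ⟪ν, x⟫ = t}) =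
      (Set.Ioc a b).indicator (fun _ => surfaceMeasure E F) t := by
    intro t
    by_cases ht : t ∈ Set.Ioc a b
    · rw [Set.indicator_of_mem ht, slab_inter_preimage_hyperplaneProj_inter hν ht hF,
        measure_preimage_add_right]
    · rw [Set.indicator_of_notMem ht]
      convert measure_empty (μ := surfaceMeasure E)
      exact Set.eq_empty_of_forall_notMem fun x hx => ht (hx.2 ▸ hx.1.1)
  rw [volume_eq_lintegral_surfaceMeasure hν ((measurableSet_slab ν a b).inter
    ((continuous_hyperplaneProj ν s).measurable hFm)), lintegral_congr hslice,
    lintegral_indicator_const measurableSet_Ioc, Real.volume_Ioc, mul_comm]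

lemma map_hyperplaneProj_restrict_slab {ν : E} (hν : ‖ν‖ = 1) (s a b : ℝ) :
    (volume.restrict {x : E | ⟪ν, x⟫ ∈ Set.Ioc a b}).map (hyperplaneProj ν s) =
      ENNReal.ofReal (b - a) • (surfaceMeasure E).restrict {x : E | ⟪ν, x⟫ = s} := by
  have hproj : Measurable (hyperplaneProj ν s) := (continuous_hyperplaneProj ν s).measurable
  ext F hF
  rw [Measure.map_apply hproj hF, Measure.restrict_apply (hproj hF), Measure.smul_apply,
    Measure.restrict_apply hF, smul_eq_mul, ← volume_slab_inter_preimage_hyperplaneProj hν s a b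
      (hF.inter (measurableSet_hyperplane ν s)) Set.inter_subset_right, Set.inter_comm]
  congr 2
  ext x
  simp [inner_self_hyperplaneProj hν]

end Hyperplane

/-- A polyhedron presented as the intersection of the half-spaces `⟪normal i, x⟫ ≤ height i`, with
pairwise distinct unit outer normals. -/
structure Polyhedron (ι E : Type*) [NormedAddCommGroup E] [InnerProductSpace ℝ E] where
  normal : ι → E
  height : ι → ℝ
  norm_normal : ∀ i, ‖normal i‖ = 1
  normal_injective : Function.Injective normal

namespace Polyhedron

variable {ι E : Type*} [NormedAddCommGroup E] [InnerProductSpace ℝ E] (P : Polyhedron ι E)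

/-- The set of points of the polyhedron. -/
def carrier : Set E := {x | ∀ i, ⟪P.normal i, x⟫ ≤ P.height i}

/-- The part of the polyhedron on its `i`-th bounding hyperplane; it may be empty or of low
dimension, as redundant half-spaces are allowed. -/
def facet (i : ι) : Set E := {x ∈ P.carrier | ⟪P.normal i, x⟫ = P.height i}

/-- The signed distance from `x` to the nearest bounding hyperplane, positive inside. For a point of
the polyhedron this is the distance to the boundary. -/
noncomputable def slack (x : E) : ℝ := ⨅ i, (P.height i - ⟪P.normal i, x⟫)

lemma isClosed_carrier : IsClosed P.carrier := by
  rw [carrier, Set.ofPred_forall]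
  exact isClosed_iInter fun i => isClosed_le (by fun_prop) continuous_const

lemma isClosed_facet (i : ι) : IsClosed (P.facet i) :=
  P.isClosed_carrier.inter
    (isClosed_eq (f := fun x => ⟪P.normal i, x⟫) (by fun_prop) continuous_const)

lemma convex_carrier : Convex ℝ P.carrier := by
  rw [carrier, Set.ofPred_forall]
  exact convex_iInter fun i =>
    convex_halfSpace_le (innerₛₗ ℝ (P.normal i)).isLinear (P.height i)

lemma inner_normal_le_one (i j : ι) : ⟪P.normal i, P.normal j⟫ ≤ 1 := by
  simpa [P.norm_normal] using real_inner_le_norm (P.normal i) (P.normal j)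

section Slack

variable [Finite ι]

lemma slack_le (i : ι) (x : E) : P.slack x ≤ P.height i - ⟪P.normal i, x⟫ :=
  ciInf_le (Set.finite_range _).bddBelow i

variable [Nonempty ι]

lemma exists_slack_eq (x : E) : ∃ i, P.slack x = P.height i - ⟪P.normal i, x⟫ :=
  (exists_eq_ciInf_of_finite (f := fun i => P.height i - ⟪P.normal i, x⟫)).imp fun _ h => h.symm

lemma mem_carrier_iff {x : E} : x ∈ P.carrier ↔ 0 ≤ P.slack x := by
  refine ⟨fun hx => le_ciInf fun i => sub_nonneg.2 (hx i), fun hx i => ?_⟩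
  linarith [P.slack_le i x]

lemma hyperplaneProj_mem_facet {x : E} (hx : x ∈ P.carrier) {i : ι}
    (hi : P.slack x = P.height i - ⟪P.normal i, x⟫) :
    hyperplaneProj (P.normal i) (P.height i) x ∈ P.facet i := by
  refine ⟨fun j => ?_, inner_self_hyperplaneProj (P.norm_normal i) _ _⟩
  rw [inner_hyperplaneProj]
  have hslack := P.mem_carrier_iff.1 hx
  calc ⟪P.normal j, x⟫ + (P.height i - ⟪P.normal i, x⟫) * ⟪P.normal j, P.normal i⟫
      ≤ ⟪P.normal j, x⟫ + P.slack x := by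
        rw [← hi]
        gcongr
        exact mul_le_of_le_one_right hslack (P.inner_normal_le_one j i)
    _ ≤ P.height j := by linarith [P.slack_le j x]

lemma setOf_slack_lt_subset (ε : ℝ) :
    {x ∈ P.carrier | P.slack x < ε} ⊆ ⋃ i, P.carrier ∩
      ({x | ⟪P.normal i, x⟫ ∈ Set.Ioc (P.height i - ε) (P.height i)} ∩
        hyperplaneProj (P.normal i) (P.height i) ⁻¹' P.facet i) := by
  rintro x ⟨hx, hxε⟩
  obtain ⟨i, hi⟩ := P.exists_slack_eq x
  exact Set.mem_iUnion.2
    ⟨i, hx, ⟨by linarith, hx i⟩, P.hyperplaneProj_mem_facet hx hi⟩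

end Slack

/-- The prism of height `t` erected on the `i`-th facet, outside the polyhedron. -/
def outerPrism (t : ℝ) (i : ι) : Set E :=
  {x | ⟪P.normal i, x⟫ ∈ Set.Ioc (P.height i) (P.height i + t)} ∩
    hyperplaneProj (P.normal i) (P.height i) ⁻¹' P.facet i

lemma disjoint_outerPrism_carrier (t : ℝ) (i : ι) : Disjoint (P.outerPrism t i) P.carrier :=
  Set.disjoint_left.2 fun _ hx hxP => (hxP i).not_gt hx.1.1

/-- A point of two prisms would have two nearest points in the polyhedron, one on each facet. -/
lemma pairwise_disjoint_outerPrism (t : ℝ) :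
    Pairwise (Function.onFun Disjoint (P.outerPrism t)) := by
  intro i j hij
  refine Set.disjoint_left.2 fun x ⟨⟨hi, _⟩, hp⟩ ⟨⟨hj, _⟩, hq⟩ => hij ?_
  set p := hyperplaneProj (P.normal i) (P.height i) x with hp_def
  set q := hyperplaneProj (P.normal j) (P.height j) x with hq_def
  set s := ⟪P.normal i, x⟫ - P.height i with hs
  set t := ⟪P.normal j, x⟫ - P.height j with ht
  have hs0 : 0 < s := sub_pos.2 hi
  have ht0 : 0 < t := sub_pos.2 hj
  have hqp : q - p = s • P.normal i - t • P.normal j := by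
    simp only [hp_def, hq_def, hyperplaneProj, hs, ht]
    module
  have hinner : ⟪q - p, q - p⟫ ≤ 0 := calc
    ⟪q - p, q - p⟫ = s * (⟪P.normal i, q⟫ - ⟪P.normal i, p⟫) -
        t * (⟪P.normal j, q⟫ - ⟪P.normal j, p⟫) := by
      nth_rewrite 1 [hqp]
      simp only [inner_sub_left, inner_sub_right, real_inner_smul_left]
      ring
    _ ≤ 0 := by
      rw [hp.2, hq.2]
      have hqi := hq.1 i
      have hpj := hp.1 j
      nlinarith
  have hsmul : s • P.normal i = t • P.normal j := by
    rw [← sub_eq_zero, ← hqp]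
    exact inner_self_eq_zero.1 (hinner.antisymm real_inner_self_nonneg)
  have hst : s = t := by
    simpa [norm_smul, P.norm_normal, abs_of_pos hs0, abs_of_pos ht0] using congrArg norm hsmul
  exact P.normal_injective (smul_right_injective _ ht0.ne' (hst ▸ hsmul))

lemma subset_image_homothety [Finite ι] {c : E} {r δ : ℝ} (hc : r ≤ P.slack c) (hδ : 0 ≤ δ) :
    {x | ∀ j, ⟪P.normal j, x⟫ ≤ P.height j + δ * r} ⊆
      AffineMap.homothety c (1 + δ) '' P.carrier := by
  intro x hx
  have hδ' : 0 < 1 + δ := by linarith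
  refine ⟨c + (1 + δ)⁻¹ • (x - c), fun j => ?_, ?_⟩
  · have hj : ⟪P.normal j, x⟫ - ⟪P.normal j, c⟫ ≤
        (1 + δ) * (P.height j - ⟪P.normal j, c⟫) := by
      nlinarith [hx j, P.slack_le j c]
    rw [inner_add_right, inner_smul_right, inner_sub_right]
    linarith [(inv_mul_le_iff₀ hδ').2 hj]
  · rw [AffineMap.homothety_apply, vsub_eq_sub, vadd_eq_add, add_sub_cancel_left,
      smul_inv_smul₀ hδ'.ne', sub_add_cancel]

lemma iUnion_outerPrism_union_carrier_subset [Finite ι] {c : E} {r δ : ℝ} (hr : 0 ≤ r)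
    (hc : r ≤ P.slack c) (hδ : 0 ≤ δ) :
    (⋃ i, P.outerPrism (δ * r) i) ∪ P.carrier ⊆
      AffineMap.homothety c (1 + δ) '' P.carrier := by
  refine subset_trans ?_ (P.subset_image_homothety hc hδ)
  rintro x (hx | hx) j
  · obtain ⟨i, ⟨hlow, hupp⟩, hxF⟩ := Set.mem_iUnion.1 hx
    have hj : ⟪P.normal j, hyperplaneProj (P.normal i) (P.height i) x⟫ ≤ P.height j := hxF.1 j
    rw [inner_hyperplaneProj] at hj
    nlinarith [P.inner_normal_le_one j i]
  · linarith [hx j, mul_nonneg hδ hr]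

lemma facet_inter_facet_eq_empty [Finite ι] {c : E} (hc : 0 < P.slack c) {i j : ι}
    (hij : P.normal j = -P.normal i) : P.facet i ∩ P.facet j = ∅ := by
  refine Set.eq_empty_of_forall_notMem fun x ⟨hxi, hxj⟩ => ?_
  have hsum : P.height i + P.height j = 0 := by
    rw [← hxi.2, ← hxj.2, hij, inner_neg_left, add_neg_cancel]
  have hi := P.slack_le i c
  have hj := P.slack_le j c
  rw [hij, inner_neg_left] at hj
  linarith

variable [MeasurableSpace E] [BorelSpace E]

lemma measurableSet_outerPrism (t : ℝ) (i : ι) : MeasurableSet (P.outerPrism t i) :=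
  (measurableSet_slab _ _ _).inter
    ((continuous_hyperplaneProj _ _).measurable (P.isClosed_facet i).measurableSet)

variable [FiniteDimensional ℝ E]

lemma setLIntegral_slab_comp_hyperplaneProj (i : ι) (a b : ℝ) {G : E → ℝ≥0∞}
    (hG : Measurable G) :
    ∫⁻ x in {x | ⟪P.normal i, x⟫ ∈ Set.Ioc a b} ∩
        hyperplaneProj (P.normal i) (P.height i) ⁻¹' P.facet i,
          G (hyperplaneProj (P.normal i) (P.height i) x) =
      ENNReal.ofReal (b - a) * ∫⁻ y in P.facet i, G y ∂surfaceMeasure E := by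
  have hfacet : MeasurableSet (P.facet i) := (P.isClosed_facet i).measurableSet
  have hproj : Measurable (hyperplaneProj (P.normal i) (P.height i)) :=
    (continuous_hyperplaneProj _ _).measurable
  have hinter : P.facet i ∩ {x | ⟪P.normal i, x⟫ = P.height i} = P.facet i :=
    Set.inter_eq_left.2 fun x hx => hx.2
  calc _ = ∫⁻ x in {x | ⟪P.normal i, x⟫ ∈ Set.Ioc a b},
        (P.facet i).indicator G (hyperplaneProj (P.normal i) (P.height i) x) := by
        rw [Set.inter_comm, ← setLIntegral_indicator (hproj hfacet)]
        rfl
    _ = ENNReal.ofReal (b - a) * ∫⁻ y in P.facet i, G y ∂surfaceMeasure E := by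
        rw [← lintegral_map (hG.indicator hfacet) hproj,
          map_hyperplaneProj_restrict_slab (P.norm_normal i), lintegral_smul_measure,
          setLIntegral_indicator hfacet, hinter, smul_eq_mul]

lemma setLIntegral_setOf_slack_lt_le [Fintype ι] [Nonempty ι] {ε : ℝ} {ω : ℝ≥0∞} {G : E → ℝ≥0∞}
    (hG : Measurable G)
    (hω : ∀ x ∈ P.carrier, ∀ y ∈ P.carrier, dist x y < ε → G x ≤ G y + ω) :
    ∫⁻ x in {x ∈ P.carrier | P.slack x < ε}, G x ≤ ENNReal.ofReal ε *
      ∑ i, (∫⁻ x in P.facet i, G x ∂surfaceMeasure E + ω * surfaceMeasure E (P.facet i)) := by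
  set π := fun i => hyperplaneProj (P.normal i) (P.height i)
  set S := fun i => {x | ⟪P.normal i, x⟫ ∈ Set.Ioc (P.height i - ε) (P.height i)} ∩
    π i ⁻¹' P.facet i
  have hS : ∀ i, MeasurableSet (S i) := fun i => (measurableSet_slab _ _ _).inter
    ((continuous_hyperplaneProj _ _).measurable (P.isClosed_facet i).measurableSet)
  have hmove : ∀ i, ∀ x ∈ P.carrier ∩ S i, G x ≤ G (π i x) + ω := by
    rintro i x ⟨hx, ⟨hlow, hupp⟩, hxF⟩
    refine hω x hx _ hxF.1 ?_
    rw [dist_hyperplaneProj (P.norm_normal i), abs_of_nonneg (by linarith)]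
    linarith
  calc ∫⁻ x in {x ∈ P.carrier | P.slack x < ε}, G x
      ≤ ∫⁻ x in ⋃ i, P.carrier ∩ S i, G x := lintegral_mono_set (P.setOf_slack_lt_subset ε)
    _ ≤ ∑ i, ∫⁻ x in P.carrier ∩ S i, G x := by
        rw [← tsum_fintype (L := .unconditional _)]
        exact lintegral_iUnion_le _ _
    _ ≤ ∑ i, ∫⁻ x in S i, (G (π i x) + ω) := Finset.sum_le_sum fun i _ =>
        (setLIntegral_mono' (P.isClosed_carrier.measurableSet.inter (hS i)) (hmove i)).trans
          (lintegral_mono_set Set.inter_subset_right)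
    _ = ∑ i, ENNReal.ofReal ε * (∫⁻ x in P.facet i, G x ∂surfaceMeasure E +
          ω * surfaceMeasure E (P.facet i)) := Finset.sum_congr rfl fun i _ => by
        rw [P.setLIntegral_slab_comp_hyperplaneProj i _ _ (hG.add_const ω), sub_sub_cancel,
          lintegral_add_right _ measurable_const, setLIntegral_const]
    _ = _ := by rw [Finset.mul_sum]

lemma volume_outerPrism (t : ℝ) (i : ι) :
    volume (P.outerPrism t i) = ENNReal.ofReal t * surfaceMeasure E (P.facet i) := by
  rw [outerPrism, volume_slab_inter_preimage_hyperplaneProj (P.norm_normal i) _ _ _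
    (P.isClosed_facet i).measurableSet fun x hx => hx.2, add_sub_cancel_left]

lemma ofReal_mul_sum_surfaceMeasure_facet_add_volume_le [Fintype ι] {c : E} {r δ : ℝ}
    (hr : 0 ≤ r) (hc : r ≤ P.slack c) (hδ : 0 ≤ δ) :
    ENNReal.ofReal (δ * r) * ∑ i, surfaceMeasure E (P.facet i) + volume P.carrier ≤
      ENNReal.ofReal ((1 + δ) ^ finrank ℝ E) * volume P.carrier := by
  have hprisms : volume (⋃ i, P.outerPrism (δ * r) i) =
      ENNReal.ofReal (δ * r) * ∑ i, surfaceMeasure E (P.facet i) := by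
    rw [measure_iUnion (P.pairwise_disjoint_outerPrism _) (P.measurableSet_outerPrism _),
      tsum_fintype, Finset.mul_sum]
    simp only [P.volume_outerPrism]
  rw [← hprisms, ← measure_union
    (Set.disjoint_iUnion_left.2 (P.disjoint_outerPrism_carrier _))
    P.isClosed_carrier.measurableSet]
  refine (measure_mono (P.iUnion_outerPrism_union_carrier_subset hr hc hδ)).trans_eq ?_
  rw [Measure.addHaar_image_homothety, abs_of_nonneg (by positivity)]

theorem ofReal_mul_sum_surfaceMeasure_facet_le [Fintype ι] {c : E} {r : ℝ}
    (hr : 0 ≤ r) (hc : r ≤ P.slack c) (hvol : volume P.carrier ≠ ∞) :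
    ENNReal.ofReal r * ∑ i, surfaceMeasure E (P.facet i) ≤ finrank ℝ E * volume P.carrier := by
  have hslope : Tendsto (fun δ : ℝ => ENNReal.ofReal (δ⁻¹ * ((1 + δ) ^ finrank ℝ E - 1)))
      (𝓝[>] 0) (𝓝 (finrank ℝ E)) := by
    simpa using ENNReal.tendsto_ofReal
      (hasDerivAt_pow (finrank ℝ E) (1 : ℝ)).tendsto_slope_zero_right
  refine ge_of_tendsto (ENNReal.Tendsto.mul_const hslope (Or.inr hvol)) ?_
  filter_upwards [self_mem_nhdsWithin] with δ (hδ : 0 < δ)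
  have hadd := ENNReal.le_sub_of_add_le_right hvol
    (P.ofReal_mul_sum_surfaceMeasure_facet_add_volume_le hr hc hδ.le)
  calc ENNReal.ofReal r * ∑ i, surfaceMeasure E (P.facet i)
      = ENNReal.ofReal δ⁻¹ *
          (ENNReal.ofReal (δ * r) * ∑ i, surfaceMeasure E (P.facet i)) := by
        rw [← mul_assoc, ← ENNReal.ofReal_mul (by positivity), inv_mul_cancel_left₀ hδ.ne']
    _ ≤ ENNReal.ofReal δ⁻¹ * (ENNReal.ofReal ((1 + δ) ^ finrank ℝ E - 1) * volume P.carrier) := by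
        refine mul_le_mul_right ?_ _
        rwa [ENNReal.ofReal_sub _ zero_le_one, ENNReal.ofReal_one,
          ENNReal.sub_mul fun _ _ => hvol, one_mul]
    _ = _ := by rw [← mul_assoc, ← ENNReal.ofReal_mul (by positivity)]

lemma surfaceMeasure_facet_inter_facet [Finite ι] {c : E} (hc : 0 < P.slack c) {i j : ι}
    (hij : i ≠ j) : surfaceMeasure E (P.facet i ∩ P.facet j) = 0 := by
  set k := ⟪P.normal i, P.normal j⟫ with hk
  by_cases hparallel : P.normal j - k • P.normal i = 0
  · rw [sub_eq_zero] at hparallel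
    have habs : |k| = 1 := by
      simpa [norm_smul, P.norm_normal] using (congrArg norm hparallel).symm
    rcases eq_or_eq_neg_of_abs_eq habs with hone | hneg
    · rw [hone, one_smul] at hparallel
      exact absurd (P.normal_injective hparallel).symm hij
    · rw [hneg, neg_one_smul] at hparallel
      rw [P.facet_inter_facet_eq_empty hc hparallel, measure_empty]
  · have hprism := volume_slab_inter_preimage_hyperplaneProj (P.norm_normal i) (P.height i) 0 1
      ((P.isClosed_facet i).inter (P.isClosed_facet j)).measurableSet (fun x hx => hx.1.2)
    rw [sub_zero, ENNReal.ofReal_one, one_mul] at hprism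
    rw [← hprism]
    refine measure_mono_null ?_ (volume_hyperplane hparallel (P.height j - P.height i * k))
    rintro x ⟨-, -, hxj⟩
    have hxj' := hxj.2
    rw [inner_hyperplaneProj, real_inner_comm (P.normal i), ← hk] at hxj'
    rw [Set.mem_ofPred_eq, inner_sub_left, real_inner_smul_left]
    linarith

end Polyhedron

section TwiceDifferentiable

variable {E : Type*} [NormedAddCommGroup E] [NormedSpace ℝ E] {f g : E → ℝ} {x : E}

/-- Existence of the second Fréchet derivative at a point, with no continuity assumption on it. -/
def TwiceDifferentiableAt (f : E → ℝ) (x : E) : Prop :=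
  (∀ᶠ y in 𝓝 x, DifferentiableAt ℝ f y) ∧ DifferentiableAt ℝ (fderiv ℝ f) x

namespace TwiceDifferentiableAt

lemma of_contDiff (hf : ContDiff ℝ 2 f) (x : E) : TwiceDifferentiableAt f x :=
  ⟨.of_forall (hf.differentiable two_ne_zero),
    (hf.fderiv_right (m := 1) (by norm_num)).differentiable one_ne_zero x⟩

lemma congr (hf : TwiceDifferentiableAt f x) (h : g =ᶠ[𝓝 x] f) : TwiceDifferentiableAt g x :=
  ⟨(hf.1.and h.eventually_nhds).mono fun _ hy => hy.1.congr_of_eventuallyEq hy.2,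
    hf.2.congr_of_eventuallyEq h.fderiv⟩

lemma fderiv_apply (hf : TwiceDifferentiableAt f x) (v : E) :
    DifferentiableAt ℝ (fun y => fderiv ℝ f y v) x :=
  hf.2.clm_apply (differentiableAt_const v)

lemma fderiv_add_eventuallyEq (hf : TwiceDifferentiableAt f x) (hg : TwiceDifferentiableAt g x) :
    fderiv ℝ (f + g) =ᶠ[𝓝 x] fderiv ℝ f + fderiv ℝ g :=
  (hf.1.and hg.1).mono fun _ hy => fderiv_add hy.1 hy.2

lemma add (hf : TwiceDifferentiableAt f x) (hg : TwiceDifferentiableAt g x) :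
    TwiceDifferentiableAt (f + g) x :=
  ⟨(hf.1.and hg.1).mono fun _ hy => hy.1.add hy.2,
    (hf.2.add hg.2).congr_of_eventuallyEq (hf.fderiv_add_eventuallyEq hg)⟩

lemma const_smul (hf : TwiceDifferentiableAt f x) (c : ℝ) : TwiceDifferentiableAt (c • f) x := by
  refine ⟨hf.1.mono fun _ hy => hy.const_smul c, ?_⟩
  rw [fderiv_const_smul_field]
  exact hf.2.const_smul c

lemma comp_add_right {a : E} (hf : TwiceDifferentiableAt f (x + a)) :
    TwiceDifferentiableAt (fun y => f (y + a)) x := by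
  have htendsto : Tendsto (· + a) (𝓝 x) (𝓝 (x + a)) :=
    (continuous_add_const a).tendsto x
  refine ⟨(htendsto.eventually hf.1).mono fun _ hy => (differentiableAt_comp_add_right a).2 hy, ?_⟩
  simpa only [funext fun y => fderiv_comp_add_right (𝕜 := ℝ) (f := f) (x := y) a] using
    (differentiableAt_comp_add_right a).2 hf.2

end TwiceDifferentiableAt

end TwiceDifferentiable

section Laplacian

variable {n : ℕ} {f g : EuclideanSpace ℝ (Fin n) → ℝ} {x : EuclideanSpace ℝ (Fin n)}

lemma laplacian_eq_of_fderiv_eventuallyEq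
    {L : EuclideanSpace ℝ (Fin n) → EuclideanSpace ℝ (Fin n) →L[ℝ] ℝ}
    (h : fderiv ℝ f =ᶠ[𝓝 x] L) :
    laplacian f x = ∑ i : Fin n, fderiv ℝ (fun y => L y (EuclideanSpace.single i 1)) x
      (EuclideanSpace.single i 1) :=
  Finset.sum_congr rfl fun i _ => DFunLike.congr_fun
    (h.fun_comp fun A => A (EuclideanSpace.single i 1)).fderiv_eq _

lemma laplacian_congr (h : f =ᶠ[𝓝 x] g) : laplacian f x = laplacian g x :=
  laplacian_eq_of_fderiv_eventuallyEq h.fderiv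

lemma laplacian_add (hf : TwiceDifferentiableAt f x) (hg : TwiceDifferentiableAt g x) :
    laplacian (f + g) x = laplacian f x + laplacian g x := by
  rw [laplacian_eq_of_fderiv_eventuallyEq (hf.fderiv_add_eventuallyEq hg), laplacian, laplacian,
    ← Finset.sum_add_distrib]
  refine Finset.sum_congr rfl fun i _ => ?_
  simp [fderiv_fun_add (hf.fderiv_apply _) (hg.fderiv_apply _)]

lemma laplacian_const_smul (c : ℝ) (f : EuclideanSpace ℝ (Fin n) → ℝ)
    (x : EuclideanSpace ℝ (Fin n)) : laplacian (c • f) x = c * laplacian f x := by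
  rw [laplacian_eq_of_fderiv_eventuallyEq (.of_eq (fderiv_const_smul_field c)),
    laplacian, Finset.mul_sum]
  refine Finset.sum_congr rfl fun i _ => ?_
  exact DFunLike.congr_fun (congrFun (fderiv_const_smul_field
    (f := fun y => fderiv ℝ f y (EuclideanSpace.single i 1)) c) x) _

lemma laplacian_comp_add_right (f : EuclideanSpace ℝ (Fin n) → ℝ)
    (a x : EuclideanSpace ℝ (Fin n)) :
    laplacian (fun y => f (y + a)) x = laplacian f (x + a) := by
  refine Finset.sum_congr rfl fun i _ => ?_
  simp only [fderiv_comp_add_right]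
  rw [fderiv_comp_add_right (f := fun y => fderiv ℝ f y (EuclideanSpace.single i 1))]

lemma laplacian_comp_neg (f : EuclideanSpace ℝ (Fin n) → ℝ) (x : EuclideanSpace ℝ (Fin n)) :
    laplacian (fun y => f (-y)) x = laplacian f (-x) := by
  have hfderiv : ∀ (g : EuclideanSpace ℝ (Fin n) → ℝ) (y v : EuclideanSpace ℝ (Fin n)),
      fderiv ℝ (fun z => g (-z)) y v = -fderiv ℝ g (-y) v := fun g y v => by
    simpa using DFunLike.congr_fun (fderiv_comp_smul (𝕜 := ℝ) (f := g) (x := y) (-1 : ℝ)) v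
  refine Finset.sum_congr rfl fun i _ => ?_
  simp only [hfderiv, fderiv_fun_neg, _root_.neg_apply]
  rw [hfderiv (fun y => fderiv ℝ f y (EuclideanSpace.single i 1)), neg_neg]

lemma laplacian_norm_sq (x : EuclideanSpace ℝ (Fin n)) :
    laplacian (fun y => ‖y‖ ^ 2) x = 2 * n := by
  have hfderiv : ∀ i : Fin n, (fun y => fderiv ℝ (fun y : EuclideanSpace ℝ (Fin n) => ‖y‖ ^ 2) y
      (EuclideanSpace.single i 1)) = (2 : ℝ) • innerSL ℝ (EuclideanSpace.single i 1) := by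
    intro i
    ext y
    simp [(hasStrictFDerivAt_norm_sq y).hasFDerivAt.fderiv, real_inner_comm]
  rw [laplacian, Finset.sum_congr rfl fun i _ => by rw [hfderiv i, ContinuousLinearMap.fderiv]]
  simp [mul_comm]

lemma contDiff_fderiv_apply (hf : ContDiff ℝ 2 f) (v : EuclideanSpace ℝ (Fin n)) :
    ContDiff ℝ 1 (fun y => fderiv ℝ f y v) :=
  (hf.fderiv_right (m := 1) (by norm_num)).clm_apply contDiff_const

lemma continuous_laplacian (hf : ContDiff ℝ 2 f) : Continuous (laplacian f) :=
  continuous_finsetSum _ fun _ _ =>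
    ((contDiff_fderiv_apply hf _).continuous_fderiv one_ne_zero).clm_apply continuous_const

lemma deriv_deriv_nonpos_of_isLocalMax {γ : ℝ → ℝ} {t : ℝ} (hmax : IsLocalMax γ t)
    (hcont : ContinuousAt γ t) : deriv (deriv γ) t ≤ 0 := by
  by_contra! hpos
  have hmin := isLocalMin_of_deriv_deriv_pos hpos hmax.deriv_eq_zero hcont
  have hconst : γ =ᶠ[𝓝 t] fun _ => γ t := by
    filter_upwards [hmax, hmin] with s hle hge using le_antisymm hle hge
  simp [hconst.deriv.deriv_eq] at hpos

lemma fderiv_fderiv_apply_nonpos_of_isLocalMax {E : Type*} [NormedAddCommGroup E] [NormedSpace ℝ E]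
    {f : E → ℝ} {x : E} (hmax : IsLocalMax f x) (hf : TwiceDifferentiableAt f x) (v : E) :
    fderiv ℝ (fun y => fderiv ℝ f y v) x v ≤ 0 := by
  have hline : ∀ t : ℝ, HasDerivAt (fun t : ℝ => x + t • v) v t := fun t => by
    simpa using ((hasDerivAt_id t).smul_const v).const_add x
  have hx : x = x + (0 : ℝ) • v := by simp
  have htendsto : Tendsto (fun t : ℝ => x + t • v) (𝓝 0) (𝓝 x) := by
    simpa using (hline 0).continuousAt.tendsto
  have hderiv : deriv (fun t : ℝ => f (x + t • v)) =ᶠ[𝓝 0] fun t => fderiv ℝ f (x + t • v) v := by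
    filter_upwards [htendsto.eventually hf.1] with t ht
    exact (ht.hasFDerivAt.comp_hasDerivAt t (hline t)).deriv
  have hnonpos := deriv_deriv_nonpos_of_isLocalMax (γ := fun t : ℝ => f (x + t • v)) (t := 0)
    (by filter_upwards [htendsto.eventually hmax] with t ht; simpa using ht)
    (hf.1.self_of_nhds.continuousAt.comp_of_eq (hline 0).continuousAt hx.symm)
  have hderiv₂ := (hf.fderiv_apply v).hasFDerivAt.comp_hasDerivAt_of_eq 0 (hline 0) hx
  exact (hderiv.deriv_eq.trans hderiv₂.deriv).symm.trans_le hnonpos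

lemma laplacian_le_of_isLocalMax_sub (hf : TwiceDifferentiableAt f x)
    (hg : TwiceDifferentiableAt g x) (hmax : IsLocalMax (f - g) x) :
    laplacian f x ≤ laplacian g x := by
  rw [show f - g = f + (-1 : ℝ) • g by rw [neg_one_smul, sub_eq_add_neg]] at hmax
  have hnonpos : laplacian (f + (-1 : ℝ) • g) x ≤ 0 := Finset.sum_nonpos fun i _ =>
    fderiv_fderiv_apply_nonpos_of_isLocalMax hmax (hf.add (hg.const_smul _)) _
  rw [laplacian_add hf (hg.const_smul _), laplacian_const_smul] at hnonpos
  linarith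

end Laplacian

section Subharmonic

variable {n : ℕ} {f g h : EuclideanSpace ℝ (Fin n) → ℝ} {U : Set (EuclideanSpace ℝ (Fin n))}
  {x : EuclideanSpace ℝ (Fin n)}

/-- Subharmonicity in the classical pointwise sense. The second derivative need not be continuous,
so neither Green's formula nor the mean value inequality is available directly. -/
def IsSubharmonicOn (f : EuclideanSpace ℝ (Fin n) → ℝ) (U : Set (EuclideanSpace ℝ (Fin n))) :
    Prop :=
  ∀ x ∈ U, TwiceDifferentiableAt f x ∧ 0 ≤ laplacian f x

namespace IsSubharmonicOn

lemma zero : IsSubharmonicOn 0 U :=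
  fun x _ => ⟨.of_contDiff contDiff_const x, by simp [laplacian]⟩

lemma add (hf : IsSubharmonicOn f U) (hg : IsSubharmonicOn g U) : IsSubharmonicOn (f + g) U :=
  fun x hx => ⟨(hf x hx).1.add (hg x hx).1, by
    rw [laplacian_add (hf x hx).1 (hg x hx).1]
    exact add_nonneg (hf x hx).2 (hg x hx).2⟩

lemma const_smul {c : ℝ} (hc : 0 ≤ c) (hf : IsSubharmonicOn f U) : IsSubharmonicOn (c • f) U :=
  fun x hx => ⟨(hf x hx).1.const_smul c, by
    rw [laplacian_const_smul]
    exact mul_nonneg hc (hf x hx).2⟩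

lemma comp_add_right (hf : IsSubharmonicOn f U) (a : EuclideanSpace ℝ (Fin n)) :
    IsSubharmonicOn (fun y => f (y + a)) ((· + a) ⁻¹' U) :=
  fun x hx => ⟨(hf _ hx).1.comp_add_right, by
    rw [laplacian_comp_add_right]
    exact (hf _ hx).2⟩

lemma congr_of_isOpen (hf : IsSubharmonicOn f U) (hU : IsOpen U) (hgf : Set.EqOn g f U) :
    IsSubharmonicOn g U := fun x hx => by
  have heq : g =ᶠ[𝓝 x] f := hgf.eventuallyEq_of_mem (hU.mem_nhds hx)
  exact ⟨(hf x hx).1.congr heq, (laplacian_congr heq).symm ▸ (hf x hx).2⟩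

end IsSubharmonicOn

lemma exists_ball_forall_laplacian_add_smul_norm_sub_sq_neg (hh : ContDiff ℝ 2 h)
    (hneg : laplacian h x < 0) : ∃ κ > (0 : ℝ), ∃ ρ > 0, ∀ y ∈ ball x ρ,
      laplacian (h + κ • fun z => ‖z + -x‖ ^ 2) y < 0 := by
  set κ : ℝ := -laplacian h x / (2 * n + 1)
  have hκ : 0 < κ := div_pos (neg_pos.2 hneg) (by positivity)
  have hκn : κ * (2 * n) < -laplacian h x := by
    have : κ * (2 * n + 1) = -laplacian h x := div_mul_cancel₀ _ (by positivity)
    linarith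
  have hq : ContDiff ℝ 2 fun z : EuclideanSpace ℝ (Fin n) => ‖z + -x‖ ^ 2 :=
    (contDiff_id.add contDiff_const).norm_sq ℝ
  have hlap : ∀ y, laplacian (h + κ • fun z => ‖z + -x‖ ^ 2) y = laplacian h y + κ * (2 * n) := by
    intro y
    rw [laplacian_add (.of_contDiff hh y) ((TwiceDifferentiableAt.of_contDiff hq y).const_smul κ),
      laplacian_const_smul, laplacian_comp_add_right (fun z => ‖z‖ ^ 2), laplacian_norm_sq]
  obtain ⟨ρ, hρ, hball⟩ := eventually_nhds_iff_ball.1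
    ((continuous_laplacian hh).continuousAt.eventually_lt continuousAt_const
      (show laplacian h x < -(κ * (2 * n)) by linarith))
  exact ⟨κ, hκ, ρ, hρ, fun y hy => by linarith [hlap y, hball y hy]⟩

-- If `Δh < 0` at `x`, then `φ = h + κ‖· - x‖²` still has `Δφ < 0` near `x`, and a subharmonic `F`
-- close to `h` makes `F - φ` attain its maximum over a small ball in the interior.
lemma laplacian_nonneg_of_forall_exists_isSubharmonicOn {ρ : ℝ} (hρ : 0 < ρ) (hh : ContDiff ℝ 2 h)
    (happrox : ∀ τ > 0, ∃ F, ContinuousOn F (closedBall x ρ) ∧ IsSubharmonicOn F (ball x ρ) ∧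
      ∀ y ∈ closedBall x ρ, |F y - h y| ≤ τ) : 0 ≤ laplacian h x := by
  by_contra! hneg
  obtain ⟨κ, hκ, ρ₁, hρ₁, hφ⟩ := exists_ball_forall_laplacian_add_smul_norm_sub_sq_neg hh hneg
  set φ := h + κ • fun z => ‖z + -x‖ ^ 2 with hφ_def
  have hφ₂ : ContDiff ℝ 2 φ :=
    hh.add (((contDiff_id.add contDiff_const).norm_sq ℝ).const_smul κ)
  set r := min ρ ρ₁ / 2
  have hr : 0 < r := by positivity
  have hrρ : r < ρ := (half_lt_self (lt_min hρ hρ₁)).trans_le (min_le_left _ _)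
  have hrρ₁ : r < ρ₁ := (half_lt_self (lt_min hρ hρ₁)).trans_le (min_le_right _ _)
  obtain ⟨F, hFc, hF, hFh⟩ := happrox (κ * r ^ 2 / 3) (by positivity)
  obtain ⟨p, hp, hmax⟩ := (isCompact_closedBall x r).exists_isMaxOn ⟨x, mem_closedBall_self hr.le⟩
    ((hFc.mono (closedBall_subset_closedBall hrρ.le)).sub hφ₂.continuous.continuousOn)
  have hvalue : ∀ y, (F - φ) y = F y - h y - κ * ‖y - x‖ ^ 2 := fun y => by
    simp only [hφ_def, Pi.sub_apply, Pi.add_apply, Pi.smul_apply, smul_eq_mul, sub_eq_add_neg]; ring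
  have hle : (F - φ) x ≤ (F - φ) p := hmax (mem_closedBall_self hr.le)
  have hpx : p ∈ ball x r := by
    by_contra! hp'
    rw [mem_ball, not_lt, dist_eq_norm] at hp'
    have hbdry : κ * r ^ 2 ≤ κ * ‖p - x‖ ^ 2 := by gcongr
    have hx := abs_le.1 (hFh x (mem_closedBall_self hρ.le))
    have hp := abs_le.1 (hFh p (closedBall_subset_closedBall hrρ.le hp))
    rw [hvalue, hvalue, sub_self, norm_zero] at hle
    nlinarith [hx.1, hp.2, pow_pos hr 2]
  have hFp := hF p (ball_subset_ball hrρ.le hpx)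
  have hloc : IsLocalMax (F - φ) p :=
    hmax.isLocalMax (mem_of_superset (isOpen_ball.mem_nhds hpx) ball_subset_closedBall)
  have := laplacian_le_of_isLocalMax_sub hFp.1 (.of_contDiff hφ₂ p) hloc
  linarith [hFp.2, hφ p (ball_subset_ball hrρ₁.le hpx)]

/-- The functions on a closed ball that are subharmonic in its interior. -/
def subharmonicCone (x : EuclideanSpace ℝ (Fin n)) (ρ : ℝ) : Set C(closedBall x ρ, ℝ) :=
  {u | ∃ F, IsSubharmonicOn F (ball x ρ) ∧ ∀ y, u y = F y}

lemma convex_subharmonicCone (x : EuclideanSpace ℝ (Fin n)) (ρ : ℝ) :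
    Convex ℝ (subharmonicCone x ρ) := by
  rintro u ⟨F, hF, hu⟩ v ⟨G, hG, hv⟩ a b ha hb -
  exact ⟨a • F + b • G, (hF.const_smul ha).add (hG.const_smul hb), fun y => by simp [hu y, hv y]⟩

lemma laplacian_nonneg_of_mem_closure_subharmonicCone {ρ : ℝ} (hρ : 0 < ρ) (hh : ContDiff ℝ 2 h)
    {u : C(closedBall x ρ, ℝ)} (hu : u ∈ closure (subharmonicCone x ρ)) (huh : ∀ y, u y = h y) :
    0 ≤ laplacian h x := by
  refine laplacian_nonneg_of_forall_exists_isSubharmonicOn hρ hh fun τ hτ => ?_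
  obtain ⟨v, ⟨F, hF, hv⟩, huv⟩ := mem_closure_iff.1 hu τ hτ
  refine ⟨F, ?_, hF, fun y hy => ?_⟩
  · rw [continuousOn_iff_continuous_domRestrict]
    exact v.continuous.congr hv
  · have := (ContinuousMap.dist_apply_le_dist (f := v) (g := u) ⟨y, hy⟩).trans
      (dist_comm u v ▸ huv.le)
    rwa [hv, huh, Real.dist_eq] at this

/-- The continuous curve `y ↦ g y • f (· + y)` of weighted translates of `f`. -/
def weightedTranslates (hf : Continuous f) (hg : Continuous g) (x : EuclideanSpace ℝ (Fin n))
    (ρ : ℝ) : C(EuclideanSpace ℝ (Fin n), C(closedBall x ρ, ℝ)) :=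
  ContinuousMap.curry ⟨fun p => g p.1 * f (p.2 + p.1), by fun_prop⟩

lemma weightedTranslates_mem_subharmonicCone (hf : Continuous f) (hg : Continuous g) {ρ : ℝ}
    (hsub : IsSubharmonicOn f U) (hg₀ : 0 ≤ g)
    (hU : ∀ y ∈ tsupport g, ∀ z ∈ ball x ρ, z + y ∈ U) (y : EuclideanSpace ℝ (Fin n)) :
    weightedTranslates hf hg x ρ y ∈ subharmonicCone x ρ := by
  by_cases hy : y ∈ tsupport g
  · exact ⟨g y • fun z => f (z + y),
      fun z hz => ((hsub.comp_add_right y).const_smul (hg₀ y)) z (hU y hy z hz), fun z => rfl⟩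
  · exact ⟨0, .zero, fun z => by simp [weightedTranslates, image_eq_zero_of_notMem_tsupport hy]⟩

lemma laplacian_integral_translates_nonneg (hf : Continuous f) (hsub : IsSubharmonicOn f U)
    (hg : Continuous g) (hgs : HasCompactSupport g) (hg₀ : 0 ≤ g) {ρ : ℝ} (hρ : 0 < ρ)
    (hU : ∀ y ∈ tsupport g, ∀ z ∈ ball x ρ, z + y ∈ U)
    (hh : ContDiff ℝ 2 fun z => ∫ y, f (z + y) * g y) :
    0 ≤ laplacian (fun z => ∫ y, f (z + y) * g y) x := by
  obtain ⟨R, hR, hgR⟩ := hgs.isCompact.isBounded.subset_closedBall_lt 0 0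
  set B := closedBall (0 : EuclideanSpace ℝ (Fin n)) R
  set T := weightedTranslates hf hg x ρ
  have hB : volume B ≠ ∞ := measure_closedBall_lt_top.ne
  have hB' : volume B ≠ 0 := (measure_closedBall_pos volume _ hR).ne'
  have hT : IntegrableOn T B :=
    T.continuous.continuousOn.integrableOn_compact (isCompact_closedBall _ _)
  have hmem : ⨍ y in B, T y ∈ closure (subharmonicCone x ρ) :=
    (convex_subharmonicCone x ρ).set_average_mem_closure hB' hB
      (.of_forall fun y => weightedTranslates_mem_subharmonicCone hf hg hsub hg₀ hU y) hT
  have hval : ∀ z, (⨍ y in B, T y) z = (volume.real B)⁻¹ • ∫ y, f (z + y) * g y := fun z => by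
    rw [setAverage_eq, ContinuousMap.smul_apply, ContinuousMap.integral_apply hT]
    congr 1
    rw [setIntegral_eq_integral_of_forall_compl_eq_zero]
    · exact integral_congr_ae (.of_forall fun y => mul_comm _ _)
    · intro y hy
      simp [T, weightedTranslates, image_eq_zero_of_notMem_tsupport (fun h => hy (hgR h))]
  have hnonneg := laplacian_nonneg_of_mem_closure_subharmonicCone hρ
    (hh.const_smul (volume.real B)⁻¹) hmem fun z => hval z
  rw [← Pi.smul_def, laplacian_const_smul] at hnonneg
  exact (mul_nonneg_iff_of_pos_left (inv_pos.2 (ENNReal.toReal_pos hB' hB))).1 hnonneg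

lemma fderiv_convolution_mul_apply {E : Type*} [NormedAddCommGroup E] [NormedSpace ℝ E]
    [MeasurableSpace E] [BorelSpace E] {μ : Measure E} [SFinite μ] [μ.IsAddLeftInvariant]
    {f g : E → ℝ} (hf : LocallyIntegrable f μ) (hg : ContDiff ℝ 1 g) (hgs : HasCompactSupport g)
    (x v : E) :
    fderiv ℝ (convolution f g (.mul ℝ ℝ) μ) x v =
      convolution f (fun y => fderiv ℝ g y v) (.mul ℝ ℝ) μ x := by
  rw [(hgs.hasFDerivAt_convolution_right (ContinuousLinearMap.mul ℝ ℝ) hf hg x).fderiv,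
    convolution_precompR_apply _ hf (hgs.fderiv ℝ) (hg.continuous_fderiv one_ne_zero)]

lemma laplacian_convolution_mul (hf : Continuous f) (hg : ContDiff ℝ 2 g)
    (hgs : HasCompactSupport g) (x : EuclideanSpace ℝ (Fin n)) :
    laplacian (convolution f g (.mul ℝ ℝ) volume) x =
      convolution f (laplacian g) (.mul ℝ ℝ) volume x := by
  have hf' : LocallyIntegrable f := hf.locallyIntegrable
  have hgs' : ∀ i : Fin n, HasCompactSupport fun y => fderiv ℝ g y (EuclideanSpace.single i 1) :=
    fun i => hgs.fderiv_apply (𝕜 := ℝ) _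
  simp only [laplacian, fderiv_convolution_mul_apply hf' (hg.of_le one_le_two) hgs,
    fderiv_convolution_mul_apply hf' (contDiff_fderiv_apply hg _) (hgs' _)]
  simp only [convolution]
  rw [← integral_finsetSum]
  · simp only [ContinuousLinearMap.mul_apply', laplacian, Finset.mul_sum]
  intro i _
  exact ((hgs' i).fderiv_apply (𝕜 := ℝ) _).convolutionExists_right (ContinuousLinearMap.mul ℝ ℝ) hf'
    (((contDiff_fderiv_apply hg _).continuous_fderiv one_ne_zero).clm_apply continuous_const) x

lemma convolution_mul_comp_neg (f g : EuclideanSpace ℝ (Fin n) → ℝ)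
    (x : EuclideanSpace ℝ (Fin n)) :
    convolution f (fun y => g (-y)) (.mul ℝ ℝ) volume x = ∫ y, f (x + y) * g y := by
  rw [← integral_sub_right_eq_self (fun y => f (x + y) * g y) x]
  simp [convolution]

theorem IsSubharmonicOn.integral_mul_laplacian_nonneg (hsub : IsSubharmonicOn f U) (hU : IsOpen U)
    (hf : Continuous f) (hg : ContDiff ℝ 2 g) (hgs : HasCompactSupport g) (hg₀ : 0 ≤ g)
    (hgU : tsupport g ⊆ U) : 0 ≤ ∫ x, f x * laplacian g x := by
  have hG : ContDiff ℝ 2 fun y => g (-y) := hg.comp contDiff_neg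
  have hGs : HasCompactSupport fun y => g (-y) := hgs.comp_homeomorph (Homeomorph.neg _)
  have hconv := funext (convolution_mul_comp_neg f g)
  have hconv₂ : ContDiff ℝ 2 fun x => ∫ y, f (x + y) * g y :=
    hconv ▸ hGs.contDiff_convolution_right _ hf.locallyIntegrable hG
  obtain ⟨ρ, hρ, hthick⟩ := hgs.isCompact.exists_thickening_subset_open hU hgU
  have hnonneg := laplacian_integral_translates_nonneg (x := 0) hf hsub hg.continuous hgs hg₀ hρ
    (fun y hy z hz => hthick (mem_thickening_iff.2 ⟨y, hy, by simpa using hz⟩)) hconv₂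
  rw [← hconv, laplacian_convolution_mul hf hG hGs,
    funext (laplacian_comp_neg g), convolution_mul_comp_neg] at hnonneg
  simpa using hnonneg

end Subharmonic

section LaplacianComp

variable {n : ℕ} {D : EuclideanSpace ℝ (Fin n) → ℝ} {v x : EuclideanSpace ℝ (Fin n)}

lemma sum_inner_single_sq (v : EuclideanSpace ℝ (Fin n)) :
    ∑ i : Fin n, ⟪v, EuclideanSpace.single i (1 : ℝ)⟫ ^ 2 = ‖v‖ ^ 2 := by
  simp [EuclideanSpace.norm_sq_eq, EuclideanSpace.inner_single_right]

lemma laplacian_comp {ψ ψ₁ : ℝ → ℝ} {k : ℝ} (hψ : ∀ᶠ t in 𝓝 (D x), HasDerivAt ψ (ψ₁ t) t)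
    (hψ₁ : HasDerivAt ψ₁ k (D x)) (hD : TwiceDifferentiableAt D x) (hv : HasGradientAt D v x) :
    laplacian (fun y => ψ (D y)) x = k * ‖v‖ ^ 2 + ψ₁ (D x) * laplacian D x := by
  have hfderiv : fderiv ℝ (fun y => ψ (D y)) =ᶠ[𝓝 x] fun y => ψ₁ (D y) • fderiv ℝ D y := by
    filter_upwards [hD.1, hv.hasFDerivAt.continuousAt.eventually hψ] with y hy hψy
    exact (hψy.comp_hasFDerivAt y hy.hasFDerivAt).fderiv
  have hterm : ∀ e, fderiv ℝ (fun y => (ψ₁ (D y) • fderiv ℝ D y) e) x e =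
      k * ⟪v, e⟫ ^ 2 + ψ₁ (D x) * fderiv ℝ (fun y => fderiv ℝ D y e) x e := by
    intro e
    have hmul := (hψ₁.comp_hasFDerivAt x hv.hasFDerivAt).mul (hD.fderiv_apply e).hasFDerivAt
    refine (DFunLike.congr_fun hmul.fderiv e).trans ?_
    simp only [Function.comp_apply, hv.hasFDerivAt.fderiv, InnerProductSpace.toDual_apply_apply,
      _root_.add_apply, _root_.smul_apply, smul_eq_mul]
    ring
  rw [laplacian_eq_of_fderiv_eventuallyEq hfderiv, Finset.sum_congr rfl fun i _ => hterm _,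
    Finset.sum_add_distrib, ← Finset.mul_sum, ← Finset.mul_sum, sum_inner_single_sq]
  rfl

lemma laplacian_fun_sum {ι : Type*} (s : Finset ι) {F : ι → EuclideanSpace ℝ (Fin n) → ℝ}
    (hF : ∀ i ∈ s, ContDiff ℝ 2 (F i)) (x : EuclideanSpace ℝ (Fin n)) :
    laplacian (fun y => ∑ i ∈ s, F i y) x = ∑ i ∈ s, laplacian (F i) x := by
  classical
  induction s using Finset.induction_on with
  | empty => simp [laplacian]
  | insert a s ha ih =>
    rw [Finset.forall_mem_insert] at hF
    simp only [Finset.sum_insert ha, ← ih hF.2]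
    exact laplacian_add (.of_contDiff hF.1 x) (.of_contDiff (ContDiff.sum hF.2) x)

end LaplacianComp

namespace Polyhedron

section SoftSlack

variable {ι E : Type*} [Fintype ι] [NormedAddCommGroup E] [InnerProductSpace ℝ E]
  (P : Polyhedron ι E) {β : ℝ}

/-- The exponential sum `∑ i, exp (-β (height i - ⟪normal i, x⟫))`. -/
noncomputable def expSum (β : ℝ) (x : E) : ℝ :=
  ∑ i, Real.exp (β * (⟪P.normal i, x⟫ - P.height i))

/-- The smooth approximation of `slack` from below by a soft minimum. -/
noncomputable def softSlack (β : ℝ) (x : E) : ℝ := -(Real.log (P.expSum β x) / β)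

/-- The average of the normals with the weights of `expSum`, which is the gradient of
`-softSlack`. -/
noncomputable def softNormal (β : ℝ) (x : E) : E :=
  (P.expSum β x)⁻¹ • ∑ i, Real.exp (β * (⟪P.normal i, x⟫ - P.height i)) • P.normal i

lemma contDiff_expSum (β : ℝ) : ContDiff ℝ 2 (P.expSum β) :=
  ContDiff.sum fun i _ =>
    (contDiff_const.mul ((innerSL ℝ (P.normal i)).contDiff.sub contDiff_const)).exp

lemma softNormal_eq_of_sub (c β : ℝ) (x : E) :
    P.softNormal β x = (∑ i, Real.exp (-(β * (P.height i - ⟪P.normal i, x⟫ - c))))⁻¹ •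
      ∑ i, Real.exp (-(β * (P.height i - ⟪P.normal i, x⟫ - c))) • P.normal i := by
  have hexp : ∀ i, Real.exp (β * (⟪P.normal i, x⟫ - P.height i)) =
      Real.exp (-(β * c)) * Real.exp (-(β * (P.height i - ⟪P.normal i, x⟫ - c))) := fun i => by
    rw [← Real.exp_add]
    ring_nf
  simp only [softNormal, expSum, hexp, ← Finset.mul_sum, mul_smul, ← Finset.smul_sum, mul_inv]
  rw [smul_smul, smul_smul, mul_right_comm, inv_mul_cancel₀ (Real.exp_pos _).ne', one_mul]

variable [Nonempty ι]

lemma expSum_pos (β : ℝ) (x : E) : 0 < P.expSum β x :=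
  Finset.sum_pos (fun _ _ => Real.exp_pos _) Finset.univ_nonempty

lemma contDiff_softSlack (β : ℝ) : ContDiff ℝ 2 (P.softSlack β) :=
  (((P.contDiff_expSum β).log fun x => (P.expSum_pos β x).ne').div_const β).neg

lemma continuous_softNormal (β : ℝ) : Continuous (P.softNormal β) :=
  ((P.contDiff_expSum β).continuous.inv₀ fun x => (P.expSum_pos β x).ne').smul (by fun_prop)

lemma norm_softNormal_le_one (β : ℝ) (x : E) : ‖P.softNormal β x‖ ≤ 1 := by
  rw [softNormal, norm_smul, norm_inv, Real.norm_of_nonneg (P.expSum_pos β x).le,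
    inv_mul_le_one₀ (P.expSum_pos β x)]
  refine (norm_sum_le _ _).trans_eq (Finset.sum_congr rfl fun i _ => ?_)
  rw [norm_smul, P.norm_normal, mul_one, Real.norm_of_nonneg (Real.exp_pos _).le]

lemma softSlack_le_slack (hβ : 0 < β) (x : E) : P.softSlack β x ≤ P.slack x := by
  obtain ⟨i, hi⟩ := P.exists_slack_eq x
  have hle : β * (⟪P.normal i, x⟫ - P.height i) ≤ Real.log (P.expSum β x) := by
    rw [Real.le_log_iff_exp_le (P.expSum_pos β x)]
    exact Finset.single_le_sum (f := fun i => Real.exp (β * (⟪P.normal i, x⟫ - P.height i)))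
      (fun _ _ => (Real.exp_pos _).le) (Finset.mem_univ i)
  rw [hi, softSlack, neg_le, neg_sub, le_div_iff₀' hβ]
  exact hle

lemma slack_sub_le_softSlack (hβ : 0 < β) (x : E) :
    P.slack x - Real.log (Fintype.card ι) / β ≤ P.softSlack β x := by
  have hcard : (0 : ℝ) < Fintype.card ι := by exact_mod_cast Fintype.card_pos
  have hsum : P.expSum β x ≤ Fintype.card ι * Real.exp (-(β * P.slack x)) := by
    refine (Finset.sum_le_card_nsmul _ _ (Real.exp (-(β * P.slack x))) fun i _ => ?_).trans_eq
      (by simp)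
    rw [Real.exp_le_exp, ← mul_neg]
    gcongr
    linarith [P.slack_le i x]
  have hlog := Real.log_le_log (P.expSum_pos β x) hsum
  rw [Real.log_mul hcard.ne' (Real.exp_pos _).ne', Real.log_exp] at hlog
  have hdiv := div_le_div_of_nonneg_right hlog hβ.le
  rw [add_div, neg_div, mul_div_cancel_left₀ _ hβ.ne'] at hdiv
  rw [softSlack]
  linarith

lemma tendsto_softSlack (x : E) :
    Tendsto (fun β => P.softSlack β x) atTop (𝓝 (P.slack x)) := by
  have hlower : Tendsto (fun β : ℝ => P.slack x - Real.log (Fintype.card ι) / β) atTop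
      (𝓝 (P.slack x)) := by
    simpa using (tendsto_id.const_div_atTop (Real.log (Fintype.card ι))).const_sub (P.slack x)
  refine tendsto_of_tendsto_of_tendsto_of_le_of_le' hlower tendsto_const_nhds ?_ ?_
  · filter_upwards [eventually_gt_atTop 0] with β hβ using P.slack_sub_le_softSlack hβ x
  · filter_upwards [eventually_gt_atTop 0] with β hβ using P.softSlack_le_slack hβ x

lemma tendsto_norm_softNormal {x : E}
    (hx : Function.Injective fun i => P.height i - ⟪P.normal i, x⟫) :
    Tendsto (fun β => ‖P.softNormal β x‖) atTop (𝓝 1) := by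
  classical
  obtain ⟨o, ho⟩ := P.exists_slack_eq x
  have hweight : ∀ i, Tendsto
      (fun β => Real.exp (-(β * (P.height i - ⟪P.normal i, x⟫ - P.slack x)))) atTop
      (𝓝 (if i = o then 1 else 0)) := by
    intro i
    split_ifs with hio
    · simp [hio, ho]
    · have hgap : 0 < P.height i - ⟪P.normal i, x⟫ - P.slack x :=
        sub_pos.2 ((P.slack_le i x).lt_of_ne fun h => hio (hx (h.symm.trans ho)))
      exact Real.tendsto_exp_neg_atTop_nhds_zero.comp (tendsto_id.atTop_mul_const hgap)
  have hsum := tendsto_finsetSum Finset.univ fun i _ => hweight i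
  have hvec := tendsto_finsetSum Finset.univ fun i _ => (hweight i).smul_const (P.normal i)
  simp only [Finset.sum_ite_eq', Finset.mem_univ, if_true, ite_smul, one_smul, zero_smul]
    at hsum hvec
  have hlim := ((hsum.inv₀ one_ne_zero).smul hvec).norm
  simp only [inv_one, one_smul, P.norm_normal] at hlim
  exact hlim.congr fun β => by rw [P.softNormal_eq_of_sub (P.slack x)]

lemma hasGradientAt_expSum [CompleteSpace E] (β : ℝ) (x : E) :
    HasGradientAt (P.expSum β) ((β * P.expSum β x) • P.softNormal β x) x := by
  have hterm : ∀ i, HasFDerivAt (fun x => Real.exp (β * (⟪P.normal i, x⟫ - P.height i)))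
      (Real.exp (β * (⟪P.normal i, x⟫ - P.height i)) • β • innerSL ℝ (P.normal i)) x := fun i =>
    (((innerSL ℝ (P.normal i)).hasFDerivAt.sub_const (P.height i)).const_mul β).exp
  rw [hasGradientAt_iff_hasFDerivAt]
  refine (HasFDerivAt.fun_sum fun i _ => hterm i).congr_fderiv ?_
  ext v
  rw [softNormal, mul_smul, smul_inv_smul₀ (P.expSum_pos β x).ne']
  simp [Finset.mul_sum, mul_left_comm]

end SoftSlack

section SoftSlackLaplacian

variable {ι : Type*} [Fintype ι] {n : ℕ} (P : Polyhedron ι (EuclideanSpace ℝ (Fin n))) {β : ℝ}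

lemma laplacian_expSum (β : ℝ) (x : EuclideanSpace ℝ (Fin n)) :
    laplacian (P.expSum β) x = β ^ 2 * P.expSum β x := by
  have haff : ∀ i, ContDiff ℝ 2 fun y => β * (⟪P.normal i, y⟫ - P.height i) := fun i =>
    contDiff_const.mul ((innerSL ℝ (P.normal i)).contDiff.sub contDiff_const)
  have hgrad : ∀ i y, HasGradientAt (fun y => β * (⟪P.normal i, y⟫ - P.height i))
      (β • P.normal i) y := fun i y => by
    rw [hasGradientAt_iff_hasFDerivAt, map_smul]
    exact ((innerSL ℝ (P.normal i)).hasFDerivAt.sub_const (P.height i)).const_mul β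
  have hlap : ∀ i, laplacian (fun y => β * (⟪P.normal i, y⟫ - P.height i)) x = 0 := fun i => by
    rw [laplacian_eq_of_fderiv_eventuallyEq (.of_forall fun y => (hgrad i y).hasFDerivAt.fderiv)]
    simp
  have hterm : ∀ i, laplacian (fun y => Real.exp (β * (⟪P.normal i, y⟫ - P.height i))) x =
      β ^ 2 * Real.exp (β * (⟪P.normal i, x⟫ - P.height i)) := fun i => by
    rw [laplacian_comp (.of_forall Real.hasDerivAt_exp) (Real.hasDerivAt_exp _)
      (.of_contDiff (haff i) x) (hgrad i x), hlap, norm_smul, P.norm_normal]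
    simp [mul_comm]
  simp only [expSum, Finset.mul_sum, ← hterm]
  exact laplacian_fun_sum _ (fun i _ => (haff i).exp) x

variable [Nonempty ι]

-- `expSum β` is an eigenfunction of the Laplacian, and `softSlack β` is a function of it.
lemma laplacian_comp_softSlack (hβ : 0 < β) {ψ : ℝ → ℝ} (hψ : ContDiff ℝ 2 ψ)
    (x : EuclideanSpace ℝ (Fin n)) :
    laplacian (fun y => ψ (P.softSlack β y)) x =
      deriv (deriv ψ) (P.softSlack β x) * ‖P.softNormal β x‖ ^ 2 -
        β * deriv ψ (P.softSlack β x) * (1 - ‖P.softNormal β x‖ ^ 2) := by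
  have hS := P.expSum_pos β x
  have hψ₁ : ∀ t, HasDerivAt ψ (deriv ψ t) t := fun t =>
    (hψ.differentiable two_ne_zero t).hasDerivAt
  have hψ₂ : ∀ t, HasDerivAt (deriv ψ) (deriv (deriv ψ) t) t := fun t =>
    ((hψ.iterate_deriv' 1 1).differentiable one_ne_zero t).hasDerivAt
  have hsoft : ∀ s, 0 < s → HasDerivAt (fun s => -(Real.log s / β)) (-(s⁻¹ / β)) s := fun s hs =>
    ((Real.hasDerivAt_log hs.ne').div_const β).neg
  have hfirst : ∀ᶠ s in 𝓝 (P.expSum β x), HasDerivAt (fun s => ψ (-(Real.log s / β)))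
      (deriv ψ (-(Real.log s / β)) * -(s⁻¹ / β)) s := by
    filter_upwards [lt_mem_nhds hS] with s hs using (hψ₁ _).comp s (hsoft s hs)
  have hsecond := ((hψ₂ _).comp _ (hsoft _ hS)).mul ((hasDerivAt_inv hS.ne').div_const β).neg
  have hlap := laplacian_comp hfirst hsecond (.of_contDiff (P.contDiff_expSum β) x)
    (P.hasGradientAt_expSum β x)
  refine hlap.trans ?_
  rw [laplacian_expSum, norm_smul, Real.norm_of_nonneg (mul_pos hβ hS).le, softSlack]
  simp only [Function.comp_apply, Pi.neg_apply]
  field_simp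
  ring

end SoftSlackLaplacian

end Polyhedron

lemma deriv_eq_zero_of_lt {ψ : ℝ → ℝ} {δ t : ℝ} (hψ : ∀ s < δ, ψ s = 0) (ht : t < δ) :
    deriv ψ t = 0 := by
  have hψt : ψ =ᶠ[𝓝 t] fun _ => 0 := by
    filter_upwards [Iio_mem_nhds ht] with s hs using hψ s hs
  rw [hψt.deriv_eq, deriv_const]

/-- The profiles `ψ` for which `ψ ∘ slack`, once smoothed, is an admissible test function on a
polyhedron whose slack is at most `r`. -/
structure IsTestProfile (r δ : ℝ) (ψ : ℝ → ℝ) : Prop where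
  contDiff : ContDiff ℝ 2 ψ
  pos : 0 < δ
  eq_zero : ∀ t < δ, ψ t = 0
  deriv_nonneg : ∀ t ≤ r, 0 ≤ deriv ψ t

namespace IsTestProfile

variable {r δ t : ℝ} {ψ : ℝ → ℝ}

lemma continuous_deriv_deriv (hψ : IsTestProfile r δ ψ) : Continuous (deriv (deriv ψ)) :=
  (hψ.contDiff.iterate_deriv' 1 1).continuous_deriv le_rfl

lemma deriv_eq_zero (hψ : IsTestProfile r δ ψ) (ht : t < δ) : deriv ψ t = 0 :=
  deriv_eq_zero_of_lt hψ.eq_zero ht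

lemma deriv_deriv_eq_zero (hψ : IsTestProfile r δ ψ) (ht : t < δ) : deriv (deriv ψ) t = 0 :=
  deriv_eq_zero_of_lt (fun _ => hψ.deriv_eq_zero) ht

lemma nonneg (hψ : IsTestProfile r δ ψ) (ht : t ≤ r) : 0 ≤ ψ t := by
  have hmono : MonotoneOn ψ (Set.Iic r) :=
    monotoneOn_of_deriv_nonneg (convex_Iic r) hψ.contDiff.continuous.continuousOn
      (hψ.contDiff.differentiable two_ne_zero).differentiableOn
      fun s hs => hψ.deriv_nonneg s (Set.mem_Iic.1 (interior_subset hs))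
  rw [← hψ.eq_zero (min t 0) ((min_le_right t 0).trans_lt hψ.pos)]
  exact hmono ((min_le_left t 0).trans ht) ht (min_le_left t 0)

lemma exists_abs_deriv_deriv_le (hψ : IsTestProfile r δ ψ) :
    ∃ M, ∀ t ≤ r, |deriv (deriv ψ) t| ≤ M := by
  obtain ⟨M, hM⟩ := (isCompact_Icc (a := 0) (b := max r 0)).exists_bound_of_continuousOn
    hψ.continuous_deriv_deriv.continuousOn
  refine ⟨M, fun t ht => ?_⟩
  rcases lt_or_ge t 0 with hneg | hpos
  · rw [hψ.deriv_deriv_eq_zero (hneg.trans hψ.pos), abs_zero]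
    exact (norm_nonneg _).trans (hM 0 ⟨le_rfl, le_max_right r 0⟩)
  · exact hM t ⟨hpos, ht.trans (le_max_left r 0)⟩

end IsTestProfile

lemma exists_contDiff_deriv_deriv_eq {k : ℝ → ℝ} (hk : Continuous k) {δ : ℝ} (hδ : 0 < δ)
    (hkδ : ∀ t < δ, k t = 0) : ∃ ψ : ℝ → ℝ, ContDiff ℝ 2 ψ ∧ (∀ t < δ, ψ t = 0) ∧
      (∀ t, deriv ψ t = ∫ s in 0..t, k s) ∧ deriv (deriv ψ) = k := by
  have hprimitive : ∀ {u : ℝ → ℝ}, Continuous u →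
      ∀ t, HasDerivAt (fun t => ∫ s in 0..t, u s) (u t) t :=
    fun hu t => (hu.integral_hasStrictDerivAt 0 t).hasDerivAt
  have hzero : ∀ {u : ℝ → ℝ}, (∀ t < δ, u t = 0) → ∀ t < δ, ∫ s in 0..t, u s = 0 := by
    intro u hu t ht
    refine intervalIntegral.integral_zero_ae (.of_forall fun s hs => hu s ?_)
    rcases Set.mem_uIoc.1 hs with hs | hs <;> linarith [hs.2]
  have hk₁ : Continuous fun t => ∫ s in 0..t, k s :=
    continuous_iff_continuousAt.2 fun t => (hprimitive hk t).continuousAt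
  have hderiv₁ : deriv (fun t => ∫ s in 0..t, ∫ u in 0..s, k u) = fun t => ∫ s in 0..t, k s :=
    funext fun t => (hprimitive hk₁ t).deriv
  have hderiv₂ : deriv (fun t => ∫ s in 0..t, k s) = k := funext fun t => (hprimitive hk t).deriv
  refine ⟨fun t => ∫ s in 0..t, ∫ u in 0..s, k u, ?_, hzero (hzero hkδ), congrFun hderiv₁, ?_⟩
  · rw [show (2 : WithTop ℕ∞) = 1 + 1 by norm_num, contDiff_succ_iff_deriv, hderiv₁,
      contDiff_one_iff_deriv, hderiv₂]
    exact ⟨fun t => (hprimitive hk₁ t).differentiableAt, by simp,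
      fun t => (hprimitive hk t).differentiableAt, hk⟩
  · rw [hderiv₁, hderiv₂]

namespace Polyhedron

lemma ae_injective_height_sub_inner {ι : Type*} [Countable ι] {n : ℕ}
    (P : Polyhedron ι (EuclideanSpace ℝ (Fin n))) :
    ∀ᵐ x, Function.Injective fun i => P.height i - ⟪P.normal i, x⟫ := by
  have hpair : ∀ᵐ x, ∀ i j, i ≠ j →
      ⟪P.normal i - P.normal j, x⟫ ≠ P.height i - P.height j := by
    refine ae_all_iff.2 fun i => ae_all_iff.2 fun j => ?_
    by_cases hij : i = j
    · simp [hij]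
    have hnull := volume_hyperplane (sub_ne_zero.2 fun h => hij (P.normal_injective h))
      (P.height i - P.height j)
    filter_upwards [measure_eq_zero_iff_ae_notMem.1 hnull] with x hx _ using hx
  filter_upwards [hpair] with x hx i j hij
  by_contra hne
  refine hx i j hne ?_
  rw [inner_sub_left]
  linarith

section TestFunction

variable {n : ℕ} {f : EuclideanSpace ℝ (Fin n) → ℝ} {U : Set (EuclideanSpace ℝ (Fin n))}
  {ψ : ℝ → ℝ} {r δ β : ℝ} {ι : Type*} [Nonempty ι] {P : Polyhedron ι (EuclideanSpace ℝ (Fin n))}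

section SoftSlackTest

variable [Fintype ι]

lemma setOf_le_softSlack_subset_carrier (hβ : 0 < β) (hδ : 0 < δ) :
    {x | δ ≤ P.softSlack β x} ⊆ P.carrier :=
  fun x hx => P.mem_carrier_iff.2 (hδ.le.trans (hx.trans (P.softSlack_le_slack hβ x)))

lemma isCompact_setOf_le_softSlack (hP : Bornology.IsBounded P.carrier) (hβ : 0 < β) (hδ : 0 < δ) :
    IsCompact {x | δ ≤ P.softSlack β x} :=
  isCompact_of_isClosed_isBounded (isClosed_le continuous_const (P.contDiff_softSlack β).continuous)
    (hP.subset (setOf_le_softSlack_subset_carrier hβ hδ))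

lemma integrable_of_eq_zero_of_softSlack_lt (hP : Bornology.IsBounded P.carrier) (hβ : 0 < β)
    (hδ : 0 < δ) {u : EuclideanSpace ℝ (Fin n) → ℝ} (hu : Continuous u)
    (hu₀ : ∀ x, P.softSlack β x < δ → u x = 0) : Integrable u :=
  hu.integrable_of_hasCompactSupport <| .intro (isCompact_setOf_le_softSlack hP hβ hδ)
    fun x hx => hu₀ x (not_le.1 hx)

lemma integral_mul_laplacian_comp_softSlack_nonneg (hsub : IsSubharmonicOn f U) (hU : IsOpen U)
    (hf : Continuous f) (hPU : P.carrier ⊆ U) (hP : Bornology.IsBounded P.carrier)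
    (hr : ∀ x, P.slack x ≤ r) (hψ : IsTestProfile r δ ψ) (hβ : 0 < β) :
    0 ≤ ∫ x, f x * laplacian (fun y => ψ (P.softSlack β y)) x := by
  have hK := isCompact_setOf_le_softSlack hP hβ hψ.pos
  have hsupp : tsupport (fun x => ψ (P.softSlack β x)) ⊆ {x | δ ≤ P.softSlack β x} :=
    closure_minimal (fun x hx => not_lt.1 fun h => hx (hψ.eq_zero _ h)) hK.isClosed
  exact hsub.integral_mul_laplacian_nonneg hU hf (hψ.contDiff.comp (P.contDiff_softSlack β))
    (hK.of_isClosed_subset (isClosed_tsupport _) hsupp)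
    (fun x => hψ.nonneg ((P.softSlack_le_slack hβ x).trans (hr x)))
    (hsupp.trans ((setOf_le_softSlack_subset_carrier hβ hψ.pos).trans hPU))

-- Concavity of `softSlack` and `ψ' ≥ 0` make the first-order term of the Laplacian nonpositive.
lemma integral_mul_deriv_deriv_comp_softSlack_nonneg (hsub : IsSubharmonicOn f U) (hU : IsOpen U)
    (hf : Continuous f) (hf₀ : 0 ≤ f) (hPU : P.carrier ⊆ U) (hP : Bornology.IsBounded P.carrier)
    (hr : ∀ x, P.slack x ≤ r) (hψ : IsTestProfile r δ ψ) (hβ : 0 < β) :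
    0 ≤ ∫ x, f x * (deriv (deriv ψ) (P.softSlack β x) * ‖P.softNormal β x‖ ^ 2) := by
  have hlap := P.laplacian_comp_softSlack hβ hψ.contDiff
  refine (integral_mul_laplacian_comp_softSlack_nonneg hsub hU hf hPU hP hr hψ hβ).trans
    (integral_mono ?_ ?_ fun x => mul_le_mul_of_nonneg_left ?_ (hf₀ x))
  · refine integrable_of_eq_zero_of_softSlack_lt hP hβ hψ.pos
      (hf.mul (continuous_laplacian (hψ.contDiff.comp (P.contDiff_softSlack β)))) fun x hx => ?_
    rw [hlap, hψ.deriv_deriv_eq_zero hx, hψ.deriv_eq_zero hx]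
    simp
  · refine integrable_of_eq_zero_of_softSlack_lt hP hβ hψ.pos (hf.mul
      ((hψ.continuous_deriv_deriv.comp (P.contDiff_softSlack β).continuous).mul
        ((P.continuous_softNormal β).norm.pow 2))) fun x hx => ?_
    simp [hψ.deriv_deriv_eq_zero hx]
  · have hderiv := hψ.deriv_nonneg _ ((P.softSlack_le_slack hβ x).trans (hr x))
    have hnorm : ‖P.softNormal β x‖ ^ 2 ≤ 1 :=
      pow_le_one₀ (norm_nonneg _) (P.norm_softNormal_le_one β x)
    rw [hlap, sub_le_self_iff]
    exact mul_nonneg (mul_nonneg hβ.le hderiv) (sub_nonneg.2 hnorm)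

lemma tendsto_integral_mul_deriv_deriv_comp_softSlack (hf : Continuous f) (hf₀ : 0 ≤ f)
    (hP : Bornology.IsBounded P.carrier) (hr : ∀ x, P.slack x ≤ r) (hψ : IsTestProfile r δ ψ) :
    Tendsto (fun β => ∫ x, f x * (deriv (deriv ψ) (P.softSlack β x) * ‖P.softNormal β x‖ ^ 2))
      atTop (𝓝 (∫ x, f x * deriv (deriv ψ) (P.slack x))) := by
  obtain ⟨M, hM⟩ := hψ.exists_abs_deriv_deriv_le
  have hM₀ : 0 ≤ M := (abs_nonneg _).trans (hM r le_rfl)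
  have hPc : IsCompact P.carrier := isCompact_of_isClosed_isBounded P.isClosed_carrier hP
  refine tendsto_integral_filter_of_dominated_convergence (P.carrier.indicator fun x => f x * M)
    (.of_forall fun β => ?_) ?_ ?_ ?_
  · exact (hf.mul ((hψ.continuous_deriv_deriv.comp (P.contDiff_softSlack β).continuous).mul
      ((P.continuous_softNormal β).norm.pow 2))).aestronglyMeasurable
  · filter_upwards [eventually_gt_atTop 0] with β hβ
    refine .of_forall fun x => ?_
    by_cases hx : x ∈ P.carrier
    · have hle : |deriv (deriv ψ) (P.softSlack β x)| * ‖P.softNormal β x‖ ^ 2 ≤ M * 1 :=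
        mul_le_mul (hM _ ((P.softSlack_le_slack hβ x).trans (hr x)))
          (pow_le_one₀ (norm_nonneg _) (P.norm_softNormal_le_one β x)) (by positivity) hM₀
      rw [Set.indicator_of_mem hx, norm_mul, norm_mul, Real.norm_of_nonneg (hf₀ x), norm_pow,
        norm_norm]
      exact mul_le_mul_of_nonneg_left (hle.trans_eq (mul_one M)) (hf₀ x)
    · have hlt : P.softSlack β x < δ := not_le.1 fun h =>
        hx (setOf_le_softSlack_subset_carrier hβ hψ.pos h)
      simp [Set.indicator_of_notMem hx, hψ.deriv_deriv_eq_zero hlt]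
  · rw [integrable_indicator_iff hPc.measurableSet]
    exact (hf.mul continuous_const).continuousOn.integrableOn_compact hPc
  · filter_upwards [P.ae_injective_height_sub_inner] with x hx
    have hlim := (((hψ.continuous_deriv_deriv.tendsto _).comp (P.tendsto_softSlack x)).mul
      ((P.tendsto_norm_softNormal hx).pow 2)).const_mul (f x)
    rwa [one_pow, mul_one] at hlim

end SoftSlackTest

lemma integral_mul_deriv_deriv_comp_slack_nonneg [Finite ι] (hsub : IsSubharmonicOn f U)
    (hU : IsOpen U) (hf : Continuous f) (hf₀ : 0 ≤ f) (hPU : P.carrier ⊆ U)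
    (hP : Bornology.IsBounded P.carrier) (hr : ∀ x, P.slack x ≤ r) (hψ : IsTestProfile r δ ψ) :
    0 ≤ ∫ x, f x * deriv (deriv ψ) (P.slack x) := by
  have := Fintype.ofFinite ι
  refine ge_of_tendsto (tendsto_integral_mul_deriv_deriv_comp_softSlack hf hf₀ hP hr hψ) ?_
  filter_upwards [eventually_gt_atTop 0] with β hβ
  exact integral_mul_deriv_deriv_comp_softSlack_nonneg hsub hU hf hf₀ hPU hP hr hψ hβ

end TestFunction

end Polyhedron

section Trapezoid

/-- The piecewise linear function vanishing up to `δ`, equal to `H` on `[2δ, ε - δ]` and to `-1`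
from `ε` on. -/
noncomputable def trapezoid (H δ ε t : ℝ) : ℝ :=
  min (H * max 0 (min 1 ((t - δ) / δ))) (max (-1) (H - (H + 1) * ((t - (ε - δ)) / δ)))

variable {H δ ε r t : ℝ}

lemma continuous_trapezoid (H δ ε : ℝ) : Continuous (trapezoid H δ ε) := by
  unfold trapezoid
  fun_prop

lemma trapezoid_le (hH : 0 ≤ H) : trapezoid H δ ε t ≤ H :=
  (min_le_left _ _).trans
    (mul_le_of_le_one_right hH (max_le zero_le_one (min_le_left _ _)))

lemma neg_one_le_trapezoid (hH : 0 ≤ H) : -1 ≤ trapezoid H δ ε t :=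
  le_min (neg_one_lt_zero.le.trans (mul_nonneg hH (le_max_left _ _))) (le_max_left _ _)

lemma trapezoid_of_le_sub (hH : 0 ≤ H) (hδ : 0 < δ) (ht : t ≤ ε - δ) :
    trapezoid H δ ε t = H * max 0 (min 1 ((t - δ) / δ)) := by
  have hramp : (t - (ε - δ)) / δ ≤ 0 := div_nonpos_of_nonpos_of_nonneg (sub_nonpos.2 ht) hδ.le
  refine min_eq_left ((mul_le_of_le_one_right hH (max_le zero_le_one (min_le_left _ _))).trans ?_)
  exact le_max_of_le_right
    ((le_sub_self_iff H).2 (mul_nonpos_of_nonneg_of_nonpos (by linarith) hramp))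

lemma trapezoid_nonneg (hH : 0 ≤ H) (hδ : 0 < δ) (ht : t ≤ ε - δ) : 0 ≤ trapezoid H δ ε t := by
  rw [trapezoid_of_le_sub hH hδ ht]
  exact mul_nonneg hH (le_max_left _ _)

lemma trapezoid_eq_zero (hH : 0 ≤ H) (hδ : 0 < δ) (hδε : 2 * δ ≤ ε) (ht : t ≤ δ) :
    trapezoid H δ ε t = 0 := by
  have hramp : (t - δ) / δ ≤ 0 := div_nonpos_of_nonpos_of_nonneg (sub_nonpos.2 ht) hδ.le
  rw [trapezoid_of_le_sub hH hδ (by linarith), max_eq_left ((min_le_right _ _).trans hramp),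
    mul_zero]

lemma trapezoid_eq_self (hH : 0 ≤ H) (hδ : 0 < δ) (ht : t ∈ Set.Icc (2 * δ) (ε - δ)) :
    trapezoid H δ ε t = H := by
  have hramp : 1 ≤ (t - δ) / δ := (one_le_div hδ).2 (by linarith [ht.1])
  rw [trapezoid_of_le_sub hH hδ ht.2, min_eq_left hramp, max_eq_right zero_le_one, mul_one]

lemma trapezoid_eq_neg_one (hH : 0 ≤ H) (hδ : 0 < δ) (ht : ε ≤ t) : trapezoid H δ ε t = -1 := by
  have hramp : 1 ≤ (t - (ε - δ)) / δ := (one_le_div hδ).2 (by linarith)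
  have hle : H - (H + 1) * ((t - (ε - δ)) / δ) ≤ -1 := by nlinarith
  rw [trapezoid, max_eq_left hle]
  exact min_eq_right (neg_one_lt_zero.le.trans (mul_nonneg hH (le_max_left _ _)))

lemma integral_trapezoid_nonneg (hH : 0 ≤ H) (hδ : 0 < δ) (hδε : 3 * δ ≤ ε)
    (hr : r ≤ H * (ε - 3 * δ)) (ht : t ≤ r) : 0 ≤ ∫ s in 0..t, trapezoid H δ ε s := by
  have hint : ∀ u v, IntervalIntegrable (trapezoid H δ ε) volume u v := fun u v =>
    (continuous_trapezoid H δ ε).intervalIntegrable u v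
  rcases le_total t 0 with hneg | hpos
  · refine (intervalIntegral.integral_zero_ae (.of_forall fun s hs => ?_)).ge
    rw [Set.uIoc_of_ge hneg] at hs
    exact trapezoid_eq_zero hH hδ (by linarith) (hs.2.trans hδ.le)
  rcases le_total t (ε - δ) with hshort | hlong
  · exact intervalIntegral.integral_nonneg hpos fun s hs =>
      trapezoid_nonneg hH hδ (hs.2.trans hshort)
  have hrise : 0 ≤ ∫ s in 0..(2 * δ), trapezoid H δ ε s :=
    intervalIntegral.integral_nonneg (by linarith) fun s hs =>
      trapezoid_nonneg hH hδ (by linarith [hs.2])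
  have hplateau : ∫ s in (2 * δ)..(ε - δ), trapezoid H δ ε s = (ε - δ - 2 * δ) * H := by
    rw [← smul_eq_mul (ε - δ - 2 * δ), ← intervalIntegral.integral_const]
    refine intervalIntegral.integral_congr fun s hs => trapezoid_eq_self hH hδ ?_
    rwa [Set.uIcc_of_le (by linarith)] at hs
  have hfall : (t - (ε - δ)) * -1 ≤ ∫ s in (ε - δ)..t, trapezoid H δ ε s := by
    rw [← smul_eq_mul, ← intervalIntegral.integral_const]
    exact intervalIntegral.integral_mono_on hlong intervalIntegrable_const (hint _ _)
      fun s _ => neg_one_le_trapezoid hH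
  rw [← intervalIntegral.integral_add_adjacent_intervals (hint 0 (2 * δ)) (hint (2 * δ) t),
    ← intervalIntegral.integral_add_adjacent_intervals (hint (2 * δ) (ε - δ)) (hint (ε - δ) t)]
  linarith

lemma exists_isTestProfile_deriv_deriv_le (hε : 0 < ε) (hr : 0 ≤ r) (hH : r < H * ε) :
    ∃ δ ψ, IsTestProfile r δ ψ ∧ (∀ t, deriv (deriv ψ) t ≤ H) ∧
      ∀ t, ε ≤ t → deriv (deriv ψ) t = -1 := by
  have hH₀ : 0 < H := pos_of_mul_pos_left (hr.trans_lt hH) hε.le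
  set δ := (ε - r / H) / 3
  have hδ : 0 < δ := div_pos (sub_pos.2 ((div_lt_iff₀' hH₀).2 hH)) three_pos
  have hδε : 3 * δ = ε - r / H := mul_div_cancel₀ _ three_ne_zero
  have hδε' : 3 * δ ≤ ε := hδε.trans_le (sub_le_self ε (div_nonneg hr hH₀.le))
  have harea : r = H * (ε - 3 * δ) := by rw [hδε, sub_sub_cancel, mul_div_cancel₀ _ hH₀.ne']
  obtain ⟨ψ, hψ, hψ₀, hψ₁, hψ₂⟩ := exists_contDiff_deriv_deriv_eq (continuous_trapezoid H δ ε) hδ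
    fun t ht => trapezoid_eq_zero hH₀.le hδ (by linarith) ht.le
  refine ⟨δ, ψ, ⟨hψ, hδ, hψ₀, fun t ht => ?_⟩, fun t => ?_, fun t ht => ?_⟩
  · exact (integral_trapezoid_nonneg hH₀.le hδ hδε' harea.le ht).trans_eq (hψ₁ t).symm
  · exact hψ₂ ▸ trapezoid_le hH₀.le
  · exact hψ₂ ▸ trapezoid_eq_neg_one hH₀.le hδ ht

end Trapezoid

namespace Polyhedron

section BoundaryLayer

variable {ι : Type*} [Nonempty ι]

lemma continuous_slack [Finite ι] {E : Type*} [NormedAddCommGroup E] [InnerProductSpace ℝ E]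
    (P : Polyhedron ι E) : Continuous P.slack := by
  have := Fintype.ofFinite ι
  have hslack : P.slack =
      fun x => Finset.univ.inf' Finset.univ_nonempty fun i => P.height i - ⟪P.normal i, x⟫ :=
    funext fun x => (Finset.inf'_univ_eq_ciInf _).symm
  rw [hslack]
  exact Continuous.finset_inf'_apply _ fun i _ => by fun_prop

variable {n : ℕ} {P : Polyhedron ι (EuclideanSpace ℝ (Fin n))}
  {f : EuclideanSpace ℝ (Fin n) → ℝ} {U : Set (EuclideanSpace ℝ (Fin n))} {r ε H : ℝ}

lemma setIntegral_carrier_le_mul_setIntegral_setOf_slack_lt [Finite ι]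
    (hsub : IsSubharmonicOn f U) (hU : IsOpen U) (hf : Continuous f) (hf₀ : 0 ≤ f)
    (hPU : P.carrier ⊆ U) (hP : Bornology.IsBounded P.carrier) (hr₀ : 0 ≤ r)
    (hr : ∀ x, P.slack x ≤ r) (hε : 0 < ε) (hH : r < H * ε) :
    ∫ x in P.carrier, f x ≤ (1 + H) * ∫ x in {x ∈ P.carrier | P.slack x < ε}, f x := by
  obtain ⟨δ, ψ, hψ, hψ_le, hψ_eq⟩ := exists_isTestProfile_deriv_deriv_le hε hr₀ hH
  set B := {x ∈ P.carrier | P.slack x < ε}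
  have hPc : IsCompact P.carrier := isCompact_of_isClosed_isBounded P.isClosed_carrier hP
  have hfP : IntegrableOn f P.carrier := hf.continuousOn.integrableOn_compact hPc
  have hB : MeasurableSet B :=
    hPc.measurableSet.inter (isOpen_lt P.continuous_slack continuous_const).measurableSet
  have hintB := ((hfP.mono_set (Set.sep_subset _ _)).integrable_indicator hB).const_mul (1 + H)
  have hintP := hfP.integrable_indicator hPc.measurableSet
  have houtside : ∀ x ∉ P.carrier, f x * deriv (deriv ψ) (P.slack x) = 0 := fun x hx => by
    rw [hψ.deriv_deriv_eq_zero ((not_le.1 (mt P.mem_carrier_iff.2 hx)).trans hψ.pos), mul_zero]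
  have hint : Integrable fun x => f x * deriv (deriv ψ) (P.slack x) :=
    ((hf.mul (hψ.continuous_deriv_deriv.comp P.continuous_slack)).continuousOn
      |>.integrableOn_compact hPc).integrable_of_forall_notMem_eq_zero houtside
  have hpointwise : ∀ x, f x * deriv (deriv ψ) (P.slack x) ≤
      (1 + H) * B.indicator f x - P.carrier.indicator f x := by
    intro x
    by_cases hx : x ∈ P.carrier
    · rcases lt_or_ge (P.slack x) ε with hlt | hge
      · rw [Set.indicator_of_mem hx, Set.indicator_of_mem (show x ∈ B from ⟨hx, hlt⟩)]
        linarith [mul_le_mul_of_nonneg_left (hψ_le (P.slack x)) (hf₀ x)]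
      · rw [Set.indicator_of_mem hx, Set.indicator_of_notMem fun h => hge.not_gt h.2, hψ_eq _ hge]
        linarith
    · rw [houtside x hx, Set.indicator_of_notMem hx, Set.indicator_of_notMem fun h => hx h.1,
        mul_zero, sub_zero]
  have htest := (integral_mul_deriv_deriv_comp_slack_nonneg hsub hU hf hf₀ hPU hP hr hψ).trans
    (integral_mono hint (hintB.sub hintP) hpointwise)
  rwa [integral_sub' hintB hintP, integral_const_mul, integral_indicator hB,
    integral_indicator hPc.measurableSet, sub_nonneg] at htest

variable [Fintype ι]

lemma setLIntegral_carrier_le_add (hsub : IsSubharmonicOn f U)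
    (hU : IsOpen U) (hf : Continuous f) (hf₀ : 0 ≤ f) (hPU : P.carrier ⊆ U)
    (hP : Bornology.IsBounded P.carrier) (hr₀ : 0 ≤ r) (hr : ∀ x, P.slack x ≤ r) {w : ℝ}
    (hw : 0 < w) :
    ∫⁻ x in P.carrier, ENNReal.ofReal (f x) ≤ ENNReal.ofReal (r + w) *
      ∑ i, (∫⁻ x in P.facet i, ENNReal.ofReal (f x) ∂surfaceMeasure (EuclideanSpace ℝ (Fin n)) +
        ENNReal.ofReal w * surfaceMeasure (EuclideanSpace ℝ (Fin n)) (P.facet i)) := by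
  have hPc : IsCompact P.carrier := isCompact_of_isClosed_isBounded P.isClosed_carrier hP
  obtain ⟨ε₀, hε₀, hmod⟩ := Metric.uniformContinuousOn_iff.1
    (hPc.uniformContinuousOn_of_continuous hf.continuousOn) w hw
  set ε := min ε₀ (w / 2)
  have hε : 0 < ε := lt_min hε₀ (half_pos hw)
  have hlayer := P.setLIntegral_setOf_slack_lt_le (ε := ε) (ω := ENNReal.ofReal w)
    hf.measurable.ennreal_ofReal fun x hx y hy hxy => by
      rw [← ENNReal.ofReal_add (hf₀ y) hw.le]
      refine ENNReal.ofReal_le_ofReal (sub_le_iff_le_add'.1 ((le_abs_self _).trans ?_))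
      exact (hmod x hx y hy (hxy.trans_le (min_le_left _ _))).le
  set H := (r + w / 2) / ε
  have hHε : H * ε = r + w / 2 := div_mul_cancel₀ _ hε.ne'
  have hH : 0 ≤ H := by positivity
  have hfP : IntegrableOn f P.carrier := hf.continuousOn.integrableOn_compact hPc
  have hmain := setIntegral_carrier_le_mul_setIntegral_setOf_slack_lt hsub hU hf hf₀ hPU hP hr₀ hr
    hε (H := H) (by linarith)
  calc ∫⁻ x in P.carrier, ENNReal.ofReal (f x)
      = ENNReal.ofReal (∫ x in P.carrier, f x) :=
        (ofReal_integral_eq_lintegral_ofReal hfP (.of_forall hf₀)).symm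
    _ ≤ ENNReal.ofReal (1 + H) *
        ENNReal.ofReal (∫ x in {x ∈ P.carrier | P.slack x < ε}, f x) := by
        rw [← ENNReal.ofReal_mul (by linarith)]
        exact ENNReal.ofReal_le_ofReal hmain
    _ = ENNReal.ofReal (1 + H) *
        ∫⁻ x in {x ∈ P.carrier | P.slack x < ε}, ENNReal.ofReal (f x) := by
        rw [ofReal_integral_eq_lintegral_ofReal (hfP.mono_set (Set.sep_subset _ _))
          (.of_forall hf₀)]
    _ ≤ _ := by
        refine (mul_le_mul_right hlayer _).trans ?_
        rw [← mul_assoc, ← ENNReal.ofReal_mul (by linarith)]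
        gcongr
        linarith [min_le_right ε₀ (w / 2)]

lemma setLIntegral_carrier_le (hsub : IsSubharmonicOn f U) (hU : IsOpen U) (hf : Continuous f)
    (hf₀ : 0 ≤ f) (hPU : P.carrier ⊆ U) (hP : Bornology.IsBounded P.carrier) (hr₀ : 0 < r)
    (hr : ∀ x, P.slack x ≤ r)
    (hσ : ∀ i, surfaceMeasure (EuclideanSpace ℝ (Fin n)) (P.facet i) ≠ ∞) :
    ∫⁻ x in P.carrier, ENNReal.ofReal (f x) ≤ ENNReal.ofReal r *
      ∑ i, ∫⁻ x in P.facet i, ENNReal.ofReal (f x) ∂surfaceMeasure (EuclideanSpace ℝ (Fin n)) := by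
  set A := fun i =>
    ∫⁻ x in P.facet i, ENNReal.ofReal (f x) ∂surfaceMeasure (EuclideanSpace ℝ (Fin n))
  have hofReal : ∀ c : ℝ, Tendsto (fun w => ENNReal.ofReal (c + w)) (𝓝[>] 0)
      (𝓝 (ENNReal.ofReal c)) := fun c => by
    have hcont : Continuous fun w => ENNReal.ofReal (c + w) :=
      ENNReal.continuous_ofReal.comp (continuous_const_add c)
    simpa using (hcont.tendsto 0).mono_left nhdsWithin_le_nhds
  have hzero : Tendsto ENNReal.ofReal (𝓝[>] 0) (𝓝 0) := by simpa using hofReal 0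
  have hsum : Tendsto (fun w => ∑ i, (A i + ENNReal.ofReal w *
      surfaceMeasure (EuclideanSpace ℝ (Fin n)) (P.facet i))) (𝓝[>] 0) (𝓝 (∑ i, A i)) := by
    simpa using tendsto_finsetSum Finset.univ fun i _ =>
      (tendsto_const_nhds (x := A i)).add (ENNReal.Tendsto.mul_const hzero (.inr (hσ i)))
  refine ge_of_tendsto (ENNReal.Tendsto.mul (hofReal r) (.inl (ENNReal.ofReal_pos.2 hr₀).ne') hsum
    (.inr ENNReal.ofReal_ne_top)) ?_
  filter_upwards [self_mem_nhdsWithin] with w hw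
  exact setLIntegral_carrier_le_add hsub hU hf hf₀ hPU hP hr₀.le hr hw

end BoundaryLayer

end Polyhedron

lemma inter_frontier_nonempty_of_isPreconnected {X : Type*} [TopologicalSpace X] {s t : Set X}
    (ht : IsPreconnected t) (hmeet : (t ∩ s).Nonempty) (hnot : ¬t ⊆ s) :
    (t ∩ frontier s).Nonempty := by
  by_contra! hdisj
  have hsplit : ∀ x ∈ t, x ∈ closure s → x ∈ interior s := fun x hx hcl => by
    by_contra hint
    exact hdisj.subset ⟨hx, hcl, hint⟩
  obtain ⟨x, hxt, hxs⟩ := hmeet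
  obtain ⟨y, hyt, hys⟩ := Set.not_subset.1 hnot
  obtain ⟨z, -, hzint, hzcl⟩ := ht (interior s) (closure s)ᶜ isOpen_interior
    isClosed_closure.isOpen_compl (fun z hz => or_iff_not_imp_right.2 fun h =>
      hsplit z hz (not_not.1 h)) ⟨x, hxt, hsplit x hxt (subset_closure hxs)⟩
    ⟨y, hyt, fun hcl => hys (interior_subset (hsplit y hyt hcl))⟩
  exact hzcl (interior_subset_closure hzint)

lemma exists_add_smul_mem_frontier {E : Type*} [NormedAddCommGroup E] [NormedSpace ℝ E] {B : Set E}
    (hB : Bornology.IsBounded B) {q ν : E} (hq : q ∈ B) (hν : ν ≠ 0) :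
    ∃ t : ℝ, 0 ≤ t ∧ q + t • ν ∈ frontier B := by
  have hray : IsPreconnected ((fun t : ℝ => q + t • ν) '' Set.Ici 0) :=
    isPreconnected_Ici.image _ (by fun_prop)
  have hescape : Tendsto (fun t : ℝ => ‖q + t • ν‖) atTop atTop := by
    refine tendsto_atTop_mono (fun t => ?_) (tendsto_atTop_add_const_right atTop (-‖q‖)
      (tendsto_abs_atTop_atTop.atTop_mul_const (norm_pos_iff.2 hν)))
    have htri := norm_sub_le (q + t • ν) q
    rw [add_sub_cancel_left, norm_smul, Real.norm_eq_abs] at htri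
    linarith
  obtain ⟨R, hR⟩ := hB.exists_norm_le
  obtain ⟨t₀, ht₀, hbig⟩ := ((eventually_ge_atTop 0).and (hescape.eventually_gt_atTop R)).exists
  obtain ⟨_, ⟨t, ht, rfl⟩, hfr⟩ := inter_frontier_nonempty_of_isPreconnected hray
    ⟨q, ⟨0, Set.self_mem_Ici, by simp⟩, hq⟩
    fun hsub => (hR _ (hsub ⟨t₀, ht₀, rfl⟩)).not_gt hbig
  exact ⟨t, ht, hfr⟩

lemma euclideanHausdorffMeasure_image_le {X Y : Type*} [EMetricSpace X] [EMetricSpace Y]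
    [MeasurableSpace X] [BorelSpace X] [MeasurableSpace Y] [BorelSpace Y] {π : X → Y}
    (hπ : LipschitzWith 1 π) (d : ℕ) (s : Set X) : μHE[d] (π '' s) ≤ μHE[d] s := by
  have hle : μH[d] (π '' s) ≤ μH[d] s := by
    simpa using hπ.hausdorffMeasure_image_le d.cast_nonneg s
  simp_rw [Measure.euclideanHausdorffMeasure_def, Measure.smul_apply]
  gcongr

section MetricProjection

variable {E : Type*} [NormedAddCommGroup E] [InnerProductSpace ℝ E] {A B : Set E} {π : E → E}

/-- `π` maps every point to its nearest point of `A`, in the form of the variational inequality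
characterizing nearest points of convex sets. -/
def IsMetricProjection (A : Set E) (π : E → E) : Prop :=
  ∀ x, π x ∈ A ∧ ∀ a ∈ A, ⟪x - π x, a - π x⟫ ≤ 0

lemma exists_isMetricProjection [CompleteSpace E] (hA : IsClosed A) (hconv : Convex ℝ A)
    (hne : A.Nonempty) : ∃ π, IsMetricProjection A π := by
  choose π hmem hdist using exists_norm_eq_iInf_of_complete_convex hne hA.isComplete hconv
  exact ⟨π, fun x => ⟨hmem x, (norm_eq_iInf_iff_real_inner_le_zero hconv (hmem x)).1 (hdist x)⟩⟩

namespace IsMetricProjection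

lemma eq_of_forall_inner_le_zero (hπ : IsMetricProjection A π) {x q : E} (hq : q ∈ A)
    (hx : ∀ a ∈ A, ⟪x - q, a - q⟫ ≤ 0) : π x = q := by
  have hself : ⟪π x - q, π x - q⟫ = ⟪x - q, π x - q⟫ + ⟪x - π x, q - π x⟫ := by
    simp only [inner_sub_left, inner_sub_right]
    ring
  have hnonpos : ⟪π x - q, π x - q⟫ ≤ 0 := by
    linarith [hx _ (hπ x).1, (hπ x).2 q hq]
  exact sub_eq_zero.1 (inner_self_eq_zero.1 (hnonpos.antisymm real_inner_self_nonneg))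

lemma dist_le (hπ : IsMetricProjection A π) {a : E} (ha : a ∈ A) (x : E) :
    dist x (π x) ≤ dist x a := by
  have hsq : ‖x - a‖ ^ 2 = ‖x - π x‖ ^ 2 - 2 * ⟪x - π x, a - π x⟫ + ‖a - π x‖ ^ 2 := by
    rw [← norm_sub_sq_real, sub_sub_sub_cancel_right]
  rw [dist_eq_norm, dist_eq_norm, ← sq_le_sq₀ (norm_nonneg _) (norm_nonneg _)]
  linarith [(hπ x).2 a ha, sq_nonneg ‖a - π x‖]

lemma lipschitzWith (hπ : IsMetricProjection A π) : LipschitzWith 1 π := by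
  refine LipschitzWith.mk_one fun x y => ?_
  rw [dist_eq_norm, dist_eq_norm]
  have hinner : ‖π x - π y‖ ^ 2 ≤ ⟪x - y, π x - π y⟫ := by
    have hexpand : ⟪x - y, π x - π y⟫ - ⟪π x - π y, π x - π y⟫ =
        -⟪x - π x, π y - π x⟫ - ⟪y - π y, π x - π y⟫ := by
      simp only [inner_sub_left, inner_sub_right]
      ring
    rw [← real_inner_self_eq_norm_sq]
    linarith [(hπ x).2 _ (hπ y).1, (hπ y).2 _ (hπ x).1]
  by_contra! hlt
  nlinarith [real_inner_le_norm (x - y) (π x - π y), norm_nonneg (x - y)]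

end IsMetricProjection

lemma exists_forall_inner_sub_le_zero [CompleteSpace E] (hconv : Convex ℝ A)
    (hint : (interior A).Nonempty) {q : E} (hq : q ∉ interior A) :
    ∃ ν ≠ (0 : E), ∀ a ∈ A, ⟪ν, a - q⟫ ≤ 0 := by
  obtain ⟨g, hg0, hg⟩ := geometric_hahn_banach_of_nonempty_interior_point hconv hq hint
  refine ⟨(InnerProductSpace.toDual ℝ E).symm g, ?_, fun a ha => ?_⟩
  · simpa using hg0
  · rw [InnerProductSpace.toDual_symm_apply, map_sub, sub_nonpos]
    exact hg a ha

/-- Each boundary point of `A` is the projection of the point where its outer normal ray leaves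
`B`. -/
lemma IsMetricProjection.frontier_subset_image_frontier [CompleteSpace E]
    (hπ : IsMetricProjection A π) (hA : IsClosed A) (hconv : Convex ℝ A)
    (hint : (interior A).Nonempty) (hAB : A ⊆ B) (hB : Bornology.IsBounded B) :
    frontier A ⊆ π '' frontier B := by
  intro q hq
  have hqA : q ∈ A := hA.frontier_subset hq
  obtain ⟨ν, hν, hνA⟩ := exists_forall_inner_sub_le_zero hconv hint hq.2
  obtain ⟨t, ht, hfr⟩ := exists_add_smul_mem_frontier hB (hAB hqA) hν
  refine ⟨q + t • ν, hfr, hπ.eq_of_forall_inner_le_zero hqA fun a ha => ?_⟩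
  rw [add_sub_cancel_left, real_inner_smul_left]
  exact mul_nonpos_of_nonneg_of_nonpos ht (hνA a ha)

variable [MeasurableSpace E] [BorelSpace E]

lemma IsMetricProjection.setLIntegral_frontier_le [CompleteSpace E]
    (hπ : IsMetricProjection A π) (hA : IsClosed A) (hconv : Convex ℝ A)
    (hint : (interior A).Nonempty) (hAB : A ⊆ B) (hB : Bornology.IsBounded B) (d : ℕ)
    {G : E → ℝ≥0∞} (hG : Measurable G) :
    ∫⁻ x in frontier A, G x ∂μHE[d] ≤ ∫⁻ x in frontier B, G (π x) ∂μHE[d] := by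
  have hmeas : Measurable π := hπ.lipschitzWith.continuous.measurable
  rw [← lintegral_map hG hmeas]
  refine lintegral_mono' (Measure.le_iff.2 fun s hs => ?_) le_rfl
  rw [Measure.restrict_apply hs, Measure.map_apply hmeas hs, Measure.restrict_apply (hmeas hs)]
  calc μHE[d] (s ∩ frontier A) ≤ μHE[d] (s ∩ π '' frontier B) :=
        measure_mono (Set.inter_subset_inter_right s
          (hπ.frontier_subset_image_frontier hA hconv hint hAB hB))
    _ = μHE[d] (π '' (π ⁻¹' s ∩ frontier B)) := by rw [Set.image_preimage_inter]
    _ ≤ μHE[d] (π ⁻¹' s ∩ frontier B) := euclideanHausdorffMeasure_image_le hπ.lipschitzWith d _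

lemma euclideanHausdorffMeasure_frontier_le [CompleteSpace E] (hA : IsClosed A)
    (hconv : Convex ℝ A) (hint : (interior A).Nonempty) (hAB : A ⊆ B) (hB : Bornology.IsBounded B)
    (d : ℕ) : μHE[d] (frontier A) ≤ μHE[d] (frontier B) := by
  obtain ⟨π, hπ⟩ := exists_isMetricProjection hA hconv (hint.mono interior_subset)
  simpa using hπ.setLIntegral_frontier_le hA hconv hint hAB hB d measurable_one

end MetricProjection

section PolyhedralApproximation

variable {E : Type*} [NormedAddCommGroup E] [InnerProductSpace ℝ E] {K Ω U : Set E}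

namespace Polyhedron

variable {ι : Type*} (P : Polyhedron ι E)

lemma le_slack_of_closedBall_subset [Nonempty ι] {c : E} {r : ℝ} (hr : 0 ≤ r)
    (hball : closedBall c r ⊆ P.carrier) : r ≤ P.slack c := by
  refine le_ciInf fun i => ?_
  have hmem : c + r • P.normal i ∈ closedBall c r := by
    simp [norm_smul, P.norm_normal, abs_of_nonneg hr]
  have hle : ⟪P.normal i, c + r • P.normal i⟫ ≤ P.height i := hball hmem i
  rw [inner_add_right, inner_smul_right, real_inner_self_eq_norm_sq, P.norm_normal] at hle
  linarith

lemma closedBall_slack_subset [Finite ι] (c : E) : closedBall c (P.slack c) ⊆ P.carrier := by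
  intro x hx i
  have hinner : ⟪P.normal i, x - c⟫ ≤ ‖x - c‖ := by
    simpa [P.norm_normal] using real_inner_le_norm (P.normal i) (x - c)
  rw [inner_sub_right] at hinner
  linarith [P.slack_le i c, mem_closedBall_iff_norm.1 hx]

lemma exists_slack_pos [Nonempty ι] (hint : (interior P.carrier).Nonempty) :
    ∃ c, 0 < P.slack c := by
  obtain ⟨c, hc⟩ := hint
  obtain ⟨r, hr, hball⟩ := nhds_basis_closedBall.mem_iff.1 (mem_interior_iff_mem_nhds.1 hc)
  exact ⟨c, hr.trans_le (P.le_slack_of_closedBall_subset hr.le hball)⟩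

lemma nonempty_of_isBounded [Nontrivial E] (hP : Bornology.IsBounded P.carrier) :
    Nonempty ι := by
  by_contra! hι
  exact NormedSpace.unbounded_univ ℝ E (hP.subset fun x _ i => hι.elim i)

lemma frontier_carrier [Finite ι] : frontier P.carrier = ⋃ i, P.facet i := by
  refine subset_antisymm (fun x hx => ?_) (Set.iUnion_subset fun i q hq => ?_)
  · by_contra hfacet
    have hlt : ∀ i, ⟪P.normal i, x⟫ < P.height i := fun i =>
      (P.isClosed_carrier.frontier_subset hx i).lt_of_ne fun heq =>
        hfacet (Set.mem_iUnion.2 ⟨i, P.isClosed_carrier.frontier_subset hx, heq⟩)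
    have hopen : IsOpen {y | ∀ i, ⟪P.normal i, y⟫ < P.height i} := by
      rw [Set.ofPred_forall]
      exact isOpen_iInter_of_finite fun i => isOpen_lt (by fun_prop) continuous_const
    exact hx.2 (mem_interior.2 ⟨_, fun y hy i => (hy i).le, hopen, hlt⟩)
  · refine ⟨subset_closure hq.1, fun hint => ?_⟩
    obtain ⟨r, hr, hball⟩ := nhds_basis_closedBall.mem_iff.1 (mem_interior_iff_mem_nhds.1 hint)
    have : Nonempty ι := ⟨i⟩
    linarith [P.le_slack_of_closedBall_subset hr.le hball, P.slack_le i q, hq.2]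

lemma sum_setLIntegral_facet [MeasurableSpace E] [BorelSpace E] [FiniteDimensional ℝ E] [Fintype ι]
    {c : E} (hc : 0 < P.slack c) (G : E → ℝ≥0∞) :
    ∑ i, ∫⁻ x in P.facet i, G x ∂surfaceMeasure E =
      ∫⁻ x in frontier P.carrier, G x ∂surfaceMeasure E := by
  rw [P.frontier_carrier, lintegral_iUnion₀
    (fun i => (P.isClosed_facet i).measurableSet.nullMeasurableSet)
    (fun i j hij => P.surfaceMeasure_facet_inter_facet hc hij), tsum_fintype]

end Polyhedron

/-- The support function of `K`. It is meaningful only for nonempty bounded `K`. -/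
noncomputable def supportFunction (K : Set E) (ν : E) : ℝ := sSup ((fun x => ⟪ν, x⟫) '' K)

lemma inner_le_supportFunction (hK : IsCompact K) (ν : E) {x : E} (hx : x ∈ K) :
    ⟪ν, x⟫ ≤ supportFunction K ν :=
  le_csSup (hK.image (by fun_prop)).bddAbove ⟨x, hx, rfl⟩

lemma exists_supportFunction_lt_inner [CompleteSpace E] (hK : IsClosed K) (hconv : Convex ℝ K)
    (hne : K.Nonempty) {y : E} (hy : y ∉ K) :
    ∃ ν ∈ sphere (0 : E) 1, supportFunction K ν < ⟪ν, y⟫ := by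
  obtain ⟨π, hπ⟩ := exists_isMetricProjection hK hconv hne
  set v := y - π y
  have hv : 0 < ‖v‖ := norm_pos_iff.2 (sub_ne_zero.2 fun h => hy (h ▸ (hπ y).1))
  refine ⟨‖v‖⁻¹ • v, by simp [norm_smul, hv.ne'], ?_⟩
  calc supportFunction K (‖v‖⁻¹ • v) ≤ ⟪‖v‖⁻¹ • v, π y⟫ := by
        refine csSup_le (hne.image _) (Set.forall_mem_image.2 fun a ha => ?_)
        rw [← sub_nonpos, ← inner_sub_right, real_inner_smul_left]
        exact mul_nonpos_of_nonneg_of_nonpos (by positivity) ((hπ y).2 a ha)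
    _ < ⟪‖v‖⁻¹ • v, y⟫ := by
        rw [← sub_pos, ← inner_sub_right, real_inner_smul_left, real_inner_self_eq_norm_sq]
        positivity

/-- Finitely many supporting half-spaces of `K` exclude `frontier U`; their intersection is
connected and meets `U`, so it cannot leave `U`. -/
lemma exists_polyhedron_subset_subset [ProperSpace E] (hK : IsCompact K) (hconv : Convex ℝ K)
    (hne : K.Nonempty) (hU : IsOpen U) (hbdd : Bornology.IsBounded U) (hKU : K ⊆ U) :
    ∃ (N : Finset E) (P : Polyhedron N E), K ⊆ P.carrier ∧ P.carrier ⊆ U := by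
  have hcover : frontier U ⊆ ⋃ ν ∈ sphere (0 : E) 1, {y | supportFunction K ν < ⟪ν, y⟫} := by
    intro y hy
    have hyK : y ∉ K := fun hyK => (hU.frontier_eq ▸ hy).2 (hKU hyK)
    obtain ⟨ν, hν, hlt⟩ := exists_supportFunction_lt_inner hK.isClosed hconv hne hyK
    exact Set.mem_biUnion hν hlt
  obtain ⟨b, hb, hfin, hbcover⟩ := (isCompact_of_isClosed_isBounded isClosed_frontier
    (hbdd.closure.subset frontier_subset_closure)).elim_finite_subcover_image
      (fun ν _ => isOpen_lt continuous_const (by fun_prop)) hcover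
  let P : Polyhedron hfin.toFinset E :=
    { normal := Subtype.val
      height := fun ν => supportFunction K ν
      norm_normal := fun ν => mem_sphere_zero_iff_norm.1 (hb (hfin.mem_toFinset.1 ν.2))
      normal_injective := Subtype.val_injective }
  have hKP : K ⊆ P.carrier := fun x hx ν => inner_le_supportFunction hK ν hx
  refine ⟨hfin.toFinset, P, hKP, ?_⟩
  by_contra hPU
  obtain ⟨y, hyP, hyU⟩ := inter_frontier_nonempty_of_isPreconnected P.convex_carrier.isPreconnected
    (hne.mono (Set.subset_inter hKP hKU)) hPU
  obtain ⟨ν, hν, hlt⟩ := Set.mem_iUnion₂.1 (hbcover hyU)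
  exact (hyP ⟨ν, hfin.mem_toFinset.2 hν⟩).not_gt hlt

lemma isClosed_setOf_ball_subset {X : Type*} [PseudoMetricSpace X] (s : Set X) (δ : ℝ) :
    IsClosed {x | ball x δ ⊆ s} := by
  have heq : {x | ball x δ ⊆ s} = ⋂ y ∈ sᶜ, {x | δ ≤ dist y x} := by
    ext x
    simp only [Set.mem_ofPred_eq, Set.subset_def, mem_ball, Set.mem_iInter, Set.mem_compl_iff]
    exact forall_congr' fun y => by rw [← not_lt, not_imp_not]
  rw [heq]
  exact isClosed_biInter fun y _ => isClosed_le continuous_const (by fun_prop)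

lemma convex_setOf_ball_subset {F : Type*} [NormedAddCommGroup F] [NormedSpace ℝ F] {s : Set F}
    (hs : Convex ℝ s) (δ : ℝ) : Convex ℝ {x | ball x δ ⊆ s} := by
  intro x hx y hy a b ha hb hab z hz
  set v := z - (a • x + b • y)
  have hv : ‖v‖ < δ := mem_ball_iff_norm.1 hz
  have hcombo : a • (x + v) + b • (y + v) = z := by
    rw [smul_add, smul_add, add_add_add_comm, ← add_smul, hab, one_smul, add_sub_cancel]
  rw [← hcombo]
  exact hs (hx (by simpa using hv)) (hy (by simpa using hv)) ha hb hab

lemma exists_isCompact_convex_superset [ProperSpace E] (hΩ : IsOpen Ω)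
    (hbdd : Bornology.IsBounded Ω) (hconv : Convex ℝ Ω) (hK : IsCompact K) (hKΩ : K ⊆ Ω) :
    ∃ L, IsCompact L ∧ Convex ℝ L ∧ K ⊆ L ∧ L ⊆ Ω := by
  obtain ⟨δ, hδ, hthick⟩ := hK.exists_thickening_subset_open hΩ hKΩ
  have hsub : {x | ball x δ ⊆ Ω} ⊆ Ω := fun x hx => hx (mem_ball_self hδ)
  exact ⟨{x | ball x δ ⊆ Ω},
    isCompact_of_isClosed_isBounded (isClosed_setOf_ball_subset Ω δ) (hbdd.subset hsub),
    convex_setOf_ball_subset hconv δ, fun x hx => (ball_subset_thickening hx δ).trans hthick, hsub⟩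

lemma exists_polyhedron_subset_of_isCompact [ProperSpace E] (hΩ : IsOpen Ω)
    (hbdd : Bornology.IsBounded Ω) (hconv : Convex ℝ Ω) (hne : Ω.Nonempty) (hK : IsCompact K)
    (hKΩ : K ⊆ Ω) {δ : ℝ} (hδ : 0 < δ) :
    ∃ (N : Finset E) (P : Polyhedron N E), K ⊆ P.carrier ∧ P.carrier ⊆ Ω ∧
      Ω ⊆ thickening δ P.carrier := by
  obtain ⟨t, htΩ, htfin, hcover⟩ :=
    exists_finite_cover_balls_of_isCompact_closure hbdd.isCompact_closure hδ
  obtain ⟨L, hL, hLconv, hKL, hLΩ⟩ := exists_isCompact_convex_superset hΩ hbdd hconv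
    (hK.union htfin.isCompact) (Set.union_subset hKΩ htΩ)
  have htL : t ⊆ L := Set.subset_union_right.trans hKL
  have htne : t.Nonempty := by
    obtain ⟨x, hx⟩ := hne
    obtain ⟨y, hy, -⟩ := Set.mem_iUnion₂.1 (hcover hx)
    exact ⟨y, hy⟩
  obtain ⟨N, P, hLP, hPΩ⟩ :=
    exists_polyhedron_subset_subset hL hLconv (htne.mono htL) hΩ hbdd hLΩ
  refine ⟨N, P, (Set.subset_union_left.trans hKL).trans hLP, hPΩ, hcover.trans ?_⟩
  exact Set.iUnion₂_subset fun y hy => ball_subset_thickening (hLP (htL hy)) δ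

end PolyhedralApproximation

lemma frontier_closure_of_isOpen_of_convex {F : Type*} [NormedAddCommGroup F] [NormedSpace ℝ F]
    {s : Set F} (hs : IsOpen s) (hconv : Convex ℝ s) : frontier (closure s) = frontier s := by
  obtain rfl | hne := s.eq_empty_or_nonempty
  · simp
  rw [frontier, frontier, closure_closure, hconv.interior_closure_eq_interior_of_nonempty_interior
    (hs.interior_eq.symm ▸ hne)]

section Inradius

/-- The supremum of the radii of the closed balls contained in `A`. Closed balls of negative radius
are empty and contribute `0`. -/
noncomputable def inradius {X : Type*} [PseudoMetricSpace X] (A : Set X) : ℝ≥0∞ :=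
  ⨆ (c : X) (r : ℝ) (_ : closedBall c r ⊆ A), ENNReal.ofReal r

lemma ofReal_le_inradius {X : Type*} [PseudoMetricSpace X] {A : Set X} {c : X} {r : ℝ}
    (hball : closedBall c r ⊆ A) : ENNReal.ofReal r ≤ inradius A :=
  le_iSup_of_le c (le_iSup₂_of_le r hball le_rfl)

lemma inradius_mono {X : Type*} [PseudoMetricSpace X] {A B : Set X} (hAB : A ⊆ B) :
    inradius A ≤ inradius B :=
  iSup_le fun _ => iSup₂_le fun _ hball => ofReal_le_inradius (hball.trans hAB)

lemma inradius_pos_of_isOpen {X : Type*} [PseudoMetricSpace X] {A : Set X} (hA : IsOpen A)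
    (hne : A.Nonempty) : 0 < inradius A := by
  obtain ⟨c, hc⟩ := hne
  obtain ⟨r, hr, hball⟩ := nhds_basis_closedBall.mem_iff.1 (hA.mem_nhds hc)
  exact (ENNReal.ofReal_pos.2 hr).trans_le (ofReal_le_inradius hball)

lemma inradius_le_ediam {F : Type*} [NormedAddCommGroup F] [NormedSpace ℝ F] [Nontrivial F]
    (A : Set F) : inradius A ≤ ediam A := by
  refine iSup_le fun c => iSup₂_le fun r hball => ?_
  obtain hr | hr := le_total r 0
  · simp [ENNReal.ofReal_of_nonpos hr]
  obtain ⟨v, hv⟩ := exists_norm_eq F hr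
  calc ENNReal.ofReal r = edist (c + v) c := by rw [edist_dist, dist_self_add_left, hv]
    _ ≤ ediam A := edist_le_ediam_of_mem (hball (by simp [hv])) (hball (mem_closedBall_self hr))

end Inradius

section InradiusEstimates

variable {E : Type*} [NormedAddCommGroup E] [InnerProductSpace ℝ E] [FiniteDimensional ℝ E]
  [Nontrivial E] [MeasurableSpace E] [BorelSpace E] {Ω U : Set E}

lemma ofReal_mul_surfaceMeasure_frontier_le_of_isOpen (hΩ : IsOpen Ω) (hconv : Convex ℝ Ω)
    (hU : IsOpen U) (hbdd : Bornology.IsBounded U) (hΩU : closure Ω ⊆ U) {c : E} {r : ℝ}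
    (hr : 0 ≤ r) (hball : closedBall c r ⊆ Ω) :
    ENNReal.ofReal r * surfaceMeasure E (frontier Ω) ≤ finrank ℝ E * volume U := by
  have hc : c ∈ Ω := hball (mem_closedBall_self hr)
  obtain ⟨N, P, hΩP, hPU⟩ := exists_polyhedron_subset_subset
    (hbdd.subset (subset_closure.trans hΩU)).isCompact_closure hconv.closure
    ⟨c, subset_closure hc⟩ hU hbdd hΩU
  have hP : Bornology.IsBounded P.carrier := hbdd.subset hPU
  have : Nonempty N := P.nonempty_of_isBounded hP
  have hperimeter : surfaceMeasure E (frontier Ω) ≤ ∑ i, surfaceMeasure E (P.facet i) := calc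
    surfaceMeasure E (frontier Ω) = surfaceMeasure E (frontier (closure Ω)) := by
      rw [frontier_closure_of_isOpen_of_convex hΩ hconv]
    _ ≤ surfaceMeasure E (frontier P.carrier) :=
      euclideanHausdorffMeasure_frontier_le isClosed_closure hconv.closure
        ⟨c, interior_mono subset_closure (hΩ.interior_eq.symm ▸ hc)⟩ hΩP hP _
    _ ≤ ∑ i, surfaceMeasure E (P.facet i) := by
      rw [P.frontier_carrier]
      exact measure_iUnion_fintype_le _ _
  calc ENNReal.ofReal r * surfaceMeasure E (frontier Ω)
      ≤ ENNReal.ofReal r * ∑ i, surfaceMeasure E (P.facet i) := by gcongr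
    _ ≤ finrank ℝ E * volume P.carrier := P.ofReal_mul_sum_surfaceMeasure_facet_le hr
        (P.le_slack_of_closedBall_subset hr (hball.trans (subset_closure.trans hΩP)))
        hP.measure_lt_top.ne
    _ ≤ finrank ℝ E * volume U := by gcongr

theorem inradius_mul_surfaceMeasure_frontier_le (hΩ : IsOpen Ω) (hbdd : Bornology.IsBounded Ω)
    (hconv : Convex ℝ Ω) :
    inradius Ω * surfaceMeasure E (frontier Ω) ≤ finrank ℝ E * volume Ω := by
  have hvol : volume (closure Ω) = volume Ω :=
    measure_closure_of_null_frontier (hconv.addHaar_frontier volume)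
  simp only [inradius, ENNReal.iSup_mul]
  refine iSup_le fun c => iSup₂_le fun r hball => ?_
  obtain hr | hr := lt_or_ge r 0
  · simp [ENNReal.ofReal_of_nonpos hr.le]
  have hlim : Tendsto (fun δ => finrank ℝ E * volume (thickening δ (closure Ω))) (𝓝[>] 0)
      (𝓝 (finrank ℝ E * volume Ω)) := by
    rw [← hvol]
    refine ENNReal.Tendsto.const_mul (tendsto_measure_thickening_of_isClosed
      ⟨1, one_pos, hbdd.closure.thickening.measure_lt_top.ne⟩ isClosed_closure)
      (.inr (ENNReal.natCast_ne_top _))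
  refine ge_of_tendsto hlim (eventually_mem_nhdsWithin.mono fun δ hδ => ?_)
  exact ofReal_mul_surfaceMeasure_frontier_le_of_isOpen hΩ hconv isOpen_thickening
    hbdd.closure.thickening (self_subset_thickening hδ _) hr hball

lemma surfaceMeasure_frontier_ne_top (hΩ : IsOpen Ω) (hbdd : Bornology.IsBounded Ω)
    (hconv : Convex ℝ Ω) : surfaceMeasure E (frontier Ω) ≠ ∞ := by
  obtain rfl | hne := Ω.eq_empty_or_nonempty
  · simp
  exact fun htop => (ENNReal.mul_lt_top (ENNReal.natCast_lt_top _) hbdd.measure_lt_top).not_ge <|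
    (ENNReal.mul_top (inradius_pos_of_isOpen hΩ hne).ne').symm.trans_le <|
      htop ▸ inradius_mul_surfaceMeasure_frontier_le hΩ hbdd hconv

end InradiusEstimates

lemma exists_polyhedron_setLIntegral_frontier_le {E : Type*} [NormedAddCommGroup E]
    [InnerProductSpace ℝ E] [FiniteDimensional ℝ E] [MeasurableSpace E] [BorelSpace E]
    {K Ω : Set E} (hΩ : IsOpen Ω) (hbdd : Bornology.IsBounded Ω) (hconv : Convex ℝ Ω)
    (hne : Ω.Nonempty) (hK : IsCompact K) (hKΩ : K ⊆ Ω) {f : E → ℝ} (hf : Continuous f) (d : ℕ)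
    {ε : ℝ} (hε : 0 < ε) :
    ∃ (N : Finset E) (P : Polyhedron N E), K ⊆ P.carrier ∧ P.carrier ⊆ Ω ∧
      (interior P.carrier).Nonempty ∧
      ∫⁻ x in frontier P.carrier, ENNReal.ofReal (f x) ∂μHE[d] ≤
        ∫⁻ x in frontier Ω, ENNReal.ofReal (f x) ∂μHE[d] +
          ENNReal.ofReal ε * μHE[d] (frontier Ω) := by
  obtain ⟨c, hc⟩ := hne
  obtain ⟨ρ, hρ, hball⟩ := nhds_basis_closedBall.mem_iff.1 (hΩ.mem_nhds hc)
  obtain ⟨δ, hδ, hfδ⟩ := uniformContinuousOn_iff.1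
    (hbdd.isCompact_closure.uniformContinuousOn_of_continuous hf.continuousOn) ε hε
  obtain ⟨N, P, hKP, hPΩ, hΩP⟩ := exists_polyhedron_subset_of_isCompact hΩ hbdd hconv ⟨c, hc⟩
    (hK.union (isCompact_closedBall c ρ)) (Set.union_subset hKΩ hball) (half_pos hδ)
  have hint : (interior P.carrier).Nonempty :=
    ⟨c, mem_interior_iff_mem_nhds.2 (mem_of_superset (closedBall_mem_nhds c hρ)
      (Set.subset_union_right.trans hKP))⟩
  obtain ⟨π, hπ⟩ := exists_isMetricProjection P.isClosed_carrier P.convex_carrier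
    (hint.mono interior_subset)
  have hfπ : ∀ x ∈ frontier Ω, f (π x) ≤ f x + ε := by
    intro x hx
    have hxΩ : x ∈ closure Ω := frontier_subset_closure hx
    have hxP : x ∈ thickening δ P.carrier :=
      cthickening_subset_thickening' hδ (half_lt_self hδ) _
        (closure_thickening_subset_cthickening _ _ (closure_mono hΩP hxΩ))
    obtain ⟨z, hz, hxz⟩ := mem_thickening_iff.1 hxP
    have hdist := hfδ x hxΩ (π x) (subset_closure (hPΩ (hπ x).1)) ((hπ.dist_le hz x).trans_lt hxz)
    linarith [(abs_sub_lt_iff.1 (Real.dist_eq _ _ ▸ hdist)).2]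
  refine ⟨N, P, Set.subset_union_left.trans hKP, hPΩ, hint, ?_⟩
  calc ∫⁻ x in frontier P.carrier, ENNReal.ofReal (f x) ∂μHE[d]
      ≤ ∫⁻ x in frontier Ω, ENNReal.ofReal (f (π x)) ∂μHE[d] :=
        hπ.setLIntegral_frontier_le P.isClosed_carrier P.convex_carrier hint hPΩ hbdd d
          hf.measurable.ennreal_ofReal
    _ ≤ ∫⁻ x in frontier Ω, (ENNReal.ofReal (f x) + ENNReal.ofReal ε) ∂μHE[d] :=
        setLIntegral_mono' isClosed_frontier.measurableSet fun x hx =>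
          (ENNReal.ofReal_le_ofReal (hfπ x hx)).trans ENNReal.ofReal_add_le
    _ = ∫⁻ x in frontier Ω, ENNReal.ofReal (f x) ∂μHE[d] +
          ENNReal.ofReal ε * μHE[d] (frontier Ω) := by
        rw [lintegral_add_right _ measurable_const, setLIntegral_const]

section SubharmonicEstimates

variable {n : ℕ} [NeZero n] {f : EuclideanSpace ℝ (Fin n) → ℝ}
  {Ω K : Set (EuclideanSpace ℝ (Fin n))}

lemma Polyhedron.setLIntegral_carrier_le_inradius_mul {ι : Type*} [Finite ι]
    {P : Polyhedron ι (EuclideanSpace ℝ (Fin n))} (hint : (interior P.carrier).Nonempty)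
    (hP : Bornology.IsBounded P.carrier) (hΩ : IsOpen Ω) (hPΩ : P.carrier ⊆ Ω)
    (hsub : IsSubharmonicOn f Ω) (hf : Continuous f) (hf₀ : 0 ≤ f) :
    ∫⁻ x in P.carrier, ENNReal.ofReal (f x) ≤ inradius P.carrier *
      ∫⁻ x in frontier P.carrier, ENNReal.ofReal (f x)
        ∂surfaceMeasure (EuclideanSpace ℝ (Fin n)) := by
  have := Fintype.ofFinite ι
  have : Nonempty ι := P.nonempty_of_isBounded hP
  obtain ⟨c, hc⟩ := P.exists_slack_pos hint
  obtain ⟨m, -, hmax⟩ := (isCompact_of_isClosed_isBounded P.isClosed_carrier hP).exists_isMaxOn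
    (hint.mono interior_subset) P.continuous_slack.continuousOn
  have hm₀ : 0 < P.slack m := hc.trans_le (hmax (P.mem_carrier_iff.2 hc.le))
  have hle : ∀ x, P.slack x ≤ P.slack m := fun x => by
    by_cases hx : x ∈ P.carrier
    · exact hmax hx
    · exact (not_le.1 (mt P.mem_carrier_iff.2 hx)).le.trans hm₀.le
  have hfacet : ∀ i, surfaceMeasure (EuclideanSpace ℝ (Fin n)) (P.facet i) ≠ ∞ := by
    have hsum := (P.ofReal_mul_sum_surfaceMeasure_facet_le hc.le le_rfl
      hP.measure_lt_top.ne).trans_lt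
        (ENNReal.mul_lt_top (ENNReal.natCast_lt_top _) hP.measure_lt_top)
    have hfin := ENNReal.lt_top_of_mul_ne_top_right hsum.ne (ENNReal.ofReal_pos.2 hc).ne'
    exact fun i => (ENNReal.sum_lt_top.1 hfin i (Finset.mem_univ i)).ne
  calc ∫⁻ x in P.carrier, ENNReal.ofReal (f x)
      ≤ ENNReal.ofReal (P.slack m) * ∑ i, ∫⁻ x in P.facet i, ENNReal.ofReal (f x)
          ∂surfaceMeasure (EuclideanSpace ℝ (Fin n)) :=
        P.setLIntegral_carrier_le hsub hΩ hf hf₀ hPΩ hP hm₀ hle hfacet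
    _ = ENNReal.ofReal (P.slack m) * ∫⁻ x in frontier P.carrier, ENNReal.ofReal (f x)
          ∂surfaceMeasure (EuclideanSpace ℝ (Fin n)) := by rw [P.sum_setLIntegral_facet hc]
    _ ≤ _ := by
        gcongr
        exact ofReal_le_inradius (P.closedBall_slack_subset m)

lemma setLIntegral_le_inradius_mul_of_isCompact (hΩ : IsOpen Ω) (hbdd : Bornology.IsBounded Ω)
    (hconv : Convex ℝ Ω) (hsub : IsSubharmonicOn f Ω) (hf : Continuous f) (hf₀ : 0 ≤ f)
    (hK : IsCompact K) (hKΩ : K ⊆ Ω) :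
    ∫⁻ x in K, ENNReal.ofReal (f x) ≤ inradius Ω *
      ∫⁻ x in frontier Ω, ENNReal.ofReal (f x) ∂surfaceMeasure (EuclideanSpace ℝ (Fin n)) := by
  obtain rfl | hne := Ω.eq_empty_or_nonempty
  · simp [Set.subset_empty_iff.1 hKΩ]
  set I := ∫⁻ x in frontier Ω, ENNReal.ofReal (f x) ∂surfaceMeasure (EuclideanSpace ℝ (Fin n))
  set σ := surfaceMeasure (EuclideanSpace ℝ (Fin n)) (frontier Ω)
  have hlim : Tendsto (fun ε => inradius Ω * (I + ENNReal.ofReal ε * σ)) (𝓝[>] 0)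
      (𝓝 (inradius Ω * I)) := by
    have hzero : Tendsto ENNReal.ofReal (𝓝[>] 0) (𝓝 0) := by
      simpa using (ENNReal.continuous_ofReal.tendsto 0).mono_left nhdsWithin_le_nhds
    have herr := ENNReal.Tendsto.mul_const hzero
      (.inr (surfaceMeasure_frontier_ne_top hΩ hbdd hconv))
    have hinr : inradius Ω ≠ ∞ := ne_top_of_le_ne_top hbdd.ediam_ne_top (inradius_le_ediam Ω)
    simpa using ENNReal.Tendsto.const_mul ((tendsto_const_nhds (x := I)).add herr) (.inr hinr)
  refine ge_of_tendsto hlim (eventually_mem_nhdsWithin.mono fun ε hε => ?_)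
  obtain ⟨N, P, hKP, hPΩ, hint, hfrontier⟩ := exists_polyhedron_setLIntegral_frontier_le hΩ hbdd
    hconv hne hK hKΩ hf (finrank ℝ (EuclideanSpace ℝ (Fin n)) - 1) hε
  calc ∫⁻ x in K, ENNReal.ofReal (f x) ≤ ∫⁻ x in P.carrier, ENNReal.ofReal (f x) :=
        lintegral_mono_set hKP
    _ ≤ inradius P.carrier * ∫⁻ x in frontier P.carrier, ENNReal.ofReal (f x)
          ∂surfaceMeasure (EuclideanSpace ℝ (Fin n)) :=
        P.setLIntegral_carrier_le_inradius_mul hint (hbdd.subset hPΩ) hΩ hPΩ hsub hf hf₀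
    _ ≤ inradius Ω * (I + ENNReal.ofReal ε * σ) := by
        gcongr
        exact inradius_mono hPΩ

theorem setLIntegral_le_inradius_mul_setLIntegral_frontier (hΩ : IsOpen Ω)
    (hbdd : Bornology.IsBounded Ω) (hconv : Convex ℝ Ω) (hsub : IsSubharmonicOn f Ω)
    (hf : Continuous f) (hf₀ : 0 ≤ f) :
    ∫⁻ x in Ω, ENNReal.ofReal (f x) ≤ inradius Ω *
      ∫⁻ x in frontier Ω, ENNReal.ofReal (f x) ∂surfaceMeasure (EuclideanSpace ℝ (Fin n)) := by
  have := IsLocallyFiniteMeasure.withDensity_ofReal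
    (μ := (volume : Measure (EuclideanSpace ℝ (Fin n)))) hf
  rw [← withDensity_apply _ hΩ.measurableSet, hΩ.measure_eq_iSup_isCompact]
  refine iSup₂_le fun K hKΩ => iSup_le fun hK => ?_
  rw [withDensity_apply _ hK.measurableSet]
  exact setLIntegral_le_inradius_mul_of_isCompact hΩ hbdd hconv hsub hf hf₀ hK hKΩ

lemma setLAverage_le_mul_setLAverage_frontier (hΩ : IsOpen Ω) (hbdd : Bornology.IsBounded Ω)
    (hconv : Convex ℝ Ω) (hne : Ω.Nonempty) (hsub : IsSubharmonicOn f Ω) (hf : Continuous f)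
    (hf₀ : 0 ≤ f) :
    ⨍⁻ x in Ω, ENNReal.ofReal (f x) ∂volume ≤
      n * ⨍⁻ x in frontier Ω, ENNReal.ofReal (f x)
        ∂surfaceMeasure (EuclideanSpace ℝ (Fin n)) := by
  set σ := surfaceMeasure (EuclideanSpace ℝ (Fin n))
  have hvol₀ : volume Ω ≠ 0 := (hΩ.measure_pos volume hne).ne'
  have hinradius : inradius Ω ≤ n * volume Ω / σ (frontier Ω) := by
    rw [ENNReal.le_div_iff_mul_le
      (.inr (mul_ne_zero (NeZero.ne _) hvol₀))
      (.inr (ENNReal.mul_ne_top (ENNReal.natCast_ne_top n) hbdd.measure_lt_top.ne))]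
    simpa using inradius_mul_surfaceMeasure_frontier_le hΩ hbdd hconv
  rw [setLAverage_eq, setLAverage_eq]
  refine ENNReal.div_le_of_le_mul ?_
  calc ∫⁻ x in Ω, ENNReal.ofReal (f x)
      ≤ inradius Ω * ∫⁻ x in frontier Ω, ENNReal.ofReal (f x) ∂σ :=
        setLIntegral_le_inradius_mul_setLIntegral_frontier hΩ hbdd hconv hsub hf hf₀
    _ ≤ n * volume Ω / σ (frontier Ω) * ∫⁻ x in frontier Ω, ENNReal.ofReal (f x) ∂σ := by gcongr
    _ = n * ((∫⁻ x in frontier Ω, ENNReal.ofReal (f x) ∂σ) / σ (frontier Ω)) * volume Ω := by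
        simp only [div_eq_mul_inv]
        ring

lemma setAverage_le_mul_setAverage_frontier (hΩ : IsOpen Ω) (hbdd : Bornology.IsBounded Ω)
    (hconv : Convex ℝ Ω) (hne : Ω.Nonempty) (hsub : IsSubharmonicOn f Ω) (hf : Continuous f)
    (hf₀ : 0 ≤ f) :
    ⨍ x in Ω, f x ≤ n * ⨍ x in frontier Ω, f x ∂surfaceMeasure (EuclideanSpace ℝ (Fin n)) := by
  have haverage : ∀ (μ : Measure (EuclideanSpace ℝ (Fin n))) (s : Set (EuclideanSpace ℝ (Fin n))),
      (⨍⁻ x in s, ENNReal.ofReal (f x) ∂μ).toReal = ⨍ x in s, f x ∂μ := fun μ s => by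
    rw [toReal_setLAverage hf.measurable.ennreal_ofReal.aemeasurable
      (.of_forall fun _ => ENNReal.ofReal_ne_top)]
    simp only [ENNReal.toReal_ofReal (hf₀ _)]
  have hfrontier : IsCompact (frontier Ω) :=
    hbdd.isCompact_closure.of_isClosed_subset isClosed_frontier frontier_subset_closure
  have hfin : ∫⁻ x in frontier Ω, ENNReal.ofReal (f x)
      ∂surfaceMeasure (EuclideanSpace ℝ (Fin n)) < ∞ :=
    setLIntegral_lt_top_of_isCompact (surfaceMeasure_frontier_ne_top hΩ hbdd hconv) hfrontier
      (continuous_real_toNNReal.comp hf)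
  have hle := ENNReal.toReal_mono
    (ENNReal.mul_ne_top (ENNReal.natCast_ne_top n) (setLAverage_lt_top hfin.ne).ne)
    (setLAverage_le_mul_setLAverage_frontier hΩ hbdd hconv hne hsub hf hf₀)
  rwa [ENNReal.toReal_mul, ENNReal.toReal_natCast, haverage, haverage] at hle

end SubharmonicEstimates

lemma setAverage_nnreal_smul_measure {α F : Type*} [MeasurableSpace α] [NormedAddCommGroup F]
    [NormedSpace ℝ F] (μ : Measure α) {c : NNReal} (hc : c ≠ 0) (s : Set α) (f : α → F) :
    ⨍ x in s, f x ∂(c • μ) = ⨍ x in s, f x ∂μ := by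
  rw [setAverage_eq, setAverage_eq, Measure.restrict_smul, integral_smul_nnreal_measure,
    measureReal_nnreal_smul_apply, mul_inv_rev, NNReal.smul_def, mul_smul,
    inv_smul_smul₀ (NNReal.coe_ne_zero.2 hc)]

lemma setAverage_surfaceMeasure {n : ℕ} [NeZero n] {F : Type*} [NormedAddCommGroup F]
    [NormedSpace ℝ F] (s : Set (EuclideanSpace ℝ (Fin n))) (f : EuclideanSpace ℝ (Fin n) → F) :
    ⨍ x in s, f x ∂surfaceMeasure (EuclideanSpace ℝ (Fin n)) =
      ⨍ x in s, f x ∂μH[(n : ℝ) - 1] := by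
  have hcast : ((n - 1 : ℕ) : ℝ) = n - 1 := by rw [Nat.cast_pred (NeZero.pos n)]
  rw [surfaceMeasure, finrank_euclideanSpace_fin, Measure.euclideanHausdorffMeasure_def,
    setAverage_nnreal_smul_measure _
      (Measure.addHaarScalarFactor_volume_hausdorffMeasure_ne_zero (n - 1)), hcast]

lemma exists_continuous_nonneg_eqOn_closure {X : Type*} [TopologicalSpace X] [NormalSpace X]
    {s : Set X} {f : X → ℝ} (hf : ContinuousOn f (closure s)) (hf₀ : ∀ x ∈ s, 0 ≤ f x) :
    ∃ F : X → ℝ, Continuous F ∧ 0 ≤ F ∧ Set.EqOn F f (closure s) := by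
  obtain ⟨g, hg⟩ := ContinuousMap.exists_restrict_eq isClosed_closure
    ⟨(closure s).domRestrict f, continuousOn_iff_continuous_domRestrict.1 hf⟩
  refine ⟨fun x => max (g x) 0, by fun_prop, fun x => le_max_right _ _, fun x hx => ?_⟩
  have hgx : g x = f x := congrArg (fun k : C(closure s, ℝ) => k ⟨x, hx⟩) hg
  exact hgx ▸ max_eq_left (hgx ▸ le_on_closure hf₀ continuousOn_const hf hx)

lemma le_sq_add_self_div_sqrt_add_two {x : ℝ} (hx : 1 ≤ x) : x ≤ (x ^ 2 + x) / √(x + 2) := by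
  have hsqrt : √(x + 2) ≤ x + 1 := Real.sqrt_le_iff.2 ⟨by positivity, by nlinarith⟩
  rw [le_div_iff₀ (by positivity)]
  nlinarith

theorem hermite_hadamard_subharmonic_even_general (n : ℕ) (hn0 : 0 < n)
    (Ω : Set (EuclideanSpace ℝ (Fin n))) (hΩo : IsOpen Ω) (hΩb : Bornology.IsBounded Ω)
    (hΩc : Convex ℝ Ω) (hΩne : Ω.Nonempty) (f : EuclideanSpace ℝ (Fin n) → ℝ)
    (hfc : ContinuousOn f (closure Ω)) (hf₀ : ∀ x ∈ Ω, 0 ≤ f x) (hsub : IsSubharmonicOn f Ω) :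
    ⨍ x in Ω, f x ≤ n * ⨍ x in frontier Ω, f x ∂μH[(n : ℝ) - 1] := by
  have : NeZero n := ⟨hn0.ne'⟩
  obtain ⟨F, hF, hF₀, hFf⟩ := exists_continuous_nonneg_eqOn_closure hfc hf₀
  have hFsub : IsSubharmonicOn F Ω := hsub.congr_of_isOpen hΩo (hFf.mono subset_closure)
  calc ⨍ x in Ω, f x = ⨍ x in Ω, F x :=
        setAverage_congr_fun hΩo.measurableSet
          (.of_forall fun x hx => (hFf (subset_closure hx)).symm)
    _ ≤ n * ⨍ x in frontier Ω, F x ∂surfaceMeasure (EuclideanSpace ℝ (Fin n)) :=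
        setAverage_le_mul_setAverage_frontier hΩo hΩb hΩc hΩne hFsub hF hF₀
    _ = n * ⨍ x in frontier Ω, f x ∂μH[(n : ℝ) - 1] := by
        rw [setAverage_surfaceMeasure, setAverage_congr_fun isClosed_frontier.measurableSet
          (.of_forall fun x hx => hFf (frontier_subset_closure hx))]

/-- Hermite–Hadamard inequality for positive subharmonic functions on convex domains,
even-dimensional case, with constant `(n² + n)/√(n + 2)`. -/
theorem hermite_hadamard_subharmonic_even
    (n : ℕ) (hn : Even n) (hn0 : 0 < n)
    (Ω : Set (EuclideanSpace ℝ (Fin n)))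
    (hΩo : IsOpen Ω) (hΩb : Bornology.IsBounded Ω)
    (hΩc : Convex ℝ Ω) (hΩne : (interior Ω).Nonempty)
    (f : EuclideanSpace ℝ (Fin n) → ℝ)
    (hfc : ContinuousOn f (closure Ω))
    (hfpos : ∀ x ∈ Ω, 0 < f x)
    (hf1 : ∀ x ∈ Ω, DifferentiableAt ℝ f x)
    (hf2 : ∀ x ∈ Ω, DifferentiableAt ℝ (fun y => fderiv ℝ f y) x)
    (hsub : ∀ x ∈ Ω, 0 ≤ laplacian f x) :
    (1 / (volume Ω).toReal) * ∫ x in Ω, f x ≤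
      (((n : ℝ) ^ 2 + n) / Real.sqrt ((n : ℝ) + 2)) *
        ((1 / (μH[(n : ℝ) - 1] (frontier Ω)).toReal) *
          ∫ x in frontier Ω, f x ∂μH[(n : ℝ) - 1]) := by
  have hsubharmonic : IsSubharmonicOn f Ω := fun x hx =>
    ⟨⟨(hΩo.eventually_mem hx).mono hf1, hf2 x hx⟩, hsub x hx⟩
  have hmean := hermite_hadamard_subharmonic_even_general n hn0 Ω hΩo hΩb hΩc
    (hΩne.mono interior_subset) f hfc (fun x hx => (hfpos x hx).le) hsubharmonic
  simp only [setAverage_eq, smul_eq_mul, measureReal_def, ← one_div] at hmean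
  refine hmean.trans (mul_le_mul_of_nonneg_right
    (le_sq_add_self_div_sqrt_add_two (Nat.one_le_cast.2 hn0)) (mul_nonneg (by positivity) ?_))
  exact setIntegral_nonneg isClosed_frontier.measurableSet fun x hx =>
    le_on_closure (fun y hy => (hfpos y hy).le) continuousOn_const hfc (frontier_subset_closure hx)
end

section
/- Let Ω₁, Ω₂ ⊂ ℝⁿ be bounded open convex sets with nonempty interior such that Ω₂ ⊆ Ω₁. Then (|∂Ω₁|/|Ω₁|) · (|Ω₂|/|∂Ω₂|) ≤ n. -/
open MeasureTheory

/-!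
For a bounded convex set `Ω` of inradius `ρ` in dimension `n`,
`ρ * |∂Ω| ≤ n * |Ω|` and `|Ω| ≤ ρ * |∂Ω|`.
As the inradius is monotone, the first inequality for `Ω₁` and the second one for `Ω₂` give
`|∂Ω₁| * |Ω₂| ≤ ρ₁ * |∂Ω₁| * |∂Ω₂| ≤ n * |Ω₁| * |∂Ω₂|`.

If `Ω` is a polytope, the pyramids over its facets with apex the incentre have height at least `ρ`
and are almost disjoint subsets of `Ω`, which yields the first inequality. For the second one,
each point of `Ω` projects orthogonally to the facet nearest to it, so that `Ω` is covered by prisms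
of height at most `ρ` over its facets. The general case follows by approximating `Ω` by polytopes,
since the surface area is monotone on convex sets.
-/

open Filter Metric Module Set Topology
open scoped ENNReal NNReal InnerProductSpace Pointwise

section Slicing

variable {E : Type*} [NormedAddCommGroup E] [InnerProductSpace ℝ E]

/-- The prism over a base `F` in the hyperplane `⟪u, y⟫ = h` of unit normal `u`: the points whose
height `⟪u, x⟫` lies in `I` and whose orthogonal projection to the hyperplane lies in `F`. -/
def prism (u : E) (h : ℝ) (I : Set ℝ) (F : Set E) : Set E :=
  {x | ⟪u, x⟫_ℝ ∈ I ∧ x + (h - ⟪u, x⟫_ℝ) • u ∈ F}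

/-- The open pyramid with apex `0` over a base `F` in the hyperplane `⟪u, y⟫ = h`, described through
the radial projection to that hyperplane. -/
def pyramid (u : E) (h : ℝ) (F : Set E) : Set E :=
  {x | ⟪u, x⟫_ℝ ∈ Ioo 0 h ∧ (h / ⟪u, x⟫_ℝ) • x ∈ F}

theorem prism_inter_inner_eq {u : E} (hu : ‖u‖ = 1) {h : ℝ} {F : Set E}
    (hF : ∀ y ∈ F, ⟪u, y⟫_ℝ = h) {I : Set ℝ} {s : ℝ} (hs : s ∈ I) :
    prism u h I F ∩ {y | ⟪u, y⟫_ℝ = s} = (· + (h - s) • u) ⁻¹' F := by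
  ext x
  constructor
  · rintro ⟨⟨-, hx⟩, rfl⟩
    exact hx
  · intro hx
    have height_eq : ⟪u, x⟫_ℝ = s := by
      have := hF _ hx
      rw [inner_add_right, inner_smul_right, real_inner_self_eq_norm_sq, hu] at this
      linarith
    exact ⟨⟨height_eq ▸ hs, height_eq ▸ hx⟩, height_eq⟩

theorem pyramid_inter_inner_eq {u : E} {h : ℝ} {F : Set E} (hF : ∀ y ∈ F, ⟪u, y⟫_ℝ = h) {s : ℝ}
    (hs : s ∈ Ioo 0 h) : pyramid u h F ∩ {y | ⟪u, y⟫_ℝ = s} = (s / h) • F := by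
  have hs0 : s ≠ 0 := hs.1.ne'
  have hh0 : h ≠ 0 := (hs.1.trans hs.2).ne'
  ext x
  rw [mem_smul_set_iff_inv_smul_mem₀ (div_ne_zero hs0 hh0), inv_div]
  constructor
  · rintro ⟨⟨-, hx⟩, rfl⟩
    exact hx
  · intro hx
    have height_eq : ⟪u, x⟫_ℝ = s := by
      have := hF _ hx
      rw [inner_smul_right] at this
      field_simp at this
      exact this
    exact ⟨⟨height_eq ▸ hs, height_eq ▸ hx⟩, height_eq⟩

theorem prism_inter_inner_eq_of_notMem (u : E) (h : ℝ) (F : Set E) {I : Set ℝ} {s : ℝ}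
    (hs : s ∉ I) : prism u h I F ∩ {y | ⟪u, y⟫_ℝ = s} = ∅ := by
  grind [prism]

theorem pyramid_inter_inner_eq_of_notMem (u : E) {h s : ℝ} (F : Set E) (hs : s ∉ Ioo 0 h) :
    pyramid u h F ∩ {y | ⟪u, y⟫_ℝ = s} = ∅ := by
  grind [pyramid]

theorem lintegral_Ioo_ofReal_div_pow {h : ℝ} (hh : 0 < h) (m : ℕ) :
    ∫⁻ s in Ioo 0 h, ENNReal.ofReal ((s / h) ^ m) = ENNReal.ofReal (h / (m + 1)) := by
  rw [restrict_Ioo_eq_restrict_Ioc, ← ofReal_integral_eq_lintegral_ofReal,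
    ← intervalIntegral.integral_of_le hh.le]
  · simp only [div_pow, intervalIntegral.integral_div, integral_pow]
    congr 1
    field_simp
    simp [pow_succ]
  · exact (Continuous.integrableOn_Icc (by fun_prop)).mono_set Ioc_subset_Icc_self
  · filter_upwards [ae_restrict_mem measurableSet_Ioc] with s hs
    have := hs.1
    positivity

variable [MeasurableSpace E] [BorelSpace E]

theorem measurableSet_prism (u : E) (h : ℝ) {I : Set ℝ} (hI : MeasurableSet I) {F : Set E}
    (hF : MeasurableSet F) : MeasurableSet (prism u h I F) :=
  .inter (measurableSet_preimage (by fun_prop) hI)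
    (measurableSet_preimage (Continuous.measurable (by fun_prop)) hF)

theorem measurableSet_pyramid (u : E) (h : ℝ) {F : Set E} (hF : MeasurableSet F) :
    MeasurableSet (pyramid u h F) :=
  .inter (measurableSet_preimage (by fun_prop) measurableSet_Ioo)
    (measurableSet_preimage (by fun_prop) hF)

variable [FiniteDimensional ℝ E]

theorem volume_eq_lintegral_inter_inner_eq {u : E} (hu : ‖u‖ = 1) {t : Set E}
    (ht : MeasurableSet t) :
    volume t = ∫⁻ s : ℝ, μHE[finrank ℝ E - 1] (t ∩ {y | ⟪u, y⟫_ℝ = s}) := by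
  have slice_eq (s : ℝ) :
      (AffineSubspace.mk' (s • u +ᵥ (0 : E)) (ℝ ∙ u)ᗮ : Set E) = {y | ⟪u, y⟫_ℝ = s} := by
    ext y
    simp [Submodule.mem_orthogonal_singleton_iff_inner_right, inner_sub_right, inner_smul_right,
      hu, sub_eq_zero]
  have hu0 : u ≠ 0 := norm_ne_zero_iff.1 (by simp [hu])
  rw [← InnerProductSpace.euclideanHausdorffMeasure_eq_volume,
    EuclideanGeometry.euclideanHausdorffMeasure_eq_lintegral 0 hu0 ht, ← ofReal_norm, hu,
    ENNReal.ofReal_one, one_mul]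
  simp only [slice_eq]

theorem volume_prism {u : E} (hu : ‖u‖ = 1) {h : ℝ} {I : Set ℝ} (hI : MeasurableSet I)
    {F : Set E} (hFm : MeasurableSet F) (hF : ∀ y ∈ F, ⟪u, y⟫_ℝ = h) :
    volume (prism u h I F) = volume I * μHE[finrank ℝ E - 1] F := by
  have slice_eq (s : ℝ) : μHE[finrank ℝ E - 1] (prism u h I F ∩ {y | ⟪u, y⟫_ℝ = s}) =
      I.indicator (fun _ ↦ μHE[finrank ℝ E - 1] F) s := by
    by_cases hs : s ∈ I
    · rw [prism_inter_inner_eq hu hF hs, measure_preimage_add_right, indicator_of_mem hs]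
    · rw [prism_inter_inner_eq_of_notMem u h F hs, measure_empty, indicator_of_notMem hs]
  rw [volume_eq_lintegral_inter_inner_eq hu (measurableSet_prism u h hI hFm)]
  simp only [slice_eq]
  rw [lintegral_indicator_const hI, mul_comm]

theorem finrank_mul_volume_pyramid {u : E} (hu : ‖u‖ = 1) {h : ℝ} (hh : 0 < h) {F : Set E}
    (hFm : MeasurableSet F) (hF : ∀ y ∈ F, ⟪u, y⟫_ℝ = h) :
    finrank ℝ E * volume (pyramid u h F) = ENNReal.ofReal h * μHE[finrank ℝ E - 1] F := by
  have slice_eq (s : ℝ) : μHE[finrank ℝ E - 1] (pyramid u h F ∩ {y | ⟪u, y⟫_ℝ = s}) =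
      (Ioo 0 h).indicator (fun s ↦ ENNReal.ofReal ((s / h) ^ (finrank ℝ E - 1))) s *
        μHE[finrank ℝ E - 1] F := by
    by_cases hs : s ∈ Ioo 0 h
    · have hsh : 0 < s / h := div_pos hs.1 hh
      rw [pyramid_inter_inner_eq hF hs, Measure.euclideanHausdorffMeasure_smul₀ _ hsh.ne',
        indicator_of_mem hs, ENNReal.smul_def, smul_eq_mul, ENNReal.coe_pow,
        ENNReal.ofReal_pow hsh.le, ← enorm_eq_nnnorm, Real.enorm_of_nonneg hsh.le]
    · rw [pyramid_inter_inner_eq_of_notMem u F hs, measure_empty, indicator_of_notMem hs, zero_mul]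
  have : Nontrivial E := nontrivial_of_ne u 0 (norm_ne_zero_iff.1 (by simp [hu]))
  have finrank_eq : ((finrank ℝ E - 1 : ℕ) : ℝ) + 1 = finrank ℝ E := by
    rw [Nat.cast_pred finrank_pos, sub_add_cancel]
  rw [volume_eq_lintegral_inter_inner_eq hu (measurableSet_pyramid u h hFm)]
  simp only [slice_eq]
  rw [lintegral_mul_const _ (.indicator (by fun_prop) measurableSet_Ioo),
    lintegral_indicator measurableSet_Ioo, lintegral_Ioo_ofReal_div_pow hh, finrank_eq, ← mul_assoc,
    ← ENNReal.ofReal_natCast, ← ENNReal.ofReal_mul (Nat.cast_nonneg _),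
    mul_div_cancel₀ _ (Nat.cast_ne_zero.2 finrank_pos.ne')]

end Slicing

section SurfaceArea

theorem subset_of_isPreconnected_of_disjoint_frontier {X : Type*} [TopologicalSpace X]
    {s U : Set X} (hs : IsPreconnected s) (hd : Disjoint s (frontier U))
    (hne : (s ∩ U).Nonempty) : s ⊆ U := by
  have cover : s ⊆ interior U ∪ (closure U)ᶜ := fun x hx ↦
    or_iff_not_imp_left.2 fun hxi hxc ↦ disjoint_left.1 hd hx ⟨hxc, hxi⟩
  obtain ⟨x, hxs, hxU⟩ := hne
  have hxi : x ∈ interior U := (cover hxs).resolve_right (not_not.2 (subset_closure hxU))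
  exact (hs.subset_left_of_subset_union isOpen_interior isClosed_closure.isOpen_compl
    (disjoint_compl_right_iff_subset.2 interior_subset_closure) cover ⟨x, hxs, hxi⟩).trans
    interior_subset

theorem exists_add_smul_mem_frontier_s5 {V : Type*} [NormedAddCommGroup V] [NormedSpace ℝ V]
    {Q : Set V} (hQ : Bornology.IsBounded Q) {y v : V} (hy : y ∈ Q) (hv : v ≠ 0) :
    ∃ s : ℝ, 0 ≤ s ∧ y + s • v ∈ frontier Q := by
  by_contra! hray
  have ray_subset : (fun s : ℝ ↦ y + s • v) '' Ici 0 ⊆ Q :=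
    subset_of_isPreconnected_of_disjoint_frontier (isPreconnected_Ici.image _ (by fun_prop))
      (disjoint_left.2 (forall_mem_image.2 hray)) ⟨y, ⟨0, by simp⟩, hy⟩
  have norm_tendsto : Tendsto (fun s : ℝ ↦ ‖s • v‖) atTop atTop := by
    simpa only [norm_smul] using
      tendsto_norm_atTop_atTop.atTop_mul_const (norm_pos_iff.2 hv)
  obtain ⟨C, hC⟩ := hQ.exists_norm_le
  obtain ⟨s, hs, hs0⟩ :=
    ((norm_tendsto.eventually_gt_atTop (C + ‖y‖)).and (eventually_ge_atTop 0)).exists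
  have hle := hC _ (ray_subset ⟨s, hs0, rfl⟩)
  have := norm_sub_le (y + s • v) y
  rw [add_sub_cancel_left] at this
  linarith

theorem hausdorffMeasure_le_image_of_dist_le {X Y : Type*} [MetricSpace X] [MetricSpace Y]
    [MeasurableSpace X] [BorelSpace X] [MeasurableSpace Y] [BorelSpace Y] {d : ℝ} (hd : 0 ≤ d)
    {s : Set X} {g : X → Y} (hg : ∀ x ∈ s, ∀ y ∈ s, dist x y ≤ dist (g x) (g y)) :
    μH[d] s ≤ μH[d] (g '' s) := by
  have anti : AntilipschitzWith 1 (s.domRestrict g) :=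
    AntilipschitzWith.of_le_mul_dist fun x y ↦ by
      simpa [Subtype.dist_eq] using hg x x.2 y y.2
  have restrict_le := anti.le_hausdorffMeasure_image hd univ
  have restrict_eq := isometry_subtype_coe.hausdorffMeasure_image (s := (univ : Set s)) (.inl hd)
  rw [image_univ, Subtype.range_coe] at restrict_eq
  rwa [← restrict_eq, image_univ, range_domRestrict, ENNReal.coe_one, ENNReal.one_rpow,
    one_mul] at restrict_le

variable {E : Type*} [NormedAddCommGroup E] [InnerProductSpace ℝ E]

theorem dist_le_dist_of_inner_sub_nonpos {y y' z z' : E} (h : ⟪z - y, y' - y⟫_ℝ ≤ 0)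
    (h' : ⟪z' - y', y - y'⟫_ℝ ≤ 0) : dist y y' ≤ dist z z' := by
  have sq_le : ‖y - y'‖ * ‖y - y'‖ ≤ ‖z - z'‖ * ‖y - y'‖ :=
    calc ‖y - y'‖ * ‖y - y'‖ = ⟪y - y', y - y'⟫_ℝ := (real_inner_self_eq_norm_mul_norm _).symm
      _ ≤ ⟪y - y', y - y'⟫_ℝ - ⟪z - y, y' - y⟫_ℝ - ⟪z' - y', y - y'⟫_ℝ := by linarith
      _ = ⟪z - z', y - y'⟫_ℝ := by simp only [inner_sub_left, inner_sub_right]; ring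
      _ ≤ ‖z - z'‖ * ‖y - y'‖ := real_inner_le_norm _ _
  rw [dist_eq_norm, dist_eq_norm]
  rcases (norm_nonneg (y - y')).eq_or_lt with h0 | hpos
  · exact h0 ▸ norm_nonneg _
  · exact le_of_mul_le_mul_right sq_le hpos

theorem exists_supporting_normal [CompleteSpace E] {Ω : Set E} (hΩ : Convex ℝ Ω)
    (hΩne : (interior Ω).Nonempty) {y : E} (hy : y ∈ frontier Ω) :
    ∃ v : E, v ≠ 0 ∧ ∀ w ∈ closure Ω, ⟪v, w - y⟫_ℝ ≤ 0 := by
  obtain ⟨f, hf0, hf⟩ := geometric_hahn_banach_of_nonempty_interior_point hΩ hy.2 hΩne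
  refine ⟨(InnerProductSpace.toDual ℝ E).symm f, by simpa using hf0, ?_⟩
  refine closure_minimal (t := {w | ⟪_, w - y⟫_ℝ ≤ 0}) (fun w hw ↦ ?_)
    (isClosed_le (by fun_prop) continuous_const)
  simpa using hf w hw

-- Pushing each frontier point of `Ω` outwards along a supporting normal until it meets the frontier
-- of `Q` does not decrease distances.
theorem hausdorffMeasure_frontier_le [CompleteSpace E] [MeasurableSpace E] [BorelSpace E]
    {Ω Q : Set E} (hΩ : Convex ℝ Ω) (hΩne : (interior Ω).Nonempty) (hΩQ : closure Ω ⊆ Q)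
    (hQ : Bornology.IsBounded Q) {d : ℝ} (hd : 0 ≤ d) :
    μH[d] (frontier Ω) ≤ μH[d] (frontier Q) := by
  have exists_outer (y) (hy : y ∈ frontier Ω) :
      ∃ z ∈ frontier Q, ∀ w ∈ closure Ω, ⟪z - y, w - y⟫_ℝ ≤ 0 := by
    obtain ⟨v, hv, hvΩ⟩ := exists_supporting_normal hΩ hΩne hy
    obtain ⟨s, hs, hsQ⟩ := exists_add_smul_mem_frontier_s5 hQ (hΩQ hy.1) hv
    refine ⟨_, hsQ, fun w hw ↦ ?_⟩
    rw [add_sub_cancel_left, real_inner_smul_left]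
    exact mul_nonpos_of_nonneg_of_nonpos hs (hvΩ w hw)
  choose! g hgQ hg using exists_outer
  calc μH[d] (frontier Ω) ≤ μH[d] (g '' frontier Ω) :=
        hausdorffMeasure_le_image_of_dist_le hd fun y hy y' hy' ↦
          dist_le_dist_of_inner_sub_nonpos (hg y hy y' hy'.1) (hg y' hy' y hy.1)
    _ ≤ μH[d] (frontier Q) := measure_mono (image_subset_iff.2 hgQ)

variable [MeasurableSpace E] [BorelSpace E]

/-- The surface area of a subset of a Euclidean space: the Hausdorff measure of codimension one of
its frontier, in the normalisation for which a unit cube of a hyperplane has measure `1`. -/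
noncomputable def surfaceArea (s : Set E) : ℝ≥0∞ :=
  μHE[finrank ℝ E - 1] (frontier s)

theorem exists_surfaceArea_eq_mul_hausdorffMeasure (E : Type*) [NormedAddCommGroup E]
    [InnerProductSpace ℝ E] [FiniteDimensional ℝ E] [Nontrivial E] [MeasurableSpace E]
    [BorelSpace E] :
    ∃ c : ℝ≥0, c ≠ 0 ∧
      ∀ s : Set E, surfaceArea s = c * μH[(finrank ℝ E : ℝ) - 1] (frontier s) :=
  ⟨_, Measure.addHaarScalarFactor_volume_hausdorffMeasure_ne_zero (finrank ℝ E - 1), fun s ↦ by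
    rw [surfaceArea, Measure.euclideanHausdorffMeasure_def,
      ← Nat.cast_pred finrank_pos]
    rfl⟩

theorem surfaceArea_le_surfaceArea [CompleteSpace E] {Ω Q : Set E} (hΩ : Convex ℝ Ω)
    (hΩne : (interior Ω).Nonempty) (hΩQ : closure Ω ⊆ Q) (hQ : Bornology.IsBounded Q) :
    surfaceArea Ω ≤ surfaceArea Q := by
  simp only [surfaceArea, Measure.euclideanHausdorffMeasure_def, Measure.smul_apply]
  gcongr ?_ • ?_
  exact hausdorffMeasure_frontier_le hΩ hΩne hΩQ hQ (Nat.cast_nonneg _)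

end SurfaceArea

section Polyhedra

variable {E : Type*} [NormedAddCommGroup E] [InnerProductSpace ℝ E]

/-- The open polyhedron cut out by the half-spaces `⟪p.1, x⟫ < p.2`, for `p` in a finite set `H` of
pairs (outer normal, offset). -/
def openPolyhedron (H : Finset (E × ℝ)) : Set E :=
  {x | ∀ p ∈ H, ⟪p.1, x⟫_ℝ < p.2}

/-- The closed polyhedron cut out by the half-spaces `⟪p.1, x⟫ ≤ p.2`, for `p ∈ H`. It may be larger
than the closure of `openPolyhedron H`, for instance when the latter is empty. -/
def closedPolyhedron (H : Finset (E × ℝ)) : Set E :=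
  {x | ∀ p ∈ H, ⟪p.1, x⟫_ℝ ≤ p.2}

/-- The relative interior of the facet of `openPolyhedron H` on the hyperplane `p`: the points for
which `p` is the only active constraint. -/
def openFacet (H : Finset (E × ℝ)) (p : E × ℝ) : Set E :=
  {y | ⟪p.1, y⟫_ℝ = p.2 ∧ ∀ q ∈ H, q ≠ p → ⟪q.1, y⟫_ℝ < q.2}

/-- The face of `closedPolyhedron H` on the hyperplane `p`. -/
def closedFacet (H : Finset (E × ℝ)) (p : E × ℝ) : Set E :=
  {y | ⟪p.1, y⟫_ℝ = p.2} ∩ closedPolyhedron H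

variable {H : Finset (E × ℝ)} {p q : E × ℝ}

theorem isOpen_openPolyhedron : IsOpen (openPolyhedron H) := by
  simp only [openPolyhedron, ofPred_forall]
  exact isOpen_biInter_finset fun p _ ↦ isOpen_lt (by fun_prop) continuous_const

theorem isClosed_closedPolyhedron : IsClosed (closedPolyhedron H) := by
  simp only [closedPolyhedron, ofPred_forall]
  exact isClosed_biInter fun p _ ↦ isClosed_le (by fun_prop) continuous_const

theorem convex_openPolyhedron : Convex ℝ (openPolyhedron H) := by
  simp only [openPolyhedron, ofPred_forall]
  exact convex_iInter₂ fun p _ ↦ convex_halfSpace_lt (innerₗ E p.1).isLinear p.2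

theorem convex_closedPolyhedron : Convex ℝ (closedPolyhedron H) := by
  simp only [closedPolyhedron, ofPred_forall]
  exact convex_iInter₂ fun p _ ↦ convex_halfSpace_le (innerₗ E p.1).isLinear p.2

theorem closure_openPolyhedron_subset : closure (openPolyhedron H) ⊆ closedPolyhedron H :=
  closure_minimal (fun _ hx p hp ↦ (hx p hp).le) isClosed_closedPolyhedron

theorem frontier_openPolyhedron_subset :
    frontier (openPolyhedron H) ⊆ ⋃ p ∈ H, closedFacet H p := by
  intro y hy
  rw [isOpen_openPolyhedron.frontier_eq] at hy
  have hyH := closure_openPolyhedron_subset hy.1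
  obtain ⟨p, hp, hle⟩ : ∃ p ∈ H, p.2 ≤ ⟪p.1, y⟫_ℝ := by simpa [openPolyhedron] using hy.2
  exact mem_biUnion hp ⟨(hyH p hp).antisymm hle, hyH⟩

theorem openFacet_subset_frontier (hp : p ∈ H) (hp0 : p.1 ≠ 0) :
    openFacet H p ⊆ frontier (openPolyhedron H) := by
  rintro y ⟨hpy, hqy⟩
  rw [isOpen_openPolyhedron.frontier_eq]
  refine ⟨?_, fun hy ↦ (hy p hp).ne hpy⟩
  have inward_tendsto : Tendsto (fun t : ℝ ↦ y - t • p.1) (𝓝[>] 0) (𝓝 y) := by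
    have : Continuous fun t : ℝ ↦ y - t • p.1 := by fun_prop
    simpa using (this.tendsto 0).mono_left nhdsWithin_le_nhds
  refine mem_closure_of_tendsto inward_tendsto ((Finset.eventually_all H).2 fun q hq ↦ ?_)
  rcases eq_or_ne q p with rfl | hqp
  · filter_upwards [self_mem_nhdsWithin] with t ht
    rw [inner_sub_right, inner_smul_right, hpy]
    exact sub_lt_self _ (mul_pos ht (real_inner_self_pos.2 hp0))
  · exact (tendsto_const_nhds.inner inward_tendsto).eventually_lt_const (hqy q hq hqp)

theorem pairwiseDisjoint_openFacet : (H : Set (E × ℝ)).PairwiseDisjoint (openFacet H) :=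
  fun _ _ q hq hpq ↦ disjoint_left.2 fun _ hyp hyq ↦ (hyp.2 q hq hpq.symm).ne hyq.1

theorem measurableSet_openFacet [MeasurableSpace E] [BorelSpace E] :
    MeasurableSet (openFacet H p) := by
  simp only [openFacet, ofPred_and, ofPred_forall]
  exact (isClosed_eq (by fun_prop) continuous_const).measurableSet.inter <|
    .biInter H.countable_toSet fun q _ ↦ .iInter fun _ ↦
      (isOpen_lt (by fun_prop) continuous_const).measurableSet

theorem measurableSet_closedFacet [MeasurableSpace E] [BorelSpace E] :
    MeasurableSet (closedFacet H p) :=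
  ((isClosed_eq (by fun_prop) continuous_const).inter isClosed_closedPolyhedron).measurableSet

end Polyhedra

section PolyhedralApproximation

variable {E : Type*} [NormedAddCommGroup E] [InnerProductSpace ℝ E]

theorem exists_unit_separating_normal [CompleteSpace E] {K : Set E} (hK : Convex ℝ K)
    (hKc : IsClosed K) (hKne : K.Nonempty) {y : E} (hy : y ∉ K) :
    ∃ p : E × ℝ, ‖p.1‖ = 1 ∧ (∀ x ∈ K, ⟪p.1, x⟫_ℝ < p.2) ∧ p.2 < ⟪p.1, y⟫_ℝ := by
  obtain ⟨f, c, hfK, hfy⟩ := geometric_hahn_banach_closed_point hK hKc hy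
  obtain ⟨v, rfl⟩ := (InnerProductSpace.toDual ℝ E).surjective f
  simp only [InnerProductSpace.toDual_apply_apply] at hfK hfy
  have hv : v ≠ 0 := by
    rintro rfl
    obtain ⟨x, hx⟩ := hKne
    have := (hfK x hx).trans hfy
    simp at this
  have hv' : 0 < ‖v‖⁻¹ := inv_pos.2 (norm_pos_iff.2 hv)
  refine ⟨(‖v‖⁻¹ • v, ‖v‖⁻¹ * c), norm_smul_inv_norm hv, fun x hx ↦ ?_, ?_⟩ <;>
    rw [real_inner_smul_left]
  · exact mul_lt_mul_of_pos_left (hfK x hx) hv'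
  · exact mul_lt_mul_of_pos_left hfy hv'

theorem exists_polyhedron_between [FiniteDimensional ℝ E] {K U : Set E} (hK : Convex ℝ K)
    (hKc : IsClosed K) (hKne : K.Nonempty) (hU : IsOpen U) (hUb : Bornology.IsBounded U)
    (hKU : K ⊆ U) :
    ∃ H : Finset (E × ℝ), (∀ p ∈ H, ‖p.1‖ = 1) ∧ K ⊆ openPolyhedron H ∧
      closedPolyhedron H ⊆ U := by
  classical
  have hfrontier (y) (hy : y ∈ frontier U) : y ∉ K := fun hyK ↦
    hU.inter_frontier_eq.le ⟨hKU hyK, hy⟩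
  choose! p hp_norm hpK hpy using fun y hy ↦
    exists_unit_separating_normal hK hKc hKne (hfrontier y hy)
  have frontier_compact : IsCompact (frontier U) :=
    isCompact_of_isClosed_isBounded isClosed_frontier (hUb.closure.subset frontier_subset_closure)
  obtain ⟨t, ht, frontier_cover⟩ := frontier_compact.elim_nhds_subcover
    (fun y ↦ {x | (p y).2 < ⟪(p y).1, x⟫_ℝ})
    (fun y hy ↦ (isOpen_lt continuous_const (by fun_prop)).mem_nhds (hpy y hy))
  have hKP : K ⊆ openPolyhedron (t.image p) := fun x hx ↦
    Finset.forall_mem_image.2 fun y hy ↦ hpK y (ht y hy) x hx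
  refine ⟨t.image p, Finset.forall_mem_image.2 fun y hy ↦ hp_norm y (ht y hy), hKP, ?_⟩
  refine subset_of_isPreconnected_of_disjoint_frontier convex_closedPolyhedron.isPreconnected
    (disjoint_left.2 fun x hx hxU ↦ ?_) ?_
  · obtain ⟨y, hy, hxy⟩ := mem_iUnion₂.1 (frontier_cover hxU)
    exact hxy.not_ge (hx _ (Finset.mem_image_of_mem p hy))
  · exact hKne.mono (subset_inter
      (hKP.trans (subset_closure.trans closure_openPolyhedron_subset)) hKU)

theorem closure_convexHull_subset_of_isOpen {V : Type*} [NormedAddCommGroup V] [NormedSpace ℝ V]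
    {K U : Set V} (hK : IsCompact K) (hU : IsOpen U) (hUc : Convex ℝ U) (hKU : K ⊆ U) :
    closure (convexHull ℝ K) ⊆ U := by
  obtain ⟨δ, hδ, hthick⟩ := hK.exists_thickening_subset_open hU hKU
  have thickening_convexHull :
      thickening δ (convexHull ℝ K) = convexHull ℝ (thickening δ K) := by
    rw [← add_ball_zero, ← add_ball_zero, convexHull_add, (convex_ball (0 : V) δ).convexHull_eq]
  exact (closure_subset_thickening hδ _).trans
    (thickening_convexHull ▸ convexHull_min hthick hUc)

end PolyhedralApproximation

section Inradius

/-- The inradius of a set: the supremum of the radii of the balls it contains, measured as distances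
to the complement. It is `⊤` for the whole space. -/
noncomputable def einradius {X : Type*} [PseudoEMetricSpace X] (s : Set X) : ℝ≥0∞ :=
  ⨆ x, infEDist x sᶜ

theorem einradius_mono {X : Type*} [PseudoEMetricSpace X] {s t : Set X} (hst : s ⊆ t) :
    einradius s ≤ einradius t :=
  iSup_mono fun _ ↦ infEDist_anti (compl_subset_compl.2 hst)

variable {E : Type*} [NormedAddCommGroup E] [InnerProductSpace ℝ E] {H : Finset (E × ℝ)}

theorem ofReal_le_infEDist_compl_openPolyhedron (hH : ∀ p ∈ H, ‖p.1‖ = 1) {x : E} {δ : ℝ}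
    (hδ : ∀ p ∈ H, δ ≤ p.2 - ⟪p.1, x⟫_ℝ) :
    ENNReal.ofReal δ ≤ infEDist x (openPolyhedron H)ᶜ := by
  refine le_infEDist.2 fun y hy ↦ ?_
  obtain ⟨p, hp, hpy⟩ : ∃ p ∈ H, p.2 ≤ ⟪p.1, y⟫_ℝ := by simpa [openPolyhedron] using hy
  rw [edist_dist]
  refine ENNReal.ofReal_le_ofReal ?_
  calc δ ≤ p.2 - ⟪p.1, x⟫_ℝ := hδ p hp
    _ ≤ ⟪p.1, y - x⟫_ℝ := by rw [inner_sub_right]; gcongr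
    _ ≤ ‖p.1‖ * ‖y - x‖ := real_inner_le_norm _ _
    _ = dist x y := by rw [hH p hp, one_mul, dist_comm, dist_eq_norm]

theorem infEDist_zero_compl_openPolyhedron_le (hH : ∀ p ∈ H, ‖p.1‖ = 1)
    (h0 : (0 : E) ∈ openPolyhedron H) {p : E × ℝ} (hp : p ∈ H) :
    infEDist 0 (openPolyhedron H)ᶜ ≤ ENNReal.ofReal p.2 := by
  have hp2 : 0 < p.2 := by simpa using h0 p hp
  have foot_notMem : p.2 • p.1 ∉ openPolyhedron H := fun hmem ↦ by
    simpa [inner_smul_right, hH p hp] using hmem p hp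
  calc infEDist 0 (openPolyhedron H)ᶜ ≤ edist 0 (p.2 • p.1) := infEDist_le_edist_of_mem foot_notMem
    _ = ENNReal.ofReal p.2 := by
      rw [edist_dist, dist_zero_left, norm_smul, hH p hp, mul_one, Real.norm_of_nonneg hp2.le]

end Inradius

section Polytope

variable {E : Type*} [NormedAddCommGroup E] [InnerProductSpace ℝ E] {H : Finset (E × ℝ)}

theorem add_smul_mem_openFacet_of_forall_le (hH : ∀ p ∈ H, ‖p.1‖ = 1) {x : E}
    (hx : x ∈ openPolyhedron H) {p : E × ℝ} (hp : p ∈ H)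
    (hmin : ∀ q ∈ H, p.2 - ⟪p.1, x⟫_ℝ ≤ q.2 - ⟪q.1, x⟫_ℝ) :
    x + (p.2 - ⟪p.1, x⟫_ℝ) • p.1 ∈ openFacet H p := by
  have hgap : 0 < p.2 - ⟪p.1, x⟫_ℝ := sub_pos.2 (hx p hp)
  refine ⟨by simp [inner_add_right, inner_smul_right, hH p hp], fun q hq hqp ↦ ?_⟩
  rw [inner_add_right, inner_smul_right]
  have hq_min := hmin q hq
  by_cases hnormal : q.1 = p.1
  · have hoffset : q.2 ≠ p.2 := fun h ↦ hqp (Prod.ext hnormal h)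
    rw [hnormal] at hq_min ⊢
    have : p.2 < q.2 := lt_of_le_of_ne (by linarith) hoffset.symm
    rw [real_inner_self_eq_norm_sq, hH p hp]
    linarith
  · have := (inner_lt_one_iff_real_of_norm_eq_one (hH q hq) (hH p hp)).2 hnormal
    nlinarith

theorem openPolyhedron_subset_biUnion_prism (hne : H.Nonempty) (hH : ∀ p ∈ H, ‖p.1‖ = 1) :
    openPolyhedron H ⊆ ⋃ p ∈ H, prism p.1 p.2
      {s | s ≤ p.2 ∧ ENNReal.ofReal (p.2 - s) ≤ einradius (openPolyhedron H)}
      (openFacet H p) := by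
  intro x hx
  obtain ⟨p, hp, hmin⟩ := H.exists_min_image (fun p ↦ p.2 - ⟪p.1, x⟫_ℝ) hne
  have gap_le : ENNReal.ofReal (p.2 - ⟪p.1, x⟫_ℝ) ≤ einradius (openPolyhedron H) :=
    (ofReal_le_infEDist_compl_openPolyhedron hH hmin).trans (le_iSup (infEDist · _) x)
  exact mem_biUnion hp
    ⟨⟨(hx p hp).le, gap_le⟩, add_smul_mem_openFacet_of_forall_le hH hx hp hmin⟩

theorem volume_setOf_ofReal_sub_le (h : ℝ) (R : ℝ≥0∞) :
    volume {s : ℝ | s ≤ h ∧ ENNReal.ofReal (h - s) ≤ R} ≤ R := by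
  rcases eq_or_ne R ⊤ with rfl | hR
  · exact le_top
  calc volume {s : ℝ | s ≤ h ∧ ENNReal.ofReal (h - s) ≤ R} ≤ volume (Icc (h - R.toReal) h) :=
        measure_mono fun s hs ↦ ⟨sub_le_comm.1 ((ENNReal.ofReal_le_iff_le_toReal hR).1 hs.2), hs.1⟩
    _ = R := by rw [Real.volume_Icc, sub_sub_cancel, ENNReal.ofReal_toReal hR]

theorem pyramid_closedFacet_subset (h0 : (0 : E) ∈ openPolyhedron H) {p : E × ℝ} :
    pyramid p.1 p.2 (closedFacet H p) ⊆ openPolyhedron H := by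
  rintro x ⟨⟨hpos, hlt⟩, -, hx⟩ q hq
  have hq2 : 0 < q.2 := by simpa using h0 q hq
  have hc : 1 < p.2 / ⟪p.1, x⟫_ℝ := (one_lt_div hpos).2 hlt
  have := hx q hq
  rw [inner_smul_right] at this
  by_contra! hcon
  nlinarith

variable [MeasurableSpace E] [BorelSpace E] [FiniteDimensional ℝ E]

theorem aedisjoint_pyramid_closedFacet (hH : ∀ p ∈ H, ‖p.1‖ = 1)
    (h0 : (0 : E) ∈ openPolyhedron H) {p q : E × ℝ} (hp : p ∈ H) (hq : q ∈ H) (hpq : p ≠ q) :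
    AEDisjoint volume (pyramid p.1 p.2 (closedFacet H p)) (pyramid q.1 q.2 (closedFacet H q)) := by
  have hp2 : 0 < p.2 := by simpa using h0 p hp
  have hq2 : 0 < q.2 := by simpa using h0 q hq
  let w := p.2 • q.1 - q.2 • p.1
  have hw : w ≠ 0 := fun hw ↦ by
    have hsmul : p.2 • q.1 = q.2 • p.1 := sub_eq_zero.1 hw
    have hoffset : p.2 = q.2 := by
      simpa [norm_smul, hH p hp, hH q hq, abs_of_pos hp2, abs_of_pos hq2] using
        congrArg norm hsmul
    rw [hoffset] at hsmul
    exact hpq (Prod.ext (smul_right_injective E hq2.ne' hsmul).symm hoffset)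
  -- A point of both pyramids has the same radial projection to both bases.
  have inter_subset : pyramid p.1 p.2 (closedFacet H p) ∩ pyramid q.1 q.2 (closedFacet H q) ⊆
      ((ℝ ∙ w)ᗮ : Submodule ℝ E) := by
    rintro x ⟨⟨⟨hpx, -⟩, -, hxp⟩, ⟨hqx, -⟩, -, hxq⟩
    have hle := hxp q hq
    have hge := hxq p hp
    rw [inner_smul_right, div_mul_eq_mul_div, div_le_iff₀ ‹_›] at hle hge
    rw [SetLike.mem_coe, Submodule.mem_orthogonal_singleton_iff_inner_right, inner_sub_left,
      real_inner_smul_left, real_inner_smul_left]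
    linarith
  refine measure_mono_null inter_subset (Measure.addHaar_submodule _ _ fun htop ↦ hw ?_)
  simpa [Submodule.orthogonal_eq_top_iff] using htop

theorem volume_openPolyhedron_le (hne : H.Nonempty) (hH : ∀ p ∈ H, ‖p.1‖ = 1) :
    volume (openPolyhedron H) ≤ einradius (openPolyhedron H) * surfaceArea (openPolyhedron H) := by
  set R := einradius (openPolyhedron H)
  let I (p : E × ℝ) : Set ℝ := {s | s ≤ p.2 ∧ ENNReal.ofReal (p.2 - s) ≤ R}
  have hI (p) : MeasurableSet (I p) :=
    measurableSet_Iic.inter <| measurableSet_le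
      (by fun_prop : Measurable fun s ↦ ENNReal.ofReal (p.2 - s)) measurable_const
  calc volume (openPolyhedron H)
      ≤ ∑ p ∈ H, volume (prism p.1 p.2 (I p) (openFacet H p)) :=
        (measure_mono (openPolyhedron_subset_biUnion_prism hne hH)).trans
          (measure_biUnion_finset_le _ _)
    _ = ∑ p ∈ H, volume (I p) * μHE[finrank ℝ E - 1] (openFacet H p) :=
        Finset.sum_congr rfl fun p hp ↦
          volume_prism (hH p hp) (hI p) measurableSet_openFacet fun _ hy ↦ hy.1
    _ ≤ ∑ p ∈ H, R * μHE[finrank ℝ E - 1] (openFacet H p) := by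
        gcongr with p
        exact volume_setOf_ofReal_sub_le p.2 R
    _ = R * μHE[finrank ℝ E - 1] (⋃ p ∈ H, openFacet H p) := by
        rw [← Finset.mul_sum, measure_biUnion_finset pairwiseDisjoint_openFacet
          fun _ _ ↦ measurableSet_openFacet]
    _ ≤ R * surfaceArea (openPolyhedron H) := by
        unfold surfaceArea
        gcongr
        exact iUnion₂_subset fun p hp ↦
          openFacet_subset_frontier hp (norm_ne_zero_iff.1 (by simp [hH p hp]))

theorem infEDist_mul_surfaceArea_openPolyhedron_le (hH : ∀ p ∈ H, ‖p.1‖ = 1)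
    (h0 : (0 : E) ∈ openPolyhedron H) :
    infEDist 0 (openPolyhedron H)ᶜ * surfaceArea (openPolyhedron H) ≤
      finrank ℝ E * volume (openPolyhedron H) := by
  set r := infEDist 0 (openPolyhedron H)ᶜ
  calc r * surfaceArea (openPolyhedron H)
      ≤ r * ∑ p ∈ H, μHE[finrank ℝ E - 1] (closedFacet H p) := by
        gcongr
        exact (measure_mono frontier_openPolyhedron_subset).trans (measure_biUnion_finset_le _ _)
    _ = ∑ p ∈ H, r * μHE[finrank ℝ E - 1] (closedFacet H p) := Finset.mul_sum ..
    _ ≤ ∑ p ∈ H, ENNReal.ofReal p.2 * μHE[finrank ℝ E - 1] (closedFacet H p) := by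
        gcongr with p hp
        exact infEDist_zero_compl_openPolyhedron_le hH h0 hp
    _ = ∑ p ∈ H, finrank ℝ E * volume (pyramid p.1 p.2 (closedFacet H p)) :=
        Finset.sum_congr rfl fun p hp ↦ (finrank_mul_volume_pyramid (hH p hp)
          (by simpa using h0 p hp) measurableSet_closedFacet fun _ hy ↦ hy.1).symm
    _ = finrank ℝ E * volume (⋃ p ∈ H, pyramid p.1 p.2 (closedFacet H p)) := by
        rw [← Finset.mul_sum, measure_biUnion_finset₀
          (fun p hp q hq ↦ aedisjoint_pyramid_closedFacet hH h0 hp hq) fun p _ ↦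
            (measurableSet_pyramid p.1 p.2 measurableSet_closedFacet).nullMeasurableSet]
    _ ≤ finrank ℝ E * volume (openPolyhedron H) := by
        gcongr
        exact iUnion₂_subset fun _ _ ↦ pyramid_closedFacet_subset h0

end Polytope

section ConvexBodies

variable {E : Type*} [NormedAddCommGroup E] [InnerProductSpace ℝ E] [FiniteDimensional ℝ E]
  [MeasurableSpace E] [BorelSpace E]

theorem infEDist_mul_surfaceArea_le_of_closure_subset {Ω U : Set E} (hΩ : Convex ℝ Ω)
    (h0 : 0 ∈ interior Ω) (hU : IsOpen U) (hUb : Bornology.IsBounded U) (hΩU : closure Ω ⊆ U) :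
    infEDist 0 Ωᶜ * surfaceArea Ω ≤ finrank ℝ E * volume U := by
  obtain ⟨H, hH, hΩH, hHU⟩ := exists_polyhedron_between hΩ.closure isClosed_closure
    ⟨0, interior_subset_closure h0⟩ hU hUb hΩU
  have hPU : openPolyhedron H ⊆ U :=
    (subset_closure.trans closure_openPolyhedron_subset).trans hHU
  calc infEDist 0 Ωᶜ * surfaceArea Ω
      ≤ infEDist 0 (openPolyhedron H)ᶜ * surfaceArea (openPolyhedron H) := by
        gcongr
        · exact subset_closure.trans hΩH
        · exact surfaceArea_le_surfaceArea hΩ ⟨0, h0⟩ hΩH (hUb.subset hPU)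
    _ ≤ finrank ℝ E * volume (openPolyhedron H) :=
        infEDist_mul_surfaceArea_openPolyhedron_le hH (hΩH (interior_subset_closure h0))
    _ ≤ finrank ℝ E * volume U := by gcongr

theorem infEDist_zero_compl_mul_surfaceArea_le {Ω : Set E} (hΩ : Convex ℝ Ω)
    (hΩb : Bornology.IsBounded Ω) :
    infEDist 0 Ωᶜ * surfaceArea Ω ≤ finrank ℝ E * volume Ω := by
  by_cases h0 : 0 ∈ interior Ω
  · have outer_bound (δ : ℝ) (hδ : 0 < δ) :
        infEDist 0 Ωᶜ * surfaceArea Ω ≤ finrank ℝ E * volume (cthickening δ (closure Ω)) :=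
      (infEDist_mul_surfaceArea_le_of_closure_subset hΩ h0 isOpen_thickening
        hΩb.closure.thickening (self_subset_thickening hδ _)).trans
        (by gcongr; exact thickening_subset_cthickening _ _)
    have volume_tendsto :=
      tendsto_measure_cthickening_of_isCompact (μ := volume) hΩb.isCompact_closure
    rw [measure_closure_of_null_frontier (hΩ.addHaar_frontier volume)] at volume_tendsto
    exact ge_of_tendsto ((ENNReal.Tendsto.const_mul volume_tendsto
      (.inr (ENNReal.natCast_ne_top _))).mono_left (nhdsWithin_le_nhds (s := Ioi 0)))
      (eventually_mem_nhdsWithin.mono outer_bound)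
  · have hdist : infEDist 0 Ωᶜ = 0 := by
      rwa [← mem_closure_iff_infEDist_zero, closure_compl]
    simp [hdist]

theorem einradius_mul_surfaceArea_le {Ω : Set E} (hΩ : Convex ℝ Ω)
    (hΩb : Bornology.IsBounded Ω) :
    einradius Ω * surfaceArea Ω ≤ finrank ℝ E * volume Ω := by
  rw [einradius, ENNReal.iSup_mul]
  refine iSup_le fun x ↦ ?_
  let e := IsometryEquiv.addLeft x
  have bounded_preimage : Bornology.IsBounded (e ⁻¹' Ω) :=
    e.isometry.antilipschitz.isBounded_preimage hΩb
  have infEDist_preimage : infEDist 0 (e ⁻¹' Ω)ᶜ = infEDist x Ωᶜ := by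
    rw [← infEDist_image e.isometry, ← preimage_compl, image_preimage_eq _ e.surjective]
    simp [e]
  have surfaceArea_preimage : surfaceArea (e ⁻¹' Ω) = surfaceArea Ω := by
    rw [surfaceArea, ← e.coe_toHomeomorph, ← e.toHomeomorph.preimage_frontier]
    exact measure_preimage_add _ x _
  have volume_preimage : volume (e ⁻¹' Ω) = volume Ω := measure_preimage_add _ x _
  rw [← infEDist_preimage, ← surfaceArea_preimage, ← volume_preimage]
  exact infEDist_zero_compl_mul_surfaceArea_le (hΩ.translate_preimage_right x) bounded_preimage

theorem volume_le_einradius_mul_surfaceArea [Nontrivial E] {Ω : Set E} (hΩ : Convex ℝ Ω)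
    (hΩb : Bornology.IsBounded Ω) :
    volume Ω ≤ einradius Ω * surfaceArea Ω := by
  rw [← measure_interior_of_null_frontier (hΩ.addHaar_frontier volume),
    isOpen_interior.measure_eq_iSup_isCompact]
  refine iSup_le fun K ↦ iSup₂_le fun hKΩ hK ↦ ?_
  rcases K.eq_empty_or_nonempty with rfl | hKne
  · simp
  obtain ⟨H, hH, hKH, hHΩ⟩ := exists_polyhedron_between (convex_convexHull ℝ K).closure
    isClosed_closure hKne.convexHull.closure isOpen_interior (hΩb.subset interior_subset)
    (closure_convexHull_subset_of_isOpen hK isOpen_interior hΩ.interior hKΩ)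
  have hKP : K ⊆ openPolyhedron H := (subset_convexHull ℝ K).trans (subset_closure.trans hKH)
  have hPΩ : closure (openPolyhedron H) ⊆ Ω :=
    closure_openPolyhedron_subset.trans (hHΩ.trans interior_subset)
  have hPne : (interior (openPolyhedron H)).Nonempty :=
    hKne.mono (hKP.trans isOpen_openPolyhedron.interior_eq.ge)
  have hHne : H.Nonempty := by
    rw [Finset.nonempty_iff_ne_empty]
    rintro rfl
    have huniv : (univ : Set E) ⊆ Ω := by simpa [openPolyhedron] using hPΩ
    exact noncompact_univ E (isCompact_of_isClosed_isBounded isClosed_univ (hΩb.subset huniv))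
  calc volume K ≤ volume (openPolyhedron H) := measure_mono hKP
    _ ≤ einradius (openPolyhedron H) * surfaceArea (openPolyhedron H) :=
        volume_openPolyhedron_le hHne hH
    _ ≤ einradius Ω * surfaceArea Ω := by
        gcongr
        · exact einradius_mono (subset_closure.trans hPΩ)
        · exact surfaceArea_le_surfaceArea convex_openPolyhedron hPne hPΩ hΩb

theorem surfaceArea_mul_volume_le [Nontrivial E] {Ω₁ Ω₂ : Set E} (hΩ₁ : Convex ℝ Ω₁)
    (hΩ₁b : Bornology.IsBounded Ω₁) (hΩ₂ : Convex ℝ Ω₂) (hsub : Ω₂ ⊆ Ω₁) :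
    surfaceArea Ω₁ * volume Ω₂ ≤ finrank ℝ E * volume Ω₁ * surfaceArea Ω₂ :=
  calc surfaceArea Ω₁ * volume Ω₂
      ≤ surfaceArea Ω₁ * (einradius Ω₁ * surfaceArea Ω₂) := by
        gcongr
        exact (volume_le_einradius_mul_surfaceArea hΩ₂ (hΩ₁b.subset hsub)).trans
          (by gcongr; exact einradius_mono hsub)
    _ = einradius Ω₁ * surfaceArea Ω₁ * surfaceArea Ω₂ := by ring
    _ ≤ finrank ℝ E * volume Ω₁ * surfaceArea Ω₂ := by
        gcongr ?_ * _
        exact einradius_mul_surfaceArea_le hΩ₁ hΩ₁b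

theorem hausdorffMeasure_frontier_mul_volume_le [Nontrivial E] {Ω₁ Ω₂ : Set E}
    (hΩ₁ : Convex ℝ Ω₁) (hΩ₁b : Bornology.IsBounded Ω₁) (hΩ₂ : Convex ℝ Ω₂) (hsub : Ω₂ ⊆ Ω₁) :
    μH[(finrank ℝ E : ℝ) - 1] (frontier Ω₁) * volume Ω₂ ≤
      finrank ℝ E * volume Ω₁ * μH[(finrank ℝ E : ℝ) - 1] (frontier Ω₂) := by
  obtain ⟨c, hc, surfaceArea_eq⟩ := exists_surfaceArea_eq_mul_hausdorffMeasure E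
  have scaled := surfaceArea_mul_volume_le hΩ₁ hΩ₁b hΩ₂ hsub
  rw [surfaceArea_eq, surfaceArea_eq, mul_assoc, mul_left_comm _ (c : ℝ≥0∞)] at scaled
  exact (ENNReal.mul_le_mul_iff_right (ENNReal.coe_ne_zero.2 hc) ENNReal.coe_ne_top).1 scaled

end ConvexBodies

theorem toReal_div_mul_toReal_div_le {a b v w : ℝ≥0∞} {n : ℕ} (h : a * w ≤ n * v * b) :
    a.toReal / v.toReal * (w.toReal / b.toReal) ≤ n := by
  rcases eq_or_ne v ⊤ with rfl | hv
  · simp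
  rcases eq_or_ne b ⊤ with rfl | hb
  · simp
  have toReal_le : a.toReal * w.toReal ≤ n * (v.toReal * b.toReal) := by
    simpa [mul_assoc] using ENNReal.toReal_mono (by finiteness) h
  rw [div_mul_div_comm]
  exact div_le_of_le_mul₀ (by positivity) (by positivity) toReal_le

theorem nested_convex_perimeter_volume_ratio_le_general {E : Type*} [NormedAddCommGroup E]
    [InnerProductSpace ℝ E] [FiniteDimensional ℝ E] [MeasurableSpace E] [BorelSpace E]
    {Ω₁ Ω₂ : Set E} (hΩ₁b : Bornology.IsBounded Ω₁) (hΩ₁ : Convex ℝ Ω₁) (hΩ₂ : Convex ℝ Ω₂)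
    (hΩ₂ne : (interior Ω₂).Nonempty) (hsub : Ω₂ ⊆ Ω₁) :
    ((μH[(finrank ℝ E : ℝ) - 1] (frontier Ω₁)).toReal / (volume Ω₁).toReal) *
      ((volume Ω₂).toReal / (μH[(finrank ℝ E : ℝ) - 1] (frontier Ω₂)).toReal) ≤
        (finrank ℝ E : ℝ) := by
  rcases subsingleton_or_nontrivial E with _ | _
  · have hΩ₁univ : Ω₁ = univ :=
      Subsingleton.eq_univ_of_nonempty ((hΩ₂ne.mono interior_subset).mono hsub)
    simp [hΩ₁univ]
  · exact toReal_div_mul_toReal_div_le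
      (hausdorffMeasure_frontier_mul_volume_le hΩ₁ hΩ₁b hΩ₂ hsub)

/-- Geometric lemma (upper bound): for nested bounded open convex sets
`Ω₂ ⊆ Ω₁ ⊂ ℝⁿ`, one has `(|∂Ω₁|/|Ω₁|) · (|Ω₂|/|∂Ω₂|) ≤ n`. -/
theorem nested_convex_perimeter_volume_ratio_le
    (n : ℕ)
    (Ω₁ Ω₂ : Set (EuclideanSpace ℝ (Fin n)))
    (hΩ₁o : IsOpen Ω₁) (hΩ₁b : Bornology.IsBounded Ω₁)
    (hΩ₁c : Convex ℝ Ω₁) (hΩ₁ne : (interior Ω₁).Nonempty)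
    (hΩ₂o : IsOpen Ω₂) (hΩ₂b : Bornology.IsBounded Ω₂)
    (hΩ₂c : Convex ℝ Ω₂) (hΩ₂ne : (interior Ω₂).Nonempty)
    (hsub : Ω₂ ⊆ Ω₁) :
    ((μH[(n : ℝ) - 1] (frontier Ω₁)).toReal / (volume Ω₁).toReal) *
      ((volume Ω₂).toReal / (μH[(n : ℝ) - 1] (frontier Ω₂)).toReal) ≤ (n : ℝ) := by
  simpa only [finrank_euclideanSpace_fin] using
    nested_convex_perimeter_volume_ratio_le_general hΩ₁b hΩ₁c hΩ₂c hΩ₂ne hsub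
end
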